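/- arXiv:1702.00972 — 7 statements merged into one kernel-verified Lean document; each statement's English description precedes it below -/
import Mathlib

section
/- Let s₁ < s₀ be real numbers, let θ ∈ (0,1), and let 0 < q < ∞. Then there exists a constant c > 0 such that for every complex sequence (a_j)_{j∈ℕ} with sup_{j∈ℕ} 2^{s₀ j} |a_j| < ∞, one has (∑_{j=0}^∞ 2^{(θ s₀ + (1−θ) s₁) j q} |a_j|^q)^{1/q} ≤ c · (sup_{j∈ℕ} 2^{s₀ j} |a_j|)^θ · (sup_{j∈ℕ} 2^{s₁ j} |a_j|)^{1−θ}. -/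
open scoped ENNReal NNReal

theorem two_add (x y : ℝ) : (2:ℝ≥0∞) ^ (x + y) = 2 ^ x * 2 ^ y :=
  ENNReal.rpow_add x y (by norm_num) (by norm_num)

theorem two_mono {x y : ℝ} (h : x ≤ y) : (2:ℝ≥0∞) ^ x ≤ 2 ^ y :=
  ENNReal.rpow_le_rpow_of_exponent_le (by norm_num) h

theorem geo_term (M : ℝ≥0∞) (α q : ℝ) (hq : 0 < q) (k : ℕ) :
    (M * (2:ℝ≥0∞) ^ (-(α * (k:ℝ)))) ^ q = M ^ q * ((2:ℝ≥0∞) ^ (-(α * q))) ^ k := by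
  rw [ENNReal.mul_rpow_of_nonneg _ _ hq.le, ← ENNReal.rpow_natCast, ← ENNReal.rpow_mul,
    ← ENNReal.rpow_mul]
  congr 2
  ring

theorem geo_fin (α : ℝ) (hα : 0 < α) : (∑' k : ℕ, ((2:ℝ≥0∞) ^ (-α)) ^ k) ≠ ∞ := by
  rw [ENNReal.tsum_geometric]
  apply ENNReal.inv_ne_top.2
  have : (2:ℝ≥0∞) ^ (-α) < 1 := ENNReal.rpow_lt_one_of_one_lt_of_neg (by norm_num) (by linarith)
  exact (tsub_pos_of_lt this).ne'

theorem split_sum (t : ℕ → ℝ≥0∞) (M : ℝ≥0∞) (α β q : ℝ) (hq : 0 < q) (J : ℕ)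
    (h1 : ∀ j k : ℕ, j + k = J → t j ≤ M * (2:ℝ≥0∞) ^ (-(α * (k:ℝ))))
    (h2 : ∀ k : ℕ, t (k + (J + 1)) ≤ M * (2:ℝ≥0∞) ^ (-(β * (k:ℝ)))) :
    ∑' j, t j ^ q ≤ M ^ q * (∑' k : ℕ, ((2:ℝ≥0∞) ^ (-(α * q))) ^ k
      + ∑' k : ℕ, ((2:ℝ≥0∞) ^ (-(β * q))) ^ k) := by
  rw [← (ENNReal.summable (f := fun k => t (k + (J+1)) ^ q)).sum_add_tsum_nat_add' (k := J + 1)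
    (f := fun j => t j ^ q), mul_add]
  gcongr
  · rw [← Finset.sum_range_reflect]
    refine le_trans (Finset.sum_le_sum (g := fun k => M ^ q * ((2:ℝ≥0∞) ^ (-(α * q))) ^ k) ?_) ?_
    · intro k hk
      rw [Finset.mem_range] at hk
      rw [← geo_term M α q hq k]
      exact ENNReal.rpow_le_rpow (h1 _ _ (by omega)) hq.le
    · rw [← Finset.mul_sum]
      gcongr
      exact ENNReal.sum_le_tsum _
  · rw [← ENNReal.tsum_mul_left]
    refine ENNReal.tsum_le_tsum fun k => ?_
    rw [← geo_term M β q hq k]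
    exact ENNReal.rpow_le_rpow (h2 k) hq.le

/-- Interpolation inequality for weighted sequence spaces `ℓ^s_q`:
for `s₁ < s₀`, `θ ∈ (0,1)` and `0 < q < ∞`, the `ℓ^{θs₀+(1-θ)s₁}_q` quasi-norm is bounded by
the product of the `θ`-th power of the `ℓ^{s₀}_∞` norm and the `(1-θ)`-th power
of the `ℓ^{s₁}_∞` norm. -/
theorem stmt0 (s₀ s₁ : ℝ) (hs : s₁ < s₀) (θ : ℝ) (hθ : θ ∈ Set.Ioo (0:ℝ) 1)
    (q : ℝ) (hq : 0 < q) :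
    ∃ c : ℝ≥0∞, 0 < c ∧ c ≠ ∞ ∧ ∀ a : ℕ → ℂ,
      (⨆ j : ℕ, (2:ℝ≥0∞) ^ (s₀ * (j:ℝ)) * ‖a j‖₊) < ∞ →
      (∑' j : ℕ, ((2:ℝ≥0∞) ^ ((θ * s₀ + (1 - θ) * s₁) * (j:ℝ)) * ‖a j‖₊) ^ q) ^ (1/q)
        ≤ c * (⨆ j : ℕ, (2:ℝ≥0∞) ^ (s₀ * (j:ℝ)) * ‖a j‖₊) ^ θ
            * (⨆ j : ℕ, (2:ℝ≥0∞) ^ (s₁ * (j:ℝ)) * ‖a j‖₊) ^ (1 - θ) := by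
  obtain ⟨h0, h1⟩ := hθ
  set d := s₀ - s₁ with hd
  have hdpos : 0 < d := by linarith
  set S := (∑' k : ℕ, ((2:ℝ≥0∞) ^ (-(θ * d * q))) ^ k
      + ∑' k : ℕ, ((2:ℝ≥0∞) ^ (-((1 - θ) * d * q))) ^ k) with hS
  have hStop : S ≠ ∞ := ENNReal.add_ne_top.2
    ⟨geo_fin _ (by positivity), geo_fin _ (mul_pos (mul_pos (by linarith) hdpos) hq)⟩
  have hSpos : 0 < S := by
    refine lt_of_lt_of_le ?_ (le_add_right (ENNReal.le_tsum 0))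
    simp
  refine ⟨S ^ (1/q), ENNReal.rpow_pos hSpos hStop,
    ENNReal.rpow_ne_top_of_nonneg (by positivity) hStop, ?_⟩
  intro a hA
  set A := (⨆ j : ℕ, (2:ℝ≥0∞) ^ (s₀ * (j:ℝ)) * ‖a j‖₊) with hAdef
  set B := (⨆ j : ℕ, (2:ℝ≥0∞) ^ (s₁ * (j:ℝ)) * ‖a j‖₊) with hBdef
  have hAj : ∀ j : ℕ, (2:ℝ≥0∞) ^ (s₀ * (j:ℝ)) * ‖a j‖₊ ≤ A := fun j =>
    le_iSup (fun j : ℕ => (2:ℝ≥0∞) ^ (s₀ * (j:ℝ)) * ‖a j‖₊) j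
  have hBj : ∀ j : ℕ, (2:ℝ≥0∞) ^ (s₁ * (j:ℝ)) * ‖a j‖₊ ≤ B := fun j =>
    le_iSup (fun j : ℕ => (2:ℝ≥0∞) ^ (s₁ * (j:ℝ)) * ‖a j‖₊) j
  have hBA : B ≤ A := by
    refine iSup_mono fun j => ?_
    exact mul_le_mul' (two_mono (by gcongr)) le_rfl
  have hBtop : B ≠ ∞ := (lt_of_le_of_lt hBA hA).ne
  by_cases hB0 : B = 0
  · have ha : ∀ j, (‖a j‖₊ : ℝ≥0∞) = 0 := by
      intro j
      have h := hBj j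
      rw [hB0, nonpos_iff_eq_zero, mul_eq_zero] at h
      rcases h with h | h
      · exact absurd h (ENNReal.rpow_pos (by norm_num) (by norm_num)).ne'
      · exact h
    have : (∑' j : ℕ, ((2:ℝ≥0∞) ^ ((θ * s₀ + (1 - θ) * s₁) * (j:ℝ)) * ‖a j‖₊) ^ q) = 0 := by
      rw [ENNReal.tsum_eq_zero]
      intro j
      rw [ha j, mul_zero, ENNReal.zero_rpow_of_pos hq]
    rw [this, ENNReal.zero_rpow_of_pos (by positivity)]
    exact zero_le
  have hb : 0 < B.toReal := ENNReal.toReal_pos hB0 hBtop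
  have hba : B.toReal ≤ A.toReal := ENNReal.toReal_mono hA.ne hBA
  obtain ⟨r, hr0, hr⟩ : ∃ r : ℝ, 0 ≤ r ∧ A = B * 2 ^ r := by
    refine ⟨Real.logb 2 (A.toReal / B.toReal), ?_, ?_⟩
    · exact Real.logb_nonneg (by norm_num) ((one_le_div hb).2 hba)
    · have e : (2:ℝ≥0∞) = ENNReal.ofReal 2 := by simp
      rw [e, ENNReal.ofReal_rpow_of_pos (by norm_num), Real.rpow_logb (by norm_num) (by norm_num)
        (div_pos (hb.trans_le hba) hb), ENNReal.ofReal_div_of_pos hb, ENNReal.ofReal_toReal hA.ne,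
        ENNReal.ofReal_toReal hBtop, ENNReal.mul_div_cancel hB0 hBtop]
  have hM : A ^ θ * B ^ (1 - θ) = B * 2 ^ (θ * r) := by
    rw [hr, ENNReal.mul_rpow_of_nonneg _ _ h0.le, ← ENNReal.rpow_mul, mul_right_comm,
      ← ENNReal.rpow_add _ _ hB0 hBtop, add_sub_cancel, ENNReal.rpow_one, mul_comm r]
  set J := ⌊r / d⌋₊ with hJ
  have hJ1 : d * J ≤ r := by
    have := Nat.floor_le (div_nonneg hr0 hdpos.le)
    rw [le_div_iff₀ hdpos] at this
    linarith
  have hJ2 : r ≤ d * (J + 1) := by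
    have := (Nat.lt_floor_add_one (r / d)).le
    rw [div_le_iff₀ hdpos] at this
    linarith
  have key := split_sum
    (fun j : ℕ => (2:ℝ≥0∞) ^ ((θ * s₀ + (1 - θ) * s₁) * (j:ℝ)) * ‖a j‖₊)
    (B * 2 ^ (θ * r)) (θ * d) ((1 - θ) * d) q hq J ?_ ?_
  · rw [mul_assoc, hM]
    refine (ENNReal.rpow_le_rpow key (by positivity)).trans ?_
    rw [ENNReal.mul_rpow_of_nonneg _ _ (by positivity), ← ENNReal.rpow_mul,
      mul_one_div_cancel hq.ne', ENNReal.rpow_one, mul_comm]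
  · intro j k hjk
    have hjk' : (j:ℝ) + k = J := by exact_mod_cast hjk
    have e : (θ * s₀ + (1 - θ) * s₁) * (j:ℝ) = θ * d * j + s₁ * j := by rw [hd]; ring
    calc _ = 2 ^ (θ * d * j) * ((2:ℝ≥0∞) ^ (s₁ * (j:ℝ)) * ‖a j‖₊) := by
            simp only [e, two_add, mul_assoc]
      _ ≤ 2 ^ (θ * r + -(θ * d * k)) * B := by
            refine mul_le_mul' (two_mono ?_) (hBj j)
            rw [← hjk'] at hJ1
            nlinarith [mul_le_mul_of_nonneg_left hJ1 h0.le]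
      _ = _ := by rw [two_add]; ring
  · intro k
    have e : (θ * s₀ + (1 - θ) * s₁) * ((k + (J + 1) : ℕ):ℝ)
        = -((1 - θ) * d * ((k + (J + 1) : ℕ):ℝ)) + s₀ * ((k + (J + 1) : ℕ):ℝ) := by rw [hd]; ring
    calc _ = 2 ^ (-((1 - θ) * d * ((k + (J + 1) : ℕ):ℝ))) *
            ((2:ℝ≥0∞) ^ (s₀ * ((k + (J + 1) : ℕ):ℝ)) * ‖a (k + (J + 1))‖₊) := by
            simp only [e, two_add, mul_assoc]
      _ ≤ 2 ^ (-((1 - θ) * d * ((k + (J + 1) : ℕ):ℝ))) * (B * 2 ^ r) := by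
            rw [← hr]
            gcongr
            exact hAj _
      _ = B * 2 ^ (-((1 - θ) * d * ((k + (J + 1) : ℕ):ℝ)) + r) := by rw [two_add]; ring
      _ ≤ B * 2 ^ (θ * r + -((1 - θ) * d * k)) := by
            refine mul_le_mul' le_rfl (two_mono ?_)
            push_cast
            nlinarith [mul_le_mul_of_nonneg_left hJ2 (sub_nonneg.2 h1.le)]
      _ = _ := by rw [two_add, ← mul_assoc]
end

section
/- (Nikol'skij–Plancherel–Polya inequality.) Let n ≥ 1 and let 0 < p ≤ r ≤ ∞. Then there exists a constant c > 0 such that for every R > 0 and every Schwartz function f : ℝⁿ → ℂ whose Fourier transform 𝓕f is supported in the closed ball of radius R centered at the origin, one has ‖f‖_r ≤ c · R^{n/p − n/r} · ‖f‖_p (with the convention n/∞ = 0). -/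
open scoped ENNReal NNReal FourierTransform SchwartzMap
open MeasureTheory

lemma nik_exists_bump (n : ℕ) : ∃ χ : 𝓢(EuclideanSpace ℝ (Fin n), ℂ),
    ∀ x, ‖x‖ ≤ 1 → χ x = 1 := by
  let b : ContDiffBump (0 : EuclideanSpace ℝ (Fin n)) := ⟨1, 2, by norm_num, by norm_num⟩
  have h1 : HasCompactSupport (fun x => ((b x : ℝ) : ℂ)) :=
    b.hasCompactSupport.comp_left (g := fun t : ℝ => (t : ℂ)) (by simp)
  have h2 : ContDiff ℝ (⊤ : ℕ∞) (fun x => ((b x : ℝ) : ℂ)) :=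
    Complex.ofRealCLM.contDiff.comp b.contDiff
  refine ⟨h1.toSchwartzMap h2, fun x hx => ?_⟩
  have : b x = 1 := b.one_of_mem_closedBall (by simpa [b] using hx)
  simp [this]

lemma nik_repr (n : ℕ) (χ : 𝓢(EuclideanSpace ℝ (Fin n), ℂ))
    (hχ : ∀ x, ‖x‖ ≤ 1 → χ x = 1) (R : ℝ) (hR : 0 < R)
    (f : 𝓢(EuclideanSpace ℝ (Fin n), ℂ))
    (hf : Function.support (𝓕 (f : EuclideanSpace ℝ (Fin n) → ℂ)) ⊆ Metric.closedBall 0 R)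
    (x : EuclideanSpace ℝ (Fin n)) :
    f x = ∫ y, ((R : ℂ) ^ n * (𝓕 χ) (R • (y - x))) * f y := by
  set g : EuclideanSpace ℝ (Fin n) → ℂ :=
    fun ξ => (Real.fourierChar (inner ℝ ξ x)) • χ (R⁻¹ • ξ) with hg
  have hχi : Integrable (fun ξ => χ (R⁻¹ • ξ)) := χ.integrable.comp_smul (inv_ne_zero hR.ne')
  have hgi : Integrable g := by
    have := (Real.fourierIntegral_convergent_iff (μ := volume)
      (f := fun ξ => χ (R⁻¹ • ξ)) (-x)).2 hχi
    simpa [hg] using this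
  have h1 : f x = ∫ ξ, g ξ * 𝓕 (f : EuclideanSpace ℝ (Fin n) → ℂ) ξ := by
    have h0 := congrFun (f.continuous.fourierInv_fourier_eq f.integrable (𝓕 f).integrable) x
    rw [← h0, Real.fourierInv_eq]
    congr 1
    ext ξ
    by_cases hξ : 𝓕 (f : EuclideanSpace ℝ (Fin n) → ℂ) ξ = 0
    · simp [hξ]
    · have h2 : ‖ξ‖ ≤ R := by simpa using hf hξ
      have h3 : χ (R⁻¹ • ξ) = 1 := by
        apply hχ
        rw [norm_smul, norm_inv, Real.norm_of_nonneg hR.le, inv_mul_le_iff₀ hR]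
        simpa using h2
      simp [hg, h3, Circle.smul_def]
  have h2 : ∫ y, 𝓕 g y * f y = ∫ ξ, g ξ * 𝓕 (f : EuclideanSpace ℝ (Fin n) → ℂ) ξ := by
    simpa using! (VectorFourier.integral_fourierIntegral_smul_eq_flip
      (L := innerₗ (EuclideanSpace ℝ (Fin n)))
      Real.continuous_fourierChar continuous_inner hgi (f.integrable (μ := volume)))
  rw [h1, ← h2]
  congr 1
  ext y
  congr 1
  rw [SchwartzMap.fourier_coe, Real.fourier_eq, Real.fourier_eq]
  have h3 := Measure.integral_comp_inv_smul (volume : Measure (EuclideanSpace ℝ (Fin n)))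
    (fun v => Real.fourierChar (-inner ℝ v (R • (y - x))) • χ v) R
  rw [finrank_euclideanSpace_fin, abs_of_pos (by positivity)] at h3
  rw [show (R : ℂ) ^ n = ((R ^ n : ℝ) : ℂ) by push_cast; rfl, ← Complex.real_smul, ← h3]
  congr 1
  ext v
  rw [hg]
  simp only [smul_smul, ← AddChar.map_add_eq_mul]
  congr 2
  rw [inner_smul_left, inner_smul_right, inner_sub_right]
  simp
  field_simp
  ring

lemma nik_bound (n : ℕ) (χ : 𝓢(EuclideanSpace ℝ (Fin n), ℂ))
    (hχ : ∀ x, ‖x‖ ≤ 1 → χ x = 1) (R : ℝ) (hR : 0 < R)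
    (f : 𝓢(EuclideanSpace ℝ (Fin n), ℂ))
    (hf : Function.support (𝓕 (f : EuclideanSpace ℝ (Fin n) → ℂ)) ⊆ Metric.closedBall 0 R)
    (x : EuclideanSpace ℝ (Fin n)) :
    ‖f x‖ₑ ≤ ENNReal.ofReal R ^ (n : ℝ) * ∫⁻ y, ‖(𝓕 χ) (R • (y - x))‖ₑ * ‖f y‖ₑ := by
  rw [nik_repr n χ hχ R hR f hf x]
  refine (enorm_integral_le_lintegral_enorm _).trans (le_of_eq ?_)
  rw [← lintegral_const_mul']
  · congr 1
    ext y
    rw [enorm_mul, enorm_mul, mul_assoc]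
    congr 1
    rw [enorm_pow, ENNReal.rpow_natCast]
    congr 1
    rw [← ofReal_norm, Complex.norm_real, Real.norm_of_nonneg hR.le]
  · simp

lemma nik_scale (n : ℕ) (R : ℝ) (hR : 0 < R) (x : EuclideanSpace ℝ (Fin n))
    (F : EuclideanSpace ℝ (Fin n) → ℝ≥0∞) (hF : Measurable F) :
    ∫⁻ y, F (R • (y - x)) = ENNReal.ofReal R ^ (-(n : ℝ)) * ∫⁻ y, F y := by
  rw [lintegral_sub_right_eq_self (fun y => F (R • y)) x]
  rw [← lintegral_map (f := F) (g := fun y => R • y) hF (measurable_const_smul R),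
    Measure.map_addHaar_smul _ hR.ne', lintegral_smul_measure, smul_eq_mul]
  congr 1
  rw [finrank_euclideanSpace_fin, abs_of_pos (by positivity), ENNReal.ofReal_rpow_of_pos hR,
    Real.rpow_neg hR.le, Real.rpow_natCast]

lemma nik_sup (n : ℕ) (p : ℝ) (hp : 0 < p) :
    ∃ c : ℝ≥0∞, c ≠ ∞ ∧ ∀ (R : ℝ), 0 < R →
      ∀ f : 𝓢(EuclideanSpace ℝ (Fin n), ℂ),
        Function.support (𝓕 (f : EuclideanSpace ℝ (Fin n) → ℂ)) ⊆ Metric.closedBall 0 R →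
        ∀ x, ‖f x‖ₑ ≤ c * ENNReal.ofReal R ^ ((n : ℝ) * p⁻¹) * (∫⁻ y, ‖f y‖ₑ ^ p) ^ p⁻¹ := by
  obtain ⟨χ, hχ⟩ := nik_exists_bump n
  rcases le_or_gt p 1 with hp1 | hp1
  · set B : ℝ≥0∞ := ENNReal.ofReal (SchwartzMap.seminorm ℝ 0 0 (𝓕 χ)) with hB
    have hBK : ∀ y, ‖(𝓕 χ) y‖ₑ ≤ B := fun y => by
      rw [hB, ← ofReal_norm]
      exact ENNReal.ofReal_le_ofReal (SchwartzMap.norm_le_seminorm ℝ _ y)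
    refine ⟨B ^ p⁻¹, ENNReal.rpow_ne_top_of_nonneg (by positivity) (by simp [hB]), ?_⟩
    intro R hR f hf
    set M : ℝ≥0∞ := ⨆ x, ‖f x‖ₑ with hM
    have hfM : ∀ x, ‖f x‖ₑ ≤ M := fun x => le_iSup (fun x => ‖f x‖ₑ) x
    have hMt : M ≠ ∞ := by
      refine ne_top_of_le_ne_top (b := ENNReal.ofReal (SchwartzMap.seminorm ℝ 0 0 f)) (by simp) ?_
      refine iSup_le fun x => ?_
      rw [← ofReal_norm]
      exact ENNReal.ofReal_le_ofReal (SchwartzMap.norm_le_seminorm ℝ _ x)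
    set I := ∫⁻ y, ‖f y‖ₑ ^ p with hI
    set ρ := ENNReal.ofReal R with hρ
    have key : M ≤ M ^ (1 - p) * (ρ ^ (n : ℝ) * B * I) := by
      refine iSup_le fun x => ?_
      calc ‖f x‖ₑ ≤ ρ ^ (n : ℝ) * ∫⁻ y, ‖(𝓕 χ) (R • (y - x))‖ₑ * ‖f y‖ₑ :=
            nik_bound n χ hχ R hR f hf x
        _ ≤ ρ ^ (n : ℝ) * ∫⁻ y, (B * M ^ (1 - p)) * ‖f y‖ₑ ^ p := by
            refine mul_le_mul_right (lintegral_mono fun y => ?_) _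
            rw [mul_assoc]
            gcongr
            · exact hBK _
            · calc ‖f y‖ₑ = ‖f y‖ₑ ^ ((1 - p) + p) := by simp
                _ = ‖f y‖ₑ ^ (1 - p) * ‖f y‖ₑ ^ p :=
                    ENNReal.rpow_add_of_nonneg _ _ (by linarith) hp.le
                _ ≤ _ := by
                    gcongr
                    exact hfM y
        _ = _ := by
            rw [lintegral_const_mul']
            · ring
            · exact ENNReal.mul_ne_top (by simp [hB])
                (ENNReal.rpow_ne_top_of_nonneg (by linarith) hMt)
    have key2 : M ^ p ≤ ρ ^ (n : ℝ) * B * I := by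
      rcases eq_or_ne M 0 with h0 | h0
      · simp [h0, hp]
      · have h1 : M ^ (1 - p) * M ^ p = M := by
          rw [← ENNReal.rpow_add _ _ h0 hMt]; simp
        nth_rewrite 1 [← h1] at key
        exact (ENNReal.mul_le_mul_iff_right (by simp [h0, hMt])
          (ENNReal.rpow_ne_top_of_nonneg (by linarith) hMt)).1 key
    intro x
    calc ‖f x‖ₑ ≤ M := hfM x
      _ = (M ^ p) ^ p⁻¹ := by rw [← ENNReal.rpow_mul, mul_inv_cancel₀ hp.ne', ENNReal.rpow_one]
      _ ≤ (ρ ^ (n : ℝ) * B * I) ^ p⁻¹ := by gcongr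
      _ = _ := by
        rw [ENNReal.mul_rpow_of_nonneg _ _ (by positivity),
          ENNReal.mul_rpow_of_nonneg _ _ (by positivity), ← ENNReal.rpow_mul]
        ring
  · obtain ⟨q, hpq⟩ : ∃ q, p.HolderConjugate q := ⟨_, .conjExponent hp1⟩
    have hq : 0 < q := hpq.symm.pos
    set A : ℝ≥0∞ := (∫⁻ y, ‖(𝓕 χ) y‖ₑ ^ q) ^ (1 / q) with hA
    refine ⟨A, ?_, ?_⟩
    · have h := (𝓕 χ).eLpNorm_lt_top (ENNReal.ofReal q) (volume)
      rw [eLpNorm_eq_lintegral_rpow_enorm_toReal (by simpa using hq) (by simp),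
        ENNReal.toReal_ofReal hq.le] at h
      exact h.ne
    · intro R hR f hf x
      set ρ := ENNReal.ofReal R with hρ
      have hρ0 : ρ ≠ 0 := by simpa [hρ] using hR
      have hKm : Measurable fun y => ‖(𝓕 χ) y‖ₑ := (𝓕 χ).continuous.enorm.measurable
      have hs := nik_scale n R hR x (fun y => ‖(𝓕 χ) y‖ₑ ^ q) (hKm.pow_const q)
      have hH := ENNReal.lintegral_mul_le_Lp_mul_Lq volume hpq.symm
        (f := fun y => ‖(𝓕 χ) (R • (y - x))‖ₑ) (g := fun y => ‖f y‖ₑ)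
        (hKm.comp (by fun_prop)).aemeasurable f.continuous.enorm.measurable.aemeasurable
      rw [hs, ENNReal.mul_rpow_of_nonneg _ _ (by positivity), ← hA, ← ENNReal.rpow_mul] at hH
      refine (nik_bound n χ hχ R hR f hf x).trans ?_
      refine (mul_le_mul_right hH _).trans (le_of_eq ?_)
      have he : (n : ℝ) * p⁻¹ = n + -(n : ℝ) * (1 / q) := by
        have := hpq.inv_add_inv_eq_one
        rw [one_div, ← sub_eq_iff_eq_add'.2 this.symm]; ring
      rw [he, ENNReal.rpow_add _ _ hρ0 (by simp [hρ]), one_div p]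
      ring

/-- Nikol'skij–Plancherel–Polya inequality: for `0 < p ≤ r ≤ ∞` there is a constant `c > 0`
such that every Schwartz function whose Fourier transform is supported in the closed ball of
radius `R` satisfies `‖f‖_r ≤ c R^(n/p - n/r) ‖f‖_p` (with the convention `n/∞ = 0`). -/
theorem stmt2 (n : ℕ) (hn : 1 ≤ n) (p r : ℝ≥0∞) (hp : 0 < p) (hpr : p ≤ r) :
    ∃ c : ℝ≥0∞, 0 < c ∧ c ≠ ∞ ∧ ∀ (R : ℝ), 0 < R →
      ∀ f : 𝓢(EuclideanSpace ℝ (Fin n), ℂ),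
        Function.support (𝓕 (f : EuclideanSpace ℝ (Fin n) → ℂ)) ⊆ Metric.closedBall 0 R →
        eLpNorm (f : EuclideanSpace ℝ (Fin n) → ℂ) r volume
          ≤ c * ENNReal.ofReal (R ^ ((n:ℝ) * (p⁻¹.toReal - r⁻¹.toReal)))
              * eLpNorm (f : EuclideanSpace ℝ (Fin n) → ℂ) p volume := by
  rcases eq_or_ne p ∞ with rfl | hpt
  · obtain rfl : r = ∞ := top_le_iff.1 hpr
    exact ⟨1, by simp, by simp, fun R hR f hf => by simp⟩
  have hp' : 0 < p.toReal := ENNReal.toReal_pos hp.ne' hpt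
  obtain ⟨c, hc, H⟩ := nik_sup n p.toReal hp'
  rcases eq_or_ne r ∞ with rfl | hrt
  · refine ⟨c + 1, by simp, by simp [hc], fun R hR f hf => ?_⟩
    rw [eLpNorm_exponent_top, eLpNorm_eq_lintegral_rpow_enorm_toReal hp.ne' hpt]
    refine eLpNormEssSup_le_of_ae_enorm_bound (.of_forall fun x => (H R hR f hf x).trans ?_)
    rw [ENNReal.ofReal_rpow_of_pos hR, one_div]
    simp only [ENNReal.inv_top, ENNReal.toReal_zero, sub_zero, ENNReal.toReal_inv]
    gcongr
    exact le_self_add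
  have hr' : 0 < r.toReal := ENNReal.toReal_pos (hp.trans_le hpr).ne' hrt
  have hpr' : p.toReal ≤ r.toReal := ENNReal.toReal_mono hrt hpr
  set a := p.toReal
  set b := r.toReal
  have hθ : 0 ≤ 1 - a / b := by rw [sub_nonneg, div_le_one hr']; exact hpr'
  refine ⟨c ^ (1 - a / b) + 1, by simp, by simp [ENNReal.rpow_ne_top_of_nonneg hθ hc],
    fun R hR f hf => ?_⟩
  rw [eLpNorm_eq_lintegral_rpow_enorm_toReal hp.ne' hpt,
    eLpNorm_eq_lintegral_rpow_enorm_toReal (hp.trans_le hpr).ne' hrt]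
  have H := H R hR f hf
  set I := ∫⁻ y, ‖f y‖ₑ ^ a with hI
  set ρ := ENNReal.ofReal R with hρ
  have hIt : I ≠ ∞ := by
    have h := f.eLpNorm_lt_top p volume
    exact ((eLpNorm_lt_top_iff_lintegral_rpow_enorm_lt_top hp.ne' hpt).1 h).ne
  set S := c * ρ ^ ((n : ℝ) * a⁻¹) * I ^ a⁻¹ with hS
  have hSt : S ≠ ∞ := by
    refine ENNReal.mul_ne_top (ENNReal.mul_ne_top hc ?_) ?_
    · exact ENNReal.rpow_ne_top_of_nonneg (by positivity) (by simp [hρ])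
    · exact ENNReal.rpow_ne_top_of_nonneg (by positivity) hIt
  have h1 : ∫⁻ y, ‖f y‖ₑ ^ b ≤ S ^ (b - a) * I := by
    rw [hI, ← lintegral_const_mul' _ _
      (ENNReal.rpow_ne_top_of_nonneg (by linarith) hSt)]
    gcongr with y
    calc ‖f y‖ₑ ^ b = ‖f y‖ₑ ^ ((b - a) + a) := by simp
      _ = ‖f y‖ₑ ^ (b - a) * ‖f y‖ₑ ^ a :=
        ENNReal.rpow_add_of_nonneg _ _ (by linarith) hp'.le
      _ ≤ _ := by
        gcongr
        exact H y
  have e1 : (b - a) * (1 / b) = 1 - a / b := by field_simp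
  have e2 : (n : ℝ) * a⁻¹ * (1 - a / b) = n * (a⁻¹ - b⁻¹) := by field_simp
  have e3 : I ^ (a⁻¹ * (1 - a / b)) * I ^ (1 / b) = I ^ (1 / a) := by
    rw [← ENNReal.rpow_add_of_nonneg _ _ (by positivity) (by positivity)]
    congr 1; field_simp; ring
  calc (∫⁻ y, ‖f y‖ₑ ^ b) ^ (1 / b) ≤ (S ^ (b - a) * I) ^ (1 / b) := by gcongr
    _ = c ^ (1 - a / b) * ρ ^ ((n : ℝ) * (a⁻¹ - b⁻¹)) * I ^ (1 / a) := by
      rw [ENNReal.mul_rpow_of_nonneg _ _ (by positivity), ← ENNReal.rpow_mul, e1, hS,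
        ENNReal.mul_rpow_of_nonneg _ _ hθ, ENNReal.mul_rpow_of_nonneg _ _ hθ,
        ← ENNReal.rpow_mul, ← ENNReal.rpow_mul, e2, mul_assoc, e3]
    _ ≤ _ := by
      rw [ENNReal.ofReal_rpow_of_pos hR, ENNReal.toReal_inv, ENNReal.toReal_inv]
      gcongr
      exact le_self_add
end

section
/- Let ψ : ℝⁿ → ℂ be a Schwartz function with 𝓕ψ(ξ) = 1 for all |ξ| ≤ 1, and let 0 < p < 1. Then for every R > 0 and every Schwartz function u : ℝⁿ → ℂ with support of 𝓕u contained in the closed ball of radius R about the origin, one has sup_{x∈ℝⁿ} |u(x)|^p ≤ Rⁿ · (sup_{z∈ℝⁿ}|ψ(z)|) · ∫_{ℝⁿ} |u(y)|^p dy. -/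
open scoped ENNReal NNReal FourierTransform SchwartzMap
open MeasureTheory

/-- The dilated kernel `Ψ(x) = Rⁿ ψ(R x)` as a Schwartz function, with its Fourier transform. -/
theorem exists_dilate (n : ℕ) (ψ : 𝓢(EuclideanSpace ℝ (Fin n), ℂ)) (R : ℝ) (hR : 0 < R) :
    ∃ Ψ : 𝓢(EuclideanSpace ℝ (Fin n), ℂ),
      (∀ x, Ψ x = ((R ^ n : ℝ) : ℂ) * ψ (R • x)) ∧
      ∀ ξ, 𝓕 (Ψ : EuclideanSpace ℝ (Fin n) → ℂ) ξ
        = 𝓕 (ψ : EuclideanSpace ℝ (Fin n) → ℂ) (R⁻¹ • ξ) := by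
  let g : EuclideanSpace ℝ (Fin n) ≃L[ℝ] EuclideanSpace ℝ (Fin n) :=
    ContinuousLinearEquiv.smulLeft (Units.mk0 R hR.ne')
  have hg : ∀ x, g x = R • x := fun x => rfl
  let Ψ : 𝓢(EuclideanSpace ℝ (Fin n), ℂ) :=
    ((R ^ n : ℝ) : ℂ) • SchwartzMap.compCLMOfContinuousLinearEquiv ℂ g ψ
  have hΨ : ∀ x, Ψ x = ((R ^ n : ℝ) : ℂ) * ψ (R • x) := by
    intro x
    simp [Ψ, hg]
  refine ⟨Ψ, hΨ, fun ξ => ?_⟩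
  rw [Real.fourier_eq, Real.fourier_eq]
  have h := Measure.integral_comp_smul_of_nonneg (volume : Measure (EuclideanSpace ℝ (Fin n)))
    (fun v => Real.fourierChar (-inner ℝ v (R⁻¹ • ξ)) • ψ v) R (hR := hR.le)
  have h2 : ∀ v, Real.fourierChar (-inner ℝ v ξ) • Ψ v =
      ((R ^ n : ℝ) : ℂ) *
        (Real.fourierChar (-inner ℝ (R • v) (R⁻¹ • ξ)) • ψ (R • v)) := by
    intro v
    rw [hΨ, inner_smul_left, inner_smul_right]
    simp only [Circle.smul_def, smul_eq_mul, conj_trivial]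
    rw [mul_inv_cancel_left₀ hR.ne']
    ring
  simp_rw [h2]
  rw [integral_const_mul, h]
  have hRn : (R : ℂ) ^ n ≠ 0 := pow_ne_zero _ (by exact_mod_cast hR.ne')
  simp [finrank_euclideanSpace, hRn]

theorem reproduction (n : ℕ) (ψ : 𝓢(EuclideanSpace ℝ (Fin n), ℂ))
    (hψ : ∀ ξ : EuclideanSpace ℝ (Fin n), ‖ξ‖ ≤ 1 →
      𝓕 (ψ : EuclideanSpace ℝ (Fin n) → ℂ) ξ = 1) (R : ℝ) (hR : 0 < R)
    (u : 𝓢(EuclideanSpace ℝ (Fin n), ℂ))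
    (hu : Function.support (𝓕 (u : EuclideanSpace ℝ (Fin n) → ℂ)) ⊆ Metric.closedBall 0 R)
    (x : EuclideanSpace ℝ (Fin n)) :
    u x = ∫ y, u y * (((R ^ n : ℝ) : ℂ) * ψ (R • (x - y))) := by
  obtain ⟨Ψ, hΨ, hF⟩ := exists_dilate n ψ R hR
  let B := ContinuousLinearMap.mul ℂ ℂ
  have key : SchwartzMap.convolution B u Ψ = u := by
    have : 𝓕 (SchwartzMap.convolution B u Ψ) = 𝓕 u := by
      rw [SchwartzMap.fourier_convolution]
      ext ξ
      rw [SchwartzMap.pairing_apply_apply, SchwartzMap.fourier_coe, SchwartzMap.fourier_coe, hF]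
      by_cases h : 𝓕 (u : EuclideanSpace ℝ (Fin n) → ℂ) ξ = 0
      · simp [h]
      · have h3 := hu (Function.mem_support.2 h)
        rw [mem_closedBall_zero_iff] at h3
        rw [hψ]
        · simp [B]
        · rw [norm_smul, norm_inv, Real.norm_of_nonneg hR.le, inv_mul_le_iff₀ hR]
          simpa using h3
    have h4 := congrArg (fun f => 𝓕⁻ f) this
    simpa using h4
  have h5 := SchwartzMap.convolution_apply B u Ψ x
  rw [key] at h5
  rw [h5]
  simp [convolution, B, hΨ]

/-- For `0 < p < 1`: `sup_x |u(x)|^p ≤ Rⁿ (sup_z |ψ(z)|) ∫ |u(y)|^p dy` for band-limited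
Schwartz functions `u` with `supp 𝓕u ⊆ B(0,R)`, where `𝓕ψ = 1` on the unit ball. -/
theorem stmt5 (n : ℕ) (ψ : 𝓢(EuclideanSpace ℝ (Fin n), ℂ))
    (hψ : ∀ ξ : EuclideanSpace ℝ (Fin n), ‖ξ‖ ≤ 1 →
      𝓕 (ψ : EuclideanSpace ℝ (Fin n) → ℂ) ξ = 1)
    (p : ℝ) (hp : 0 < p) (hp1 : p < 1) :
    ∀ (R : ℝ), 0 < R →
      ∀ u : 𝓢(EuclideanSpace ℝ (Fin n), ℂ),
        Function.support (𝓕 (u : EuclideanSpace ℝ (Fin n) → ℂ)) ⊆ Metric.closedBall 0 R →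
        (⨆ x : EuclideanSpace ℝ (Fin n), (‖u x‖₊ : ℝ≥0∞) ^ p)
          ≤ ENNReal.ofReal (R ^ n) * (⨆ z : EuclideanSpace ℝ (Fin n), (‖ψ z‖₊ : ℝ≥0∞))
              * ∫⁻ y : EuclideanSpace ℝ (Fin n), (‖u y‖₊ : ℝ≥0∞) ^ p := by
  intro R hR u hu
  set S := ⨆ z : EuclideanSpace ℝ (Fin n), (‖ψ z‖₊ : ℝ≥0∞) with hS
  set I := ∫⁻ y : EuclideanSpace ℝ (Fin n), (‖u y‖₊ : ℝ≥0∞) ^ p with hI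
  set M := ⨆ x : EuclideanSpace ℝ (Fin n), (‖u x‖₊ : ℝ≥0∞) with hM
  have hle : ∀ x, (‖u x‖₊ : ℝ≥0∞) ≤ M := fun x => le_iSup (fun x => (‖u x‖₊ : ℝ≥0∞)) x
  have hMtop : M ≠ ∞ := by
    have : M ≤ ENNReal.ofReal (SchwartzMap.seminorm ℝ 0 0 u) := by
      refine iSup_le fun x => ?_
      have := SchwartzMap.norm_le_seminorm ℝ u x
      calc (‖u x‖₊ : ℝ≥0∞) = ENNReal.ofReal ‖u x‖ := (ofReal_norm _).symm
        _ ≤ _ := ENNReal.ofReal_le_ofReal this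
    exact ne_top_of_le_ne_top ENNReal.ofReal_ne_top this
  suffices h : M ^ p ≤ ENNReal.ofReal (R ^ n) * S * I from
    iSup_le fun x => (ENNReal.rpow_le_rpow (hle x) hp.le).trans h
  by_cases hM0 : M = 0
  · rw [hM0, ENNReal.zero_rpow_of_pos hp]
    exact zero_le
  have hA0 : M ^ (1 - p) ≠ 0 := by
    simp [ENNReal.rpow_eq_zero_iff, hM0, hMtop]
  have hAtop : M ^ (1 - p) ≠ ∞ := ENNReal.rpow_ne_top_of_nonneg (by linarith) hMtop
  have hsplit : ∀ (a : ℝ≥0∞), a ≠ ∞ → a ^ (1 - p) * a ^ p = a := by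
    intro a ha
    rw [← ENNReal.rpow_add_of_nonneg _ _ (by linarith) hp.le]
    simp
  have main : M ≤ M ^ (1 - p) * (ENNReal.ofReal (R ^ n) * S * I) := by
    refine iSup_le fun x => ?_
    calc (‖u x‖₊ : ℝ≥0∞) = ‖∫ y, u y * (((R ^ n : ℝ) : ℂ) * ψ (R • (x - y)))‖ₑ := by
          rw [← reproduction n ψ hψ R hR u hu x]; rfl
      _ ≤ ∫⁻ y, ‖u y * (((R ^ n : ℝ) : ℂ) * ψ (R • (x - y)))‖ₑ :=
          enorm_integral_le_lintegral_enorm _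
      _ ≤ ∫⁻ y, (M ^ (1 - p) * (ENNReal.ofReal (R ^ n) * S)) * (‖u y‖₊ : ℝ≥0∞) ^ p := by
          refine lintegral_mono fun y => ?_
          have e1 : ‖((R ^ n : ℝ) : ℂ)‖ₑ = ENNReal.ofReal (R ^ n) := by
            rw [← ofReal_norm, Complex.norm_real, Real.norm_of_nonneg (by positivity)]
          have e2 : ‖ψ (R • (x - y))‖ₑ ≤ S :=
            le_iSup (fun z => (‖ψ z‖₊ : ℝ≥0∞)) (R • (x - y))
          have e3 : ‖u y‖ₑ ≤ M ^ (1 - p) * (‖u y‖₊ : ℝ≥0∞) ^ p := by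
            calc ‖u y‖ₑ = (‖u y‖₊ : ℝ≥0∞) ^ (1 - p) * (‖u y‖₊ : ℝ≥0∞) ^ p :=
                  (hsplit _ ENNReal.coe_ne_top).symm
              _ ≤ _ := by
                  gcongr
                  exact hle y
          calc ‖u y * (((R ^ n : ℝ) : ℂ) * ψ (R • (x - y)))‖ₑ
              = ‖u y‖ₑ * (ENNReal.ofReal (R ^ n) * ‖ψ (R • (x - y))‖ₑ) := by
                rw [enorm_mul, enorm_mul, e1]
            _ ≤ (M ^ (1 - p) * (‖u y‖₊ : ℝ≥0∞) ^ p) * (ENNReal.ofReal (R ^ n) * S) := by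
                gcongr
            _ = _ := by ring
      _ = M ^ (1 - p) * (ENNReal.ofReal (R ^ n) * S * I) := by
          rw [lintegral_const_mul]
          · ring
          · have := u.continuous.measurable
            fun_prop
  exact (ENNReal.mul_le_mul_iff_right hA0 hAtop).1 ((hsplit M hMtop).le.trans main)
end

section
/- (Mixed-norm Nikol'skij–Plancherel–Polya inequality in two variables.) Let 0 < p₁ ≤ r₁ < ∞ and 0 < p₂ ≤ r₂ < ∞. Then there exists a constant c > 0 such that for all R₁, R₂ > 0 and every Schwartz function f : ℝ² → ℂ whose Fourier transform is supported in the rectangle [−R₁, R₁] × [−R₂, R₂], one has (∫_ℝ (∫_ℝ |f(x₁,x₂)|^{r₁} dx₁)^{r₂/r₁} dx₂)^{1/r₂} ≤ c · R₁^{1/p₁ − 1/r₁} · R₂^{1/p₂ − 1/r₂} · (∫_ℝ (∫_ℝ |f(x₁,x₂)|^{p₁} dx₁)^{p₂/p₁} dx₂)^{1/p₂}. -/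
open scoped ENNReal NNReal FourierTransform SchwartzMap
open MeasureTheory

/-- The point `(x₁, x₂)` of the Euclidean plane. -/
noncomputable def pt (x₁ x₂ : ℝ) : EuclideanSpace ℝ (Fin 2) :=
  (EuclideanSpace.equiv (Fin 2) ℝ).symm ![x₁, x₂]


namespace NikAux

/-- the decaying weight `(1+|t|)⁻¹` -/
noncomputable def wt (t : ℝ) : ℝ≥0∞ := ENNReal.ofReal ((1 + |t|)⁻¹)

lemma wt_meas : Measurable wt := by
  unfold wt; fun_prop

lemma wt_le_one (t : ℝ) : wt t ≤ 1 := by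
  unfold wt
  rw [ENNReal.ofReal_le_one]
  exact inv_le_one_of_one_le₀ (by linarith [abs_nonneg t])

lemma wt_neg (t : ℝ) : wt (-t) = wt t := by simp [wt]

lemma wt_mul_le (x y z : ℝ) : wt (z - y) * wt (x - z) ≤ wt (x - y) := by
  unfold wt
  rw [← ENNReal.ofReal_mul (by positivity)]
  apply ENNReal.ofReal_le_ofReal
  rw [← mul_inv]
  apply inv_anti₀ (by positivity)
  have h : |x - y| ≤ |x - z| + |z - y| := abs_sub_le x z y
  nlinarith [abs_nonneg (x - z), abs_nonneg (z - y), mul_nonneg (abs_nonneg (x - z)) (abs_nonneg (z - y))]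

lemma wt_int : ∫⁻ t, wt t ^ 2 ≠ ∞ := by
  have h := finite_integral_one_add_norm (E := ℝ) (μ := volume) (r := 2) (by simp)
  refine ne_of_lt (lt_of_le_of_lt (le_of_eq ?_) h)
  apply lintegral_congr
  intro t
  unfold wt
  rw [← ENNReal.ofReal_pow (by positivity)]
  congr 1
  rw [Real.rpow_neg (by positivity)]
  simp

lemma div_lemma {M D : ℝ≥0∞} {q : ℝ} (hq : 0 < q) (hM : M ≠ ∞) (h : M ≤ D * M ^ (1 - q)) :
    M ^ q ≤ D := by
  by_cases h0 : M = 0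
  · subst h0; simp [ENNReal.zero_rpow_of_pos hq]
  have h1 : M ^ (1 - q) ≠ 0 := by simp [ENNReal.rpow_eq_zero_iff, h0, hM]
  have h2 : M ^ (1 - q) ≠ ∞ := by simp [ENNReal.rpow_eq_top_iff, h0, hM]
  have h3 : M = M ^ q * M ^ (1 - q) := by
    rw [← ENNReal.rpow_add _ _ h0 hM]; simp
  exact (ENNReal.mul_le_mul_iff_left h1 h2).1 (h3.symm.le.trans h)

lemma jensen {α : Type*} [MeasurableSpace α] (μ : Measure α) {H : α → ℝ≥0∞} (hH : Measurable H)
    {q : ℝ} (hq : 1 ≤ q) :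
    (∫⁻ x, H x ∂μ) ^ q ≤ (μ Set.univ) ^ (q - 1) * ∫⁻ x, H x ^ q ∂μ := by
  rcases hq.eq_or_lt with rfl | hq
  · simp
  have hc := Real.HolderConjugate.conjExponent hq
  have h := ENNReal.lintegral_mul_le_Lp_mul_Lq μ hc hH.aemeasurable
    (g := fun _ => 1) aemeasurable_const
  have hq0 : 0 < q := by linarith
  simp only [Pi.mul_apply, mul_one, ENNReal.one_rpow, lintegral_const, one_mul] at h
  calc _ ≤ _ := ENNReal.rpow_le_rpow h hq0.le
    _ = _ := by
      rw [ENNReal.mul_rpow_of_nonneg _ _ hq0.le, ← ENNReal.rpow_mul, ← ENNReal.rpow_mul, mul_comm]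
      congr 2
      · unfold Real.conjExponent
        have : q - 1 ≠ 0 := by linarith
        field_simp
      · field_simp; simp

lemma jensen_wt {H : ℝ → ℝ≥0∞} (hH : Measurable H) {q : ℝ} (hq : 1 ≤ q) :
    (∫⁻ x, H x * wt x ^ 2) ^ q ≤ (∫⁻ t, wt t ^ 2) ^ (q - 1) * ∫⁻ x, H x ^ q * wt x ^ 2 := by
  have h := jensen (volume.withDensity (fun t => wt t ^ 2)) hH hq
  rw [lintegral_withDensity_eq_lintegral_mul _ (wt_meas.pow_const 2) hH,
    lintegral_withDensity_eq_lintegral_mul _ (wt_meas.pow_const 2) (hH.pow_const q)] at h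
  simp only [Pi.mul_apply, MeasurableSet.univ, withDensity_apply, Measure.restrict_univ] at h
  simpa only [mul_comm] using h

lemma peetre {G : ℝ → ℝ≥0∞} {B C : ℝ≥0∞} (hB : B ≠ ∞)
    (hGB : ∀ y, G y ≤ B) {q : ℝ} (hq : 0 < q) (hq1 : q ≤ 1) {N : ℕ} (hN : 2 ≤ N * q)
    (h : ∀ z, G z ≤ C * ∫⁻ y, G y * wt (z - y) ^ N) (x : ℝ) :
    G x ^ q ≤ C * ∫⁻ y, G y ^ q * wt (x - y) ^ 2 := by
  set M := ⨆ y, G y * wt (x - y) ^ N with hMdef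
  have hMB : M ≤ B := iSup_le fun y => (mul_le_of_le_one_right' (pow_le_one' (wt_le_one _) _)).trans (hGB y)
  have hM : M ≠ ∞ := ne_top_of_le_ne_top hB hMB
  have hle : ∀ y, G y * wt (x - y) ^ N ≤ M := fun y => le_iSup (fun y => G y * wt (x - y) ^ N) y
  set I := ∫⁻ y, G y ^ q * wt (x - y) ^ 2
  have key : M ≤ (C * I) * M ^ (1 - q) := by
    refine iSup_le fun z => ?_
    have hpt : ∀ y, G y * wt (x - y) ^ N ≤ M ^ (1 - q) * (G y ^ q * wt (x - y) ^ 2) := by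
      intro y
      set a := G y * wt (x - y) ^ N with ha
      calc a = a ^ (1 - q) * a ^ q := by
            rw [← ENNReal.rpow_add_of_nonneg _ _ (by linarith) hq.le]; simp
        _ ≤ M ^ (1 - q) * (G y ^ q * wt (x - y) ^ 2) := by
            refine mul_le_mul' (ENNReal.rpow_le_rpow (hle y) (by linarith)) ?_
            rw [ha, ENNReal.mul_rpow_of_nonneg _ _ hq.le]
            refine mul_le_mul' le_rfl ?_
            rw [← ENNReal.rpow_natCast, ← ENNReal.rpow_mul, ← ENNReal.rpow_natCast]
            exact ENNReal.rpow_le_rpow_of_exponent_ge (wt_le_one _) (by exact_mod_cast hN)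
    have hfin : M ^ (1 - q) ≠ ∞ := ENNReal.rpow_ne_top_of_nonneg (by linarith) hM
    have hwfin : wt (x - z) ^ N ≠ ∞ := ENNReal.pow_ne_top (ne_top_of_le_ne_top ENNReal.one_ne_top (wt_le_one _))
    calc G z * wt (x - z) ^ N ≤ (C * ∫⁻ y, G y * wt (z - y) ^ N) * wt (x - z) ^ N := by
          gcongr; exact h z
      _ = C * ∫⁻ y, G y * wt (z - y) ^ N * wt (x - z) ^ N := by
          rw [lintegral_mul_const' _ _ hwfin, mul_assoc]
      _ ≤ C * ∫⁻ y, M ^ (1 - q) * (G y ^ q * wt (x - y) ^ 2) := by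
          refine mul_le_mul' le_rfl (lintegral_mono fun y => ?_)
          refine le_trans ?_ (hpt y)
          rw [mul_assoc, ← mul_pow]
          gcongr
          exact wt_mul_le x y z
      _ = _ := by rw [lintegral_const_mul' _ _ hfin]; ring
  calc G x ^ q ≤ M ^ q := by
        refine ENNReal.rpow_le_rpow ?_ hq.le
        simpa [wt] using hle x
    _ ≤ _ := div_lemma hq hM key

lemma lintegral_scale {A : ℝ → ℝ≥0∞} (hA : Measurable A) {R : ℝ} (hR : 0 < R) (x : ℝ) :
    ∫⁻ s, A (x + s / R) = ENNReal.ofReal R * ∫⁻ y, A y := by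
  have hR' : R⁻¹ ≠ 0 := by positivity
  have h := Real.map_volume_mul_left hR'
  have h2 : ∫⁻ s, A (x + s / R) = ∫⁻ y, A (x + y) ∂(Measure.map (R⁻¹ * ·) volume) := by
    rw [lintegral_map (by fun_prop) (by fun_prop)]
    simp only [div_eq_inv_mul]
  rw [h2, h, lintegral_smul_measure, lintegral_add_left_eq_self (fun y => A y)]
  simp [abs_of_pos hR]

lemma nik {b : ℝ} (hb : 0 < b) {C₀ : ℝ≥0∞} (hC₀ : C₀ ≠ ∞) :
    ∃ C : ℝ≥0∞, C ≠ ∞ ∧ ∀ (R : ℝ), 0 < R → ∀ (A : ℝ → ℝ≥0∞), Measurable A →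
      ∀ B : ℝ≥0∞, B ≠ ∞ → (∀ x, A x ≤ B) →
      (∀ x, A x ≤ C₀ * ∫⁻ s, A (x + s / R) * wt s ^ 2) →
      ∀ ρ, b ≤ ρ → ∫⁻ x, A x ^ ρ ≤
        (C * ENNReal.ofReal R) ^ ((ρ - b) / b) * (∫⁻ x, A x ^ b) ^ (ρ / b) := by
  obtain ⟨C, hC, hsup⟩ : ∃ C : ℝ≥0∞, C ≠ ∞ ∧ ∀ (R : ℝ), 0 < R → ∀ (A : ℝ → ℝ≥0∞), Measurable A →
      ∀ B : ℝ≥0∞, B ≠ ∞ → (∀ x, A x ≤ B) →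
      (∀ x, A x ≤ C₀ * ∫⁻ s, A (x + s / R) * wt s ^ 2) →
      ∀ x, A x ^ b ≤ C * ENNReal.ofReal R * ∫⁻ y, A y ^ b := by
    rcases le_total b 1 with hb1 | hb1
    · refine ⟨C₀, hC₀, ?_⟩
      intro R hR A hA B hB hAB h x
      set S := ⨆ y, A y
      have hS : S ≠ ∞ := ne_top_of_le_ne_top hB (iSup_le hAB)
      have hle : ∀ y, A y ≤ S := le_iSup A
      have hfin : S ^ (1 - b) ≠ ∞ := ENNReal.rpow_ne_top_of_nonneg (by linarith) hS
      refine (ENNReal.rpow_le_rpow (hle x) hb.le).trans (div_lemma hb hS ?_)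
      refine iSup_le fun z => ?_
      calc A z ≤ C₀ * ∫⁻ s, A (z + s / R) * wt s ^ 2 := h z
        _ ≤ C₀ * ∫⁻ s, S ^ (1 - b) * A (z + s / R) ^ b := by
            refine mul_le_mul' le_rfl (lintegral_mono fun s => ?_)
            refine (mul_le_of_le_one_right' (pow_le_one' (wt_le_one _) _)).trans ?_
            calc A (z + s / R) = A (z + s / R) ^ (1 - b) * A (z + s / R) ^ b := by
                  rw [← ENNReal.rpow_add_of_nonneg _ _ (by linarith) hb.le]; simp
              _ ≤ _ := by
                  refine mul_le_mul' (ENNReal.rpow_le_rpow (hle _) (by linarith)) le_rfl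
        _ = _ := by
            rw [lintegral_const_mul' _ _ hfin, lintegral_scale (hA.pow_const b) hR z]; ring
    · refine ⟨C₀ ^ b * (∫⁻ t, wt t ^ 2) ^ (b - 1), ?_, ?_⟩
      · exact ENNReal.mul_ne_top (ENNReal.rpow_ne_top_of_nonneg hb.le hC₀)
          (ENNReal.rpow_ne_top_of_nonneg (by linarith) wt_int)
      intro R hR A hA B hB hAB h x
      calc A x ^ b ≤ (C₀ * ∫⁻ s, A (x + s / R) * wt s ^ 2) ^ b := ENNReal.rpow_le_rpow (h x) hb.le
        _ = C₀ ^ b * (∫⁻ s, A (x + s / R) * wt s ^ 2) ^ b := ENNReal.mul_rpow_of_nonneg _ _ hb.le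
        _ ≤ C₀ ^ b * ((∫⁻ t, wt t ^ 2) ^ (b - 1) * ∫⁻ s, A (x + s / R) ^ b * wt s ^ 2) := by
            gcongr
            exact jensen_wt (H := fun s => A (x + s / R)) (by fun_prop) hb1
        _ ≤ C₀ ^ b * ((∫⁻ t, wt t ^ 2) ^ (b - 1) * ∫⁻ s, A (x + s / R) ^ b) := by
            gcongr with s
            exact mul_le_of_le_one_right' (pow_le_one' (wt_le_one _) _)
        _ = _ := by rw [lintegral_scale (hA.pow_const b) hR x]; ring
  refine ⟨C, hC, ?_⟩
  intro R hR A hA B hB hAB h ρ hρ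
  set J := ∫⁻ x, A x ^ b
  have hs : 0 ≤ (ρ - b) / b := div_nonneg (by linarith) hb.le
  calc ∫⁻ x, A x ^ ρ ≤ ∫⁻ x, (C * ENNReal.ofReal R * J) ^ ((ρ - b) / b) * A x ^ b := by
        gcongr with x
        calc A x ^ ρ = (A x ^ b) ^ ((ρ - b) / b) * A x ^ b := by
              rw [← ENNReal.rpow_mul, ← ENNReal.rpow_add_of_nonneg _ _ (by positivity) hb.le]
              congr 1; field_simp; ring
          _ ≤ _ := by
              gcongr
              exact hsup R hR A hA B hB hAB h x
    _ = (C * ENNReal.ofReal R * J) ^ ((ρ - b) / b) * J := by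
        rw [lintegral_const_mul _ (hA.pow_const b)]
    _ = (C * ENNReal.ofReal R) ^ ((ρ - b) / b) * (J ^ ((ρ - b) / b) * J ^ (1:ℝ)) := by
        rw [ENNReal.mul_rpow_of_nonneg _ _ hs, ENNReal.rpow_one]; ring
    _ = _ := by
        rw [← ENNReal.rpow_add_of_nonneg _ _ hs zero_le_one]
        congr 2; field_simp; ring


lemma exists_kernel : ∃ K : 𝓢(ℝ, ℂ), ∀ ξ : ℝ, |ξ| ≤ 1 → 𝓕 (K : ℝ → ℂ) ξ = 1 := by
  let φ : ContDiffBump (0 : ℝ) := ⟨1, 2, by norm_num, by norm_num⟩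
  have h1 : HasCompactSupport (fun x => (φ x : ℂ)) :=
    φ.hasCompactSupport.comp_left (g := fun x : ℝ => (x : ℂ)) (by simp)
  have h2 : ContDiff ℝ (⊤ : ℕ∞) (fun x => (φ x : ℂ)) :=
    Complex.ofRealCLM.contDiff.comp φ.contDiff
  refine ⟨𝓕⁻ (h1.toSchwartzMap h2), fun ξ hξ => ?_⟩
  rw [← SchwartzMap.fourier_coe, FourierTransform.fourier_fourierInv_eq]
  have : φ ξ = 1 := φ.one_of_mem_closedBall (by simpa using hξ)
  simp [this]

section
variable {V : Type*} [NormedAddCommGroup V] [InnerProductSpace ℝ V] [FiniteDimensional ℝ V]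
  [MeasurableSpace V] [BorelSpace V]

lemma repr (K : 𝓢(ℝ, ℂ)) (hK : ∀ ξ : ℝ, |ξ| ≤ 1 → 𝓕 (K : ℝ → ℂ) ξ = 1)
    (f : 𝓢(V, ℂ)) (e : V) (R : ℝ) (hR : 0 < R)
    (hf : ∀ ξ, 𝓕 (f : V → ℂ) ξ ≠ 0 → |inner ℝ ξ e| ≤ R) (x : V) :
    f x = ∫ t : ℝ, K t * f (x - (t / R) • e) := by
  have hinv : ∀ y, f y = ∫ v, (Real.fourierChar (inner ℝ v y) : ℂ) * (𝓕 f) v := by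
    intro y
    conv_lhs => rw [← FourierTransform.fourierInv_fourier_eq (F := 𝓢(V, ℂ)) f]
    rw [SchwartzMap.fourierInv_coe, Real.fourierInv_eq]
    rfl
  have hf' : ∀ ξ, (𝓕 f) ξ ≠ 0 → |inner ℝ ξ e| ≤ R := by
    intro ξ h; apply hf; rwa [SchwartzMap.fourier_coe] at h
  generalize (𝓕 f) = g at hinv hf'
  have hswap : ∫ t : ℝ, ∫ v, K t * ((Real.fourierChar (inner ℝ v (x - (t / R) • e)) : ℂ) * g v)
      = ∫ v, ∫ t : ℝ, K t * ((Real.fourierChar (inner ℝ v (x - (t / R) • e)) : ℂ) * g v) := by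
    apply integral_integral_swap
    refine (K.integrable.mul_prod g.integrable).mono ?_ ?_
    · apply Continuous.aestronglyMeasurable
      have := K.continuous
      have := g.continuous
      simp only [Function.uncurry_def]
      have h3 : Continuous fun a : ℝ × V => (Real.fourierChar (inner ℝ a.2 (x - (a.1 / R) • e)) : ℂ) :=
        continuous_subtype_val.comp (Real.continuous_fourierChar.comp (by fun_prop))
      fun_prop
    · filter_upwards with a
      simp only [Function.uncurry_def, norm_mul, Circle.norm_coe, one_mul, le_refl]
  simp_rw [hinv (x - _), ← integral_const_mul]
  rw [hswap, hinv x]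
  congr 1
  ext v
  by_cases hv : g v = 0
  · simp [hv]
  have h1 := hK (inner ℝ v e / R) (by
    rw [abs_div, abs_of_pos hR, div_le_one hR]; exact hf' v hv)
  rw [Real.fourier_real_eq] at h1
  have : ∀ t : ℝ, K t * ((Real.fourierChar (inner ℝ v (x - (t / R) • e)) : ℂ) * g v)
      = ((Real.fourierChar (inner ℝ v x) : ℂ) * g v) *
        (Real.fourierChar (-(t * (inner ℝ v e / R))) • K t) := by
    intro t
    have : inner ℝ v (x - (t / R) • e) = inner ℝ v x + (-(t * (inner ℝ v e / R))) := by
      rw [inner_sub_right, inner_smul_right]; ring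
    rw [this, AddChar.map_add_eq_mul, Circle.smul_def, smul_eq_mul]
    push_cast
    ring
  simp_rw [this]
  rw [integral_const_mul, h1, mul_one]

lemma schwartz_decay {E : Type*} [NormedAddCommGroup E] [NormedSpace ℝ E] (f : 𝓢(E, ℂ)) (N : ℕ) :
    ∃ C : ℝ≥0∞, C ≠ ∞ ∧ ∀ x, (‖f x‖₊ : ℝ≥0∞) ≤ C * wt ‖x‖ ^ N := by
  refine ⟨ENNReal.ofReal (2 ^ N * (Finset.Iic (N, 0)).sup (fun m => SchwartzMap.seminorm ℝ m.1 m.2) f),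
    ENNReal.ofReal_ne_top, fun x => ?_⟩
  have h := SchwartzMap.one_add_le_sup_seminorm_apply (𝕜 := ℝ) (m := (N, 0)) (k := N) (n := 0)
    le_rfl le_rfl f x
  rw [norm_iteratedFDeriv_zero] at h
  unfold wt
  rw [abs_norm, ← ENNReal.ofReal_pow (by positivity), ← ENNReal.ofReal_mul (by positivity),
    ← enorm_eq_nnnorm, ← ofReal_norm]
  apply ENNReal.ofReal_le_ofReal
  rw [inv_pow, ← div_eq_mul_inv, le_div_iff₀ (by positivity), mul_comm]
  exact h

lemma pointwise {q : ℝ} (hq : 0 < q) : ∃ C : ℝ≥0∞, C ≠ ∞ ∧ ∀ (R : ℝ), 0 < R →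
    ∀ (f : 𝓢(V, ℂ)) (e : V), (∀ ξ, 𝓕 (f : V → ℂ) ξ ≠ 0 → |inner ℝ ξ e| ≤ R) →
    ∀ x, (‖f x‖₊ : ℝ≥0∞) ^ q ≤ C * ∫⁻ s : ℝ, (‖f (x + (s / R) • e)‖₊ : ℝ≥0∞) ^ q * wt s ^ 2 := by
  obtain ⟨K, hK⟩ := exists_kernel
  -- basic inequality
  have base : ∀ N : ℕ, ∃ C : ℝ≥0∞, C ≠ ∞ ∧ ∀ (R : ℝ), 0 < R →
      ∀ (f : 𝓢(V, ℂ)) (e : V), (∀ ξ, 𝓕 (f : V → ℂ) ξ ≠ 0 → |inner ℝ ξ e| ≤ R) →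
      ∀ x, ∀ z : ℝ, (‖f (x + (z / R) • e)‖₊ : ℝ≥0∞) ≤
        C * ∫⁻ y : ℝ, (‖f (x + (y / R) • e)‖₊ : ℝ≥0∞) * wt (z - y) ^ N := by
    intro N
    obtain ⟨C, hC, hd⟩ := schwartz_decay K N
    refine ⟨C, hC, fun R hR f e hf x z => ?_⟩
    rw [repr K hK f e R hR hf (x + (z / R) • e)]
    calc _ ≤ ∫⁻ t : ℝ, ‖K t * f (x + (z / R) • e - (t / R) • e)‖ₑ := enorm_integral_le_lintegral_enorm _
      _ ≤ ∫⁻ t : ℝ, C * ((‖f (x + ((z - t) / R) • e)‖₊ : ℝ≥0∞) * wt (z - (z - t)) ^ N) := by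
          refine lintegral_mono fun t => ?_
          rw [enorm_mul]
          have h1 : x + (z / R) • e - (t / R) • e = x + ((z - t) / R) • e := by
            rw [sub_div, sub_smul]; abel
          rw [h1, sub_sub_cancel]
          have h2 := hd t
          have h3 : wt ‖t‖ = wt t := by simp [wt]
          rw [h3, ← enorm_eq_nnnorm] at h2
          rw [← enorm_eq_nnnorm]
          calc _ ≤ (C * wt t ^ N) * ‖f (x + ((z - t) / R) • e)‖ₑ := by gcongr
            _ = _ := by ring
      _ = _ := by
          rw [lintegral_sub_left_eq_self (fun y => C * ((‖f (x + (y / R) • e)‖₊ : ℝ≥0∞) * wt (z - y) ^ N)) z,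
            lintegral_const_mul' _ _ hC]
  rcases le_total q 1 with hq1 | hq1
  · obtain ⟨N, hN⟩ := exists_nat_ge (2 / q)
    obtain ⟨C, hC, hb⟩ := base N
    refine ⟨C, hC, fun R hR f e hf x => ?_⟩
    obtain ⟨B, hB, hfB⟩ := schwartz_decay f 0
    have := peetre (G := fun s => (‖f (x + (s / R) • e)‖₊ : ℝ≥0∞)) (C := C) (B := B) hB
      (fun y => by simpa using hfB (x + (y / R) • e)) hq hq1 (N := N) ((div_le_iff₀ hq).1 hN)
      (fun z => hb R hR f e hf x z) 0
    simpa [wt_neg] using this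
  · obtain ⟨C, hC, hb⟩ := base 2
    refine ⟨C ^ q * (∫⁻ t, wt t ^ 2) ^ (q - 1), ENNReal.mul_ne_top
      (ENNReal.rpow_ne_top_of_nonneg hq.le hC)
          (ENNReal.rpow_ne_top_of_nonneg (by linarith) wt_int), fun R hR f e hf x => ?_⟩
    have h := hb R hR f e hf x 0
    simp only [zero_div, zero_smul, add_zero, zero_sub, wt_neg] at h
    calc _ ≤ _ := ENNReal.rpow_le_rpow h hq.le
      _ = C ^ q * (∫⁻ s : ℝ, (‖f (x + (s / R) • e)‖₊ : ℝ≥0∞) * wt s ^ 2) ^ q :=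
          ENNReal.mul_rpow_of_nonneg _ _ hq.le
      _ ≤ C ^ q * ((∫⁻ t, wt t ^ 2) ^ (q - 1) *
            ∫⁻ s : ℝ, (‖f (x + (s / R) • e)‖₊ : ℝ≥0∞) ^ q * wt s ^ 2) := by
          refine mul_le_mul' le_rfl (jensen_wt ?_ hq1)
          have hc : Continuous fun s : ℝ => f (x + (s / R) • e) := f.continuous.comp (by fun_prop)
          exact hc.measurable.nnnorm.coe_nnreal_ennreal
      _ = _ := by ring

end


lemma pt_add_left (x₁ x₂ s : ℝ) : pt x₁ x₂ + s • pt 1 0 = pt (x₁ + s) x₂ := by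
  ext i; fin_cases i <;> simp [pt]

lemma pt_add_right (x₁ x₂ s : ℝ) : pt x₁ x₂ + s • pt 0 1 = pt x₁ (x₂ + s) := by
  ext i; fin_cases i <;> simp [pt]

lemma inner_pt_left (ξ : EuclideanSpace ℝ (Fin 2)) : inner ℝ ξ (pt 1 0) = ξ 0 := by
  simp [pt, PiLp.inner_apply]

lemma inner_pt_right (ξ : EuclideanSpace ℝ (Fin 2)) : inner ℝ ξ (pt 0 1) = ξ 1 := by
  simp [pt, PiLp.inner_apply]

lemma pt_cont : Continuous fun a : ℝ × ℝ => pt a.1 a.2 := by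
  unfold pt
  refine (EuclideanSpace.equiv (Fin 2) ℝ).symm.continuous.comp ?_
  refine continuous_pi fun i => ?_
  fin_cases i
  · exact continuous_fst
  · exact continuous_snd

lemma abs_le_norm_pt (x₁ x₂ : ℝ) : |x₁| ≤ ‖pt x₁ x₂‖ := by
  have := PiLp.norm_apply_le (pt x₁ x₂) 0
  simpa [pt] using this

lemma inner_bound (f : 𝓢(EuclideanSpace ℝ (Fin 2), ℂ)) {p : ℝ} (hp : 0 < p) :
    ∃ B : ℝ≥0∞, B ≠ ∞ ∧ ∀ x₂, ∫⁻ x₁ : ℝ, (‖f (pt x₁ x₂)‖₊ : ℝ≥0∞) ^ p ≤ B := by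
  obtain ⟨N, hN⟩ := exists_nat_ge (2 / p)
  have hN := (div_le_iff₀ hp).1 hN
  obtain ⟨C, hC, hd⟩ := schwartz_decay f N
  have hCp : C ^ p ≠ ∞ := ENNReal.rpow_ne_top_of_nonneg hp.le hC
  refine ⟨C ^ p * ∫⁻ t, wt t ^ 2, ENNReal.mul_ne_top hCp wt_int, fun x₂ => ?_⟩
  rw [← lintegral_const_mul' _ _ hCp]
  refine lintegral_mono fun x₁ => ?_
  have hw : wt ‖pt x₁ x₂‖ ≤ wt x₁ := by
    unfold wt
    apply ENNReal.ofReal_le_ofReal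
    rw [abs_norm]
    apply inv_anti₀ (by positivity)
    linarith [abs_le_norm_pt x₁ x₂]
  calc _ ≤ (C * wt x₁ ^ N) ^ p := by
        refine ENNReal.rpow_le_rpow ((hd _).trans ?_) hp.le
        gcongr
    _ = C ^ p * wt x₁ ^ (N * p) := by
        rw [ENNReal.mul_rpow_of_nonneg _ _ hp.le, ← ENNReal.rpow_natCast, ← ENNReal.rpow_mul]
    _ ≤ _ := by
        refine mul_le_mul' le_rfl ?_
        rw [← ENNReal.rpow_natCast (wt x₁) 2]
        exact ENNReal.rpow_le_rpow_of_exponent_ge (wt_le_one _) (by exact_mod_cast hN)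

end NikAux

open NikAux in
/-- Mixed-norm Nikol'skij–Plancherel–Polya inequality in two variables: for
`0 < pₖ ≤ rₖ < ∞` there is `c > 0` such that every Schwartz function on `ℝ²` whose Fourier
transform is supported in the rectangle `[-R₁,R₁] × [-R₂,R₂]` satisfies
`‖f‖_{(r₁,r₂)} ≤ c R₁^{1/p₁-1/r₁} R₂^{1/p₂-1/r₂} ‖f‖_{(p₁,p₂)}`. -/
theorem stmt6 (p₁ p₂ r₁ r₂ : ℝ) (hp₁ : 0 < p₁) (hp₂ : 0 < p₂)
    (h₁ : p₁ ≤ r₁) (h₂ : p₂ ≤ r₂) :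
    ∃ c : ℝ≥0∞, 0 < c ∧ c ≠ ∞ ∧ ∀ (R₁ R₂ : ℝ), 0 < R₁ → 0 < R₂ →
      ∀ f : 𝓢(EuclideanSpace ℝ (Fin 2), ℂ),
        Function.support (𝓕 (f : EuclideanSpace ℝ (Fin 2) → ℂ))
          ⊆ {ξ : EuclideanSpace ℝ (Fin 2) | |ξ 0| ≤ R₁ ∧ |ξ 1| ≤ R₂} →
        (∫⁻ x₂ : ℝ, (∫⁻ x₁ : ℝ, (‖f (pt x₁ x₂)‖₊ : ℝ≥0∞) ^ r₁) ^ (r₂ / r₁)) ^ (1 / r₂)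
          ≤ c * ENNReal.ofReal (R₁ ^ (1 / p₁ - 1 / r₁)) * ENNReal.ofReal (R₂ ^ (1 / p₂ - 1 / r₂))
              * (∫⁻ x₂ : ℝ, (∫⁻ x₁ : ℝ, (‖f (pt x₁ x₂)‖₊ : ℝ≥0∞) ^ p₁) ^ (p₂ / p₁)) ^ (1 / p₂) := by
  
  have hr₁ : 0 < r₁ := hp₁.trans_le h₁
  have hr₂ : 0 < r₂ := hp₂.trans_le h₂
  obtain ⟨D₁, hD₁, hpw₁⟩ := pointwise (V := EuclideanSpace ℝ (Fin 2)) (q := 1) one_pos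
  obtain ⟨D₂, hD₂, hpw₂⟩ := pointwise (V := EuclideanSpace ℝ (Fin 2)) hp₁
  obtain ⟨C₁, hC₁, hn₁⟩ := nik hp₁ hD₁
  obtain ⟨C₂, hC₂, hn₂⟩ := nik (div_pos hp₂ hp₁) hD₂
  have ha₁ : 0 ≤ 1 / p₁ - 1 / r₁ := sub_nonneg.2 (one_div_le_one_div_of_le hp₁ h₁)
  have ha₂ : 0 ≤ 1 / p₂ - 1 / r₂ := sub_nonneg.2 (one_div_le_one_div_of_le hp₂ h₂)
  refine ⟨C₁ ^ (1 / p₁ - 1 / r₁) * C₂ ^ (1 / p₂ - 1 / r₂) + 1, by simp, ?_, ?_⟩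
  · exact ENNReal.add_ne_top.2 ⟨ENNReal.mul_ne_top (ENNReal.rpow_ne_top_of_nonneg ha₁ hC₁)
      (ENNReal.rpow_ne_top_of_nonneg ha₂ hC₂), ENNReal.one_ne_top⟩
  intro R₁ R₂ hR₁ hR₂ f hf
  have hf₁ : ∀ ξ, 𝓕 (f : EuclideanSpace ℝ (Fin 2) → ℂ) ξ ≠ 0 → |inner ℝ ξ (pt 1 0)| ≤ R₁ := by
    intro ξ h; rw [inner_pt_left]; exact (hf h).1
  have hf₂ : ∀ ξ, 𝓕 (f : EuclideanSpace ℝ (Fin 2) → ℂ) ξ ≠ 0 → |inner ℝ ξ (pt 0 1)| ≤ R₂ := by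
    intro ξ h; rw [inner_pt_right]; exact (hf h).2
  have hmeas : Measurable fun a : ℝ × ℝ => (‖f (pt a.1 a.2)‖₊ : ℝ≥0∞) :=
    (f.continuous.comp pt_cont).measurable.nnnorm.coe_nnreal_ennreal
  -- inner variable
  have hin : ∀ x₂, ∫⁻ x₁ : ℝ, (‖f (pt x₁ x₂)‖₊ : ℝ≥0∞) ^ r₁ ≤
      (C₁ * ENNReal.ofReal R₁) ^ ((r₁ - p₁) / p₁) *
        (∫⁻ x₁ : ℝ, (‖f (pt x₁ x₂)‖₊ : ℝ≥0∞) ^ p₁) ^ (r₁ / p₁) := by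
    intro x₂
    obtain ⟨B, hB, hfB⟩ := schwartz_decay f 0
    refine hn₁ R₁ hR₁ (fun x₁ => (‖f (pt x₁ x₂)‖₊ : ℝ≥0∞))
      (hmeas.comp (measurable_id.prodMk measurable_const)) B hB
      (fun x => by simpa using hfB (pt x x₂)) (fun x => ?_) r₁ h₁
    simpa only [ENNReal.rpow_one, pt_add_left] using hpw₁ R₁ hR₁ f _ hf₁ (pt x x₂)
  -- outer variable
  set A : ℝ → ℝ≥0∞ := fun x₂ => ∫⁻ x₁ : ℝ, (‖f (pt x₁ x₂)‖₊ : ℝ≥0∞) ^ p₁ with hA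
  have hAm : Measurable A := by
    have h : Measurable fun a : ℝ × ℝ => (‖f (pt a.2 a.1)‖₊ : ℝ≥0∞) ^ p₁ :=
      (hmeas.comp measurable_swap).pow_const p₁
    exact h.lintegral_prod_right'
  have hout : ∫⁻ x₂, A x₂ ^ (r₂ / p₁) ≤
      (C₂ * ENNReal.ofReal R₂) ^ ((r₂ / p₁ - p₂ / p₁) / (p₂ / p₁)) *
        (∫⁻ x₂, A x₂ ^ (p₂ / p₁)) ^ ((r₂ / p₁) / (p₂ / p₁)) := by
    obtain ⟨B, hB, hAB⟩ := inner_bound f hp₁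
    refine hn₂ R₂ hR₂ A hAm B hB hAB (fun x₂ => ?_) (r₂ / p₁) (by gcongr)
    calc A x₂ ≤ ∫⁻ x₁ : ℝ, D₂ * ∫⁻ s : ℝ, (‖f (pt x₁ (x₂ + s / R₂))‖₊ : ℝ≥0∞) ^ p₁ * wt s ^ 2 := by
          refine lintegral_mono fun x₁ => ?_
          simpa only [pt_add_right] using hpw₂ R₂ hR₂ f _ hf₂ (pt x₁ x₂)
      _ = D₂ * ∫⁻ s : ℝ, ∫⁻ x₁ : ℝ, (‖f (pt x₁ (x₂ + s / R₂))‖₊ : ℝ≥0∞) ^ p₁ * wt s ^ 2 := by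
          rw [lintegral_const_mul' _ _ hD₂, lintegral_lintegral_swap]
          refine Measurable.aemeasurable ?_
          have h1 : Measurable fun a : ℝ × ℝ => (a.1, x₂ + a.2 / R₂) := by fun_prop
          exact ((hmeas.comp h1).pow_const p₁).mul ((wt_meas.comp measurable_snd).pow_const 2)
      _ = _ := by
          congr 1
          refine lintegral_congr fun s => ?_
          rw [lintegral_mul_const' _ _ (ENNReal.pow_ne_top
            (ne_top_of_le_ne_top ENNReal.one_ne_top (wt_le_one _)))]
  set J := ∫⁻ x₂, A x₂ ^ (p₂ / p₁)
  set E₁ := C₁ * ENNReal.ofReal R₁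
  set E₂ := C₂ * ENNReal.ofReal R₂
  calc _ ≤ (∫⁻ x₂ : ℝ, E₁ ^ ((1 / p₁ - 1 / r₁) * r₂) * A x₂ ^ (r₂ / p₁)) ^ (1 / r₂) := by
        refine ENNReal.rpow_le_rpow (lintegral_mono fun x₂ => ?_) (by positivity)
        calc _ ≤ _ := ENNReal.rpow_le_rpow (hin x₂) (by positivity)
          _ = _ := by
            rw [ENNReal.mul_rpow_of_nonneg _ _ (by positivity), ← ENNReal.rpow_mul, ← ENNReal.rpow_mul]
            congr 2 <;> field_simp
    _ = (E₁ ^ ((1 / p₁ - 1 / r₁) * r₂) * ∫⁻ x₂ : ℝ, A x₂ ^ (r₂ / p₁)) ^ (1 / r₂) := by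
        rw [lintegral_const_mul _ (hAm.pow_const _)]
    _ ≤ (E₁ ^ ((1 / p₁ - 1 / r₁) * r₂) * (E₂ ^ ((r₂ / p₁ - p₂ / p₁) / (p₂ / p₁)) *
          J ^ ((r₂ / p₁) / (p₂ / p₁)))) ^ (1 / r₂) := by
        refine ENNReal.rpow_le_rpow (mul_le_mul' le_rfl hout) (by positivity)
    _ = E₁ ^ (1 / p₁ - 1 / r₁) * (E₂ ^ (1 / p₂ - 1 / r₂) * J ^ (1 / p₂)) := by
        have h0 : 0 ≤ 1 / r₂ := by positivity
        rw [ENNReal.mul_rpow_of_nonneg _ _ h0, ENNReal.mul_rpow_of_nonneg _ _ h0,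
          ← ENNReal.rpow_mul, ← ENNReal.rpow_mul, ← ENNReal.rpow_mul]
        congr 2
        · field_simp
        · congr 1
          field_simp
        · congr 1
          field_simp
    _ = (C₁ ^ (1 / p₁ - 1 / r₁) * C₂ ^ (1 / p₂ - 1 / r₂)) * ENNReal.ofReal (R₁ ^ (1 / p₁ - 1 / r₁))
          * ENNReal.ofReal (R₂ ^ (1 / p₂ - 1 / r₂)) * J ^ (1 / p₂) := by
        rw [ENNReal.mul_rpow_of_nonneg _ _ ha₁, ENNReal.mul_rpow_of_nonneg _ _ ha₂,
          ENNReal.ofReal_rpow_of_pos hR₁, ENNReal.ofReal_rpow_of_pos hR₂]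
        ring
    _ ≤ _ := by
        gcongr
        exact le_self_add
end

section
/- (Sequence Nikol'skij–Plancherel–Polya inequality under a geometric rectangle condition, unmixed norms.) Let n ≥ 1, let 0 < p < r < ∞, let 0 < q < ∞, let A > 0, and let R₁, …, R_n > 1. Then there exists a constant c > 0 such that for every sequence (f_j)_{j∈ℕ} of Schwartz functions on ℝⁿ satisfying supp 𝓕f_j ⊆ [−A R₁^j, A R₁^j] × ⋯ × [−A R_n^j, A R_n^j] for all j, one has ‖(∑_{j=0}^∞ |f_j(·)|^q)^{1/q}‖_r ≤ c · ‖sup_{j∈ℕ} (∏_{k=1}^n R_k^{j(1/p − 1/r)}) |f_j(·)|‖_p, where both sides may be infinite. -/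
open scoped ENNReal NNReal FourierTransform SchwartzMap
open MeasureTheory

/-- diagonal scaling -/
noncomputable def dg {n : ℕ} (c : Fin n → ℝ) (hc : ∀ k, 0 < c k) :
    EuclideanSpace ℝ (Fin n) ≃L[ℝ] EuclideanSpace ℝ (Fin n) :=
  LinearEquiv.toContinuousLinearEquiv
  { toFun := fun x => WithLp.toLp 2 (fun k => c k * x k)
    invFun := fun x => WithLp.toLp 2 (fun k => (c k)⁻¹ * x k)
    map_add' := by intro x y; ext k; simp [mul_add]
    map_smul' := by intro m x; ext k; simp; ring
    left_inv := by intro x; ext k; simp [(hc k).ne']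
    right_inv := by intro x; ext k; simp [(hc k).ne'] }

lemma dg_apply {n : ℕ} (c : Fin n → ℝ) (hc : ∀ k, 0 < c k) (x k) : dg c hc x k = c k * x k := rfl
lemma dg_symm_apply {n : ℕ} (c : Fin n → ℝ) (hc : ∀ k, 0 < c k) (x k) :
    (dg c hc).symm x k = (c k)⁻¹ * x k := rfl

lemma dg_det {n : ℕ} (c : Fin n → ℝ) (hc : ∀ k, 0 < c k) :
    LinearMap.det ((dg c hc : EuclideanSpace ℝ (Fin n) →L[ℝ] EuclideanSpace ℝ (Fin n)) :
      EuclideanSpace ℝ (Fin n) →ₗ[ℝ] EuclideanSpace ℝ (Fin n)) = ∏ k, c k := by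
  rw [← Matrix.det_diagonal, ← LinearMap.det_toLin (EuclideanSpace.basisFun (Fin n) ℝ).toBasis]
  congr 1
  refine (EuclideanSpace.basisFun (Fin n) ℝ).toBasis.ext fun i => ?_
  ext k
  rw [Matrix.toLin_self]
  simp [dg_apply, Matrix.diagonal_apply]
  split_ifs with h
  · rw [h]
  · rfl

lemma dg_map {n : ℕ} (c : Fin n → ℝ) (hc : ∀ k, 0 < c k) :
    (volume : Measure (EuclideanSpace ℝ (Fin n))).map (dg c hc).toHomeomorph.toMeasurableEquiv
      = ENNReal.ofReal (∏ k, (c k)⁻¹) • volume := by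
  have := Measure.map_linearMap_addHaar_eq_smul_addHaar
    (volume : Measure (EuclideanSpace ℝ (Fin n)))
    (f := ((dg c hc : EuclideanSpace ℝ (Fin n) →L[ℝ] EuclideanSpace ℝ (Fin n)) :
      EuclideanSpace ℝ (Fin n) →ₗ[ℝ] EuclideanSpace ℝ (Fin n)))
    (by rw [dg_det]; exact (Finset.prod_pos fun k _ => hc k).ne')
  rw [dg_det, abs_of_nonneg (inv_nonneg.2 (Finset.prod_nonneg fun k _ => (hc k).le)),
    ← Finset.prod_inv_distrib] at this
  exact this

lemma dg_lint {n : ℕ} (c : Fin n → ℝ) (hc : ∀ k, 0 < c k) (g : EuclideanSpace ℝ (Fin n) → ℝ≥0∞) :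
    ∫⁻ x, g (dg c hc x) = ENNReal.ofReal (∏ k, (c k)⁻¹) * ∫⁻ x, g x := by
  have := lintegral_map_equiv g (dg c hc).toHomeomorph.toMeasurableEquiv (μ := volume)
  rw [dg_map, lintegral_smul_measure] at this
  exact this.symm

lemma dg_int {n : ℕ} (c : Fin n → ℝ) (hc : ∀ k, 0 < c k) (g : EuclideanSpace ℝ (Fin n) → ℂ) :
    ∫ x, g (dg c hc x) = (∏ k, (c k)⁻¹) • ∫ x, g x := by
  have := integral_map_equiv (μ := volume) (dg c hc).toHomeomorph.toMeasurableEquiv g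
  rw [dg_map, integral_smul_measure, ENNReal.toReal_ofReal
    (Finset.prod_nonneg fun k _ => (inv_pos.2 (hc k)).le)] at this
  exact this.symm

lemma dg_fourier {n : ℕ} (c : Fin n → ℝ) (hc : ∀ k, 0 < c k) (f : EuclideanSpace ℝ (Fin n) → ℂ) (ξ) :
    𝓕 (fun x => f (dg c hc x)) ξ = (∏ k, (c k)⁻¹) • 𝓕 f ((dg c hc).symm ξ) := by
  rw [Real.fourier_eq, Real.fourier_eq, ← dg_int c hc]
  congr 1
  ext x
  congr 3
  simp [PiLp.inner_apply, dg_apply, dg_symm_apply]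
  refine Finset.sum_congr rfl fun k _ => ?_
  field_simp [(hc k).ne']

/-- reproducing bound -/
lemma repro (n : ℕ) (A : ℝ) (hA : 0 < A) : ∃ ψ : 𝓢(EuclideanSpace ℝ (Fin n), ℂ),
    ∀ h : 𝓢(EuclideanSpace ℝ (Fin n), ℂ),
      (∀ ξ, 𝓕 (h : EuclideanSpace ℝ (Fin n) → ℂ) ξ ≠ 0 → ∀ k, |ξ k| ≤ A) →
      ∀ x, ‖h x‖ₑ ≤ ∫⁻ y, ‖h y‖ₑ * ‖ψ (y - x)‖ₑ := by
  have hr : 0 < A * Real.sqrt n + 1 := by positivity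
  let b : ContDiffBump (0 : EuclideanSpace ℝ (Fin n)) :=
    ⟨A * Real.sqrt n + 1, A * Real.sqrt n + 2, hr, by linarith⟩
  have hb : ∀ ξ : EuclideanSpace ℝ (Fin n), (∀ k, |ξ k| ≤ A) → b ξ = 1 := by
    intro ξ hξ
    apply b.one_of_mem_closedBall
    rw [mem_closedBall_zero_iff]
    show ‖ξ‖ ≤ A * Real.sqrt n + 1
    have : ‖ξ‖ ≤ A * Real.sqrt n := by
      rw [EuclideanSpace.norm_eq]
      have : A * Real.sqrt n = Real.sqrt (A ^ 2 * n) := by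
        rw [Real.sqrt_mul (by positivity), Real.sqrt_sq hA.le]
      rw [this]
      apply Real.sqrt_le_sqrt
      calc ∑ i, ‖ξ i‖ ^ 2 ≤ ∑ i : Fin n, A ^ 2 := by
            gcongr with i
            exact hξ i
        _ = _ := by simp [mul_comm]
    linarith
  let φ : 𝓢(EuclideanSpace ℝ (Fin n), ℂ) :=
    HasCompactSupport.toSchwartzMap (f := fun x => (b x : ℂ))
      (b.hasCompactSupport.comp_left (g := fun t : ℝ => (t : ℂ)) (by simp))
      (Complex.ofRealCLM.contDiff.comp b.contDiff)
  have hφ : ∀ ξ, φ ξ = (b ξ : ℂ) := fun ξ => rfl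
  refine ⟨𝓕 φ, fun h hh x => ?_⟩
  have e1 : h x = ∫ y, h y * (𝓕 φ) (y - x) := by
    have inv : h x = 𝓕⁻ (𝓕 (h : EuclideanSpace ℝ (Fin n) → ℂ)) x := by
      have := Continuous.fourierInv_fourier_eq h.continuous h.integrable
        (by rw [← SchwartzMap.fourier_coe]; exact (𝓕 h).integrable)
      rw [this]
    rw [inv, Real.fourierInv_eq]
    have i2 : Integrable (fun ξ => Real.fourierChar (inner ℝ ξ x) • φ ξ) := by
      simpa using (Real.fourierIntegral_convergent_iff (μ := volume) (-x)).2 φ.integrable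
    have key := VectorFourier.integral_fourierIntegral_smul_eq_flip (L := innerₗ (EuclideanSpace ℝ (Fin n)))
      (μ := volume) (ν := volume) (e := Real.fourierChar) Real.continuous_fourierChar continuous_inner
      h.integrable i2
    calc _ = ∫ ξ, 𝓕 (h : EuclideanSpace ℝ (Fin n) → ℂ) ξ • (Real.fourierChar (inner ℝ ξ x) • φ ξ) := by
          congr 1; ext ξ
          by_cases h0 : 𝓕 (h : EuclideanSpace ℝ (Fin n) → ℂ) ξ = 0
          · simp [h0]
          · rw [hφ, hb ξ (hh ξ h0)]; simp [Circle.smul_def, mul_comm]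
      _ = _ := key
      _ = _ := by
          congr 1; ext y
          rw [smul_eq_mul]
          congr 1
          rw [SchwartzMap.fourier_coe, Real.fourier_eq]
          simp only [VectorFourier.fourierIntegral]
          congr 1; ext ξ
          simp only [LinearMap.flip_apply, innerₗ_apply_apply, Circle.smul_def, smul_smul]
          rw [← Circle.coe_mul, ← AddChar.map_add_eq_mul, inner_sub_right, real_inner_comm]
          congr 3
          ring_nf
  rw [e1]
  refine (enorm_integral_le_lintegral_enorm _).trans_eq ?_
  simp [enorm_mul]

lemma unit_nik (n : ℕ) (A : ℝ) (hA : 0 < A) (p : ℝ) (hp : 0 < p) : ∃ C : ℝ≥0∞, C ≠ ∞ ∧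
    ∀ h : 𝓢(EuclideanSpace ℝ (Fin n), ℂ),
      (∀ ξ, 𝓕 (h : EuclideanSpace ℝ (Fin n) → ℂ) ξ ≠ 0 → ∀ k, |ξ k| ≤ A) →
      ∀ x, ‖h x‖ₑ ≤ C * (∫⁻ y, ‖h y‖ₑ ^ p) ^ (1 / p) := by
  obtain ⟨ψ, hψ⟩ := repro n A hA
  have bdd : ∀ f : 𝓢(EuclideanSpace ℝ (Fin n), ℂ), ∃ M : ℝ≥0∞, M ≠ ∞ ∧ ∀ x, ‖f x‖ₑ ≤ M := by
    intro f
    refine ⟨ENNReal.ofReal (SchwartzMap.seminorm ℝ 0 0 f), ENNReal.ofReal_ne_top, fun x => ?_⟩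
    rw [← ofReal_norm]
    exact ENNReal.ofReal_le_ofReal (SchwartzMap.norm_le_seminorm ℝ f x)
  rcases le_or_gt p 1 with hp1 | hp1
  · obtain ⟨K, hK, hKb⟩ := bdd ψ
    refine ⟨K ^ (1 / p), by simp [hK, hp.le, ENNReal.rpow_eq_top_iff, hp.not_gt], fun h hh x => ?_⟩
    obtain ⟨M', hM', hMb'⟩ := bdd h
    set M : ℝ≥0∞ := ⨆ y, ‖h y‖ₑ with hM
    have hMb : ∀ y, ‖h y‖ₑ ≤ M := fun y => le_iSup (fun y => ‖h y‖ₑ) y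
    have hMt : M ≠ ∞ := ((iSup_le hMb').trans_lt hM'.lt_top).ne
    set I := ∫⁻ y, ‖h y‖ₑ ^ p with hI
    have h1 : M ≤ M ^ (1 - p) * (K * I) := by
      refine iSup_le fun x => (hψ h hh x).trans ?_
      calc ∫⁻ y, ‖h y‖ₑ * ‖ψ (y - x)‖ₑ ≤ ∫⁻ y, (M ^ (1 - p) * K) * ‖h y‖ₑ ^ p := by
            refine lintegral_mono fun y => ?_
            calc ‖h y‖ₑ * ‖ψ (y - x)‖ₑ = ‖h y‖ₑ ^ (1 - p) * ‖h y‖ₑ ^ p * ‖ψ (y - x)‖ₑ := by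
                  rw [← ENNReal.rpow_add_of_nonneg _ _ (by linarith) hp.le]; simp
              _ ≤ M ^ (1 - p) * ‖h y‖ₑ ^ p * K := by
                  gcongr
                  · exact hMb y
                  · exact hKb _
              _ = _ := by ring
        _ = _ := by
            rw [lintegral_const_mul']
            · ring
            · exact ENNReal.mul_ne_top (ENNReal.rpow_ne_top_of_nonneg (by linarith) hMt) hK
    have h2 : M ^ p ≤ K * I := by
      by_cases hM0 : M = 0
      · rw [hM0, ENNReal.zero_rpow_of_pos hp]; exact zero_le
      · have h3 : M ^ (1 - p) ≠ 0 := by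
          simp [ENNReal.rpow_eq_zero_iff, hM0, hMt]
        have h4 : M ^ (1 - p) ≠ ∞ := ENNReal.rpow_ne_top_of_nonneg (by linarith) hMt
        refine (ENNReal.mul_le_mul_iff_right h3 h4).1 ?_
        rw [← ENNReal.rpow_add_of_nonneg _ _ (by linarith) hp.le]
        simpa using h1
    refine (hMb x).trans ?_
    rw [← ENNReal.mul_rpow_of_nonneg _ _ (by positivity)]
    rw [one_div]
    exact (ENNReal.le_rpow_inv_iff hp).2 h2
  · have hc : p.HolderConjugate (Real.conjExponent p) := Real.HolderConjugate.conjExponent hp1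
    set p' := Real.conjExponent p
    have hp' : 0 < p' := hc.symm.pos
    refine ⟨(∫⁻ y, ‖ψ y‖ₑ ^ p') ^ (1 / p'), ?_, fun h hh x => ?_⟩
    · have := (ψ.memLp (ENNReal.ofReal p') volume).eLpNorm_lt_top
      rw [eLpNorm_eq_lintegral_rpow_enorm_toReal (by simpa using hp') ENNReal.ofReal_ne_top,
        ENNReal.toReal_ofReal hp'.le] at this
      exact this.ne
    · refine (hψ h hh x).trans ?_
      have := ENNReal.lintegral_mul_le_Lp_mul_Lq (volume : Measure (EuclideanSpace ℝ (Fin n))) hc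
        (f := fun y => ‖h y‖ₑ) (g := fun y => ‖ψ (y - x)‖ₑ)
        h.continuous.enorm.aemeasurable
        ((ψ.continuous.comp (continuous_id.sub continuous_const)).enorm.aemeasurable)
      rw [lintegral_sub_right_eq_self (fun y => ‖ψ y‖ₑ ^ p') x] at this
      rw [mul_comm]
      exact this

lemma scaled_nik (n : ℕ) (A : ℝ) (hA : 0 < A) (p : ℝ) (hp : 0 < p) : ∃ C : ℝ≥0∞, C ≠ ∞ ∧
    ∀ (c : Fin n → ℝ), (∀ k, 0 < c k) → ∀ f : 𝓢(EuclideanSpace ℝ (Fin n), ℂ),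
      (∀ ξ, 𝓕 (f : EuclideanSpace ℝ (Fin n) → ℂ) ξ ≠ 0 → ∀ k, |ξ k| ≤ A * c k) →
      ∀ x, ‖f x‖ₑ ≤ C * (ENNReal.ofReal (∏ k, c k) ^ (1 / p) * (∫⁻ y, ‖f y‖ₑ ^ p) ^ (1 / p)) := by
  obtain ⟨C, hC, H⟩ := unit_nik n A hA p hp
  refine ⟨C, hC, fun c hc f hf x => ?_⟩
  have hc' : ∀ k, 0 < (c k)⁻¹ := fun k => inv_pos.2 (hc k)
  have := H (SchwartzMap.compCLMOfContinuousLinearEquiv ℂ (dg _ hc') f) ?_ ((dg _ hc').symm x)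
  · simp only [SchwartzMap.compCLMOfContinuousLinearEquiv_apply, Function.comp_apply,
      ContinuousLinearEquiv.apply_symm_apply] at this
    rw [dg_lint _ hc' (fun y => ‖f y‖ₑ ^ p), ENNReal.mul_rpow_of_nonneg _ _ (by positivity)] at this
    simpa using this
  · intro ξ hξ k
    have e : 𝓕 (fun x => f (dg _ hc' x)) ξ ≠ 0 := hξ
    rw [dg_fourier] at e
    have := hf _ (right_ne_zero_of_smul e) k
    rw [dg_symm_apply, inv_inv, abs_mul, abs_of_pos (hc k), mul_comm] at this
    exact le_of_mul_le_mul_right this (hc k)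

lemma sumbd (B δ : ℝ) (hB : 1 < B) (hδ : 0 < δ) : ∃ K : ℝ≥0∞, K ≠ ∞ ∧ ∀ u : ℝ,
    ∑' j : ℕ, ENNReal.ofReal (B ^ (-(δ * |(j : ℝ) - u|))) ≤ K := by
  have hB0 : 0 < B := by linarith
  have hρ : B ^ (-δ) < 1 := Real.rpow_lt_one_of_one_lt_of_neg hB (by linarith)
  have hρ0 : 0 ≤ B ^ (-δ) := by positivity
  have hs : Summable (fun i : ℤ => B ^ δ * (B ^ (-δ)) ^ i.natAbs) := by
    apply Summable.mul_left
    apply Summable.of_nat_of_neg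
    · simpa using summable_geometric_of_lt_one hρ0 hρ
    · simpa using summable_geometric_of_lt_one hρ0 hρ
  refine ⟨∑' i : ℤ, ENNReal.ofReal (B ^ δ * (B ^ (-δ)) ^ i.natAbs), hs.tsum_ofReal_ne_top, fun u => ?_⟩
  have hinj : Function.Injective (fun j : ℕ => (j : ℤ) - ⌊u⌋) := by
    intro a b h; simpa using h
  refine le_trans (ENNReal.tsum_le_tsum fun j => ?_)
    (ENNReal.tsum_comp_le_tsum_of_injective hinj _)
  apply ENNReal.ofReal_le_ofReal
  rw [← Real.rpow_natCast, ← Real.rpow_mul hB0.le, ← Real.rpow_add hB0]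
  apply Real.rpow_le_rpow_of_exponent_le hB.le
  have h1 : ((((j : ℤ) - ⌊u⌋).natAbs : ℕ) : ℝ) = |(j : ℝ) - ⌊u⌋| := by
    rw [Nat.cast_natAbs]; push_cast; rfl
  rw [h1]
  have h2 : |(j : ℝ) - ⌊u⌋| ≤ |(j : ℝ) - u| + 1 := by
    have := abs_sub_le (j : ℝ) u ⌊u⌋
    have h3 : |u - ⌊u⌋| ≤ 1 := by
      rw [abs_le]; constructor <;> linarith [Int.floor_le u, Int.lt_floor_add_one u]
    linarith
  nlinarith

lemma pwreal (B p r : ℝ) (hB : 1 < B) (hp : 0 < p) (hpr : p < r) (g H : ℝ) (hg : 0 < g) (hH : 0 < H)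
    (u : ℝ) (hu : u = p * (Real.log (g / H) / Real.log B)) (δ : ℝ) (h1 : δ ≤ 1 / r)
    (h2 : δ ≤ 1 / p - 1 / r) (a : ℝ) (j : ℕ) (ha1 : a ≤ H * B ^ ((j : ℝ) / r))
    (ha2 : B ^ ((j : ℝ) * (1 / p - 1 / r)) * a ≤ g) :
    a ≤ H * (g / H) ^ (p / r) * B ^ (-(δ * |(j : ℝ) - u|)) := by
  have hB0 : 0 < B := by linarith
  have hr : 0 < r := by linarith
  have hlB : 0 < Real.log B := Real.log_pos hB
  have ht : g / H = B ^ (u / p) := by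
    rw [Real.rpow_def_of_pos hB0, hu]
    have : Real.log B * (p * (Real.log (g / H) / Real.log B) / p) = Real.log (g / H) := by
      field_simp
    rw [this, Real.exp_log (by positivity)]
  have hg' : g = H * B ^ (u / p) := by rw [← ht]; field_simp
  rw [ht, ← Real.rpow_mul hB0.le, mul_assoc, ← Real.rpow_add hB0]
  have e : u / p * (p / r) = u / r := by field_simp
  rw [e]
  rcases le_total (j : ℝ) u with hj | hj
  · refine ha1.trans ?_
    gcongr
    · exact hB.le
    · rw [abs_of_nonpos (by linarith)]
      have : δ * (u - j) ≤ 1 / r * (u - j) := mul_le_mul_of_nonneg_right h1 (by linarith)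
      have e2 : u / r - j / r = 1 / r * (u - j) := by ring
      linarith
  · have : a ≤ g * B ^ (-((j : ℝ) * (1 / p - 1 / r))) := by
      rw [Real.rpow_neg hB0.le, ← div_eq_mul_inv, le_div_iff₀ (by positivity)]
      linarith
    refine this.trans ?_
    rw [hg', mul_assoc, ← Real.rpow_add hB0]
    refine mul_le_mul_of_nonneg_left (Real.rpow_le_rpow_of_exponent_le hB.le ?_) hH.le
    · rw [abs_of_nonneg (by linarith)]
      have : δ * (j - u) ≤ (1 / p - 1 / r) * (j - u) := mul_le_mul_of_nonneg_right h2 (by linarith)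
      have e2 : u / p + -(j * (1 / p - 1 / r)) = u / r - (1 / p - 1 / r) * (j - u) := by ring
      linarith

lemma pw (B p r q : ℝ) (hB : 1 < B) (hp : 0 < p) (hpr : p < r) (hq : 0 < q) :
    ∃ K : ℝ≥0∞, K ≠ ∞ ∧ ∀ g H : ℝ≥0∞, H ≠ 0 → H ≠ ∞ → ∀ a : ℕ → ℝ≥0∞,
      (∀ j : ℕ, a j ≤ H * ENNReal.ofReal (B ^ ((j : ℝ) / r))) →
      (∀ j : ℕ, ENNReal.ofReal (B ^ ((j : ℝ) * (1 / p - 1 / r))) * a j ≤ g) →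
      (∑' j, a j ^ q) ^ (r / q) ≤ K * H ^ (r - p) * g ^ p := by
  have hB0 : 0 < B := by linarith
  have hr : 0 < r := by linarith
  have hσ : 0 < 1 / p - 1 / r := by
    have := one_div_lt_one_div_of_lt hp hpr; linarith
  set δ := min (1 / r) (1 / p - 1 / r) with hδ
  have hδ0 : 0 < δ := lt_min (by positivity) hσ
  obtain ⟨K, hK, hKb⟩ := sumbd B (δ * q) hB (by positivity)
  refine ⟨(K + 1) ^ (r / q), ENNReal.rpow_ne_top_of_nonneg (by positivity) (by simp [hK]),
    fun g H hH0 hHt a h1 h2 => ?_⟩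
  by_cases hg0 : g = 0
  · have : ∀ j, a j = 0 := by
      intro j
      have := h2 j
      rw [hg0, nonpos_iff_eq_zero, mul_eq_zero] at this
      rcases this with h | h
      · have h' : 0 < B ^ ((j : ℝ) * (1 / p - 1 / r)) := by positivity
        exact absurd h (by simpa using h')
      · exact h
    simp [this, hq, hr, div_pos]
  by_cases hgt : g = ∞
  · have hHp : H ^ (r - p) ≠ 0 := by
      simp [ENNReal.rpow_eq_zero_iff, hH0, hHt]
    have hKp : (K + 1) ^ (r / q) ≠ 0 := by
      rw [Ne, ENNReal.rpow_eq_zero_iff]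
      simp [hK]
    rw [hgt, ENNReal.top_rpow_of_pos hp, ENNReal.mul_top (mul_ne_zero hKp hHp)]
    exact le_top
  lift g to ℝ≥0 using hgt
  lift H to ℝ≥0 using hHt
  have hg : 0 < (g : ℝ) := by
    have : g ≠ 0 := by simpa using hg0
    positivity
  have hH : 0 < (H : ℝ) := by
    have : H ≠ 0 := by simpa using hH0
    positivity
  have hat : ∀ j, a j ≠ ∞ := fun j =>
    ((h1 j).trans_lt (ENNReal.mul_lt_top ENNReal.coe_lt_top ENNReal.ofReal_lt_top)).ne
  have hHe : (H : ℝ≥0∞) = ENNReal.ofReal H := by simp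
  have hge : (g : ℝ≥0∞) = ENNReal.ofReal g := by simp
  set T : ℝ := H * ((g : ℝ) / H) ^ (p / r) with hT
  have hT0 : 0 < T := by positivity
  set u := p * (Real.log ((g : ℝ) / H) / Real.log B) with hu
  have hb : ∀ j, a j ^ q ≤ ENNReal.ofReal T ^ q * ENNReal.ofReal (B ^ (-(δ * q * |(j : ℝ) - u|))) := by
    intro j
    have ha : a j = ENNReal.ofReal (a j).toReal := (ENNReal.ofReal_toReal (hat j)).symm
    have := pwreal B p r hB hp hpr g H hg hH u hu δ (min_le_left _ _) (min_le_right _ _) (a j).toReal j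
      (by
        have := h1 j
        rw [ha, hHe, ← ENNReal.ofReal_mul hH.le, ENNReal.ofReal_le_ofReal_iff (by positivity)] at this
        exact this)
      (by
        have := h2 j
        rw [ha, hge, ← ENNReal.ofReal_mul (by positivity), ENNReal.ofReal_le_ofReal_iff (by positivity)] at this
        exact this)
    rw [ha, ENNReal.ofReal_rpow_of_nonneg (by positivity) hq.le,
      ENNReal.ofReal_rpow_of_nonneg hT0.le hq.le, ← ENNReal.ofReal_mul (by positivity)]
    apply ENNReal.ofReal_le_ofReal
    refine (Real.rpow_le_rpow (by positivity) this hq.le).trans_eq ?_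
    rw [Real.mul_rpow hT0.le (by positivity), ← Real.rpow_mul hB0.le]
    congr 2
    ring
  calc (∑' j, a j ^ q) ^ (r / q)
      ≤ (ENNReal.ofReal T ^ q * (K + 1)) ^ (r / q) := by
        gcongr
        refine (ENNReal.tsum_le_tsum hb).trans ?_
        rw [ENNReal.tsum_mul_left]
        gcongr
        exact (hKb u).trans le_self_add
    _ = (K + 1) ^ (r / q) * ENNReal.ofReal T ^ r := by
        rw [ENNReal.mul_rpow_of_nonneg _ _ (by positivity), ← ENNReal.rpow_mul, mul_comm]
        congr 2
        field_simp
    _ = _ := by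
        rw [mul_assoc]
        congr 1
        rw [hHe, hge, ENNReal.ofReal_rpow_of_nonneg hT0.le hr.le, ENNReal.ofReal_rpow_of_pos hH,
          ENNReal.ofReal_rpow_of_pos hg, ← ENNReal.ofReal_mul (by positivity)]
        congr 1
        rw [hT, Real.mul_rpow (by positivity) (by positivity), ← Real.rpow_mul (by positivity),
          div_mul_cancel₀ _ hr.ne', Real.div_rpow hg.le hH.le, Real.rpow_sub hH]
        ring

theorem stmt7 (n : ℕ) (hn : 1 ≤ n) (p r q : ℝ) (hp : 0 < p) (hpr : p < r)
    (hq : 0 < q) (A : ℝ) (hA : 0 < A) (R : Fin n → ℝ) (hR : ∀ k, 1 < R k) :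
    ∃ c : ℝ≥0∞, 0 < c ∧ c ≠ ∞ ∧
      ∀ f : ℕ → 𝓢(EuclideanSpace ℝ (Fin n), ℂ),
        (∀ j : ℕ, Function.support (𝓕 (f j : EuclideanSpace ℝ (Fin n) → ℂ))
          ⊆ {ξ : EuclideanSpace ℝ (Fin n) | ∀ k : Fin n, |ξ k| ≤ A * R k ^ (j:ℝ)}) →
        (∫⁻ x : EuclideanSpace ℝ (Fin n),
            (∑' j : ℕ, (‖f j x‖₊ : ℝ≥0∞) ^ q) ^ (r / q)) ^ (1 / r)
          ≤ c * (∫⁻ x : EuclideanSpace ℝ (Fin n),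
              (⨆ j : ℕ, (∏ k : Fin n, ENNReal.ofReal (R k ^ ((j:ℝ) * (1 / p - 1 / r))))
                * (‖f j x‖₊ : ℝ≥0∞)) ^ p) ^ (1 / p) := by
  have hr : 0 < r := by linarith
  have hR0 : ∀ k, 0 < R k := fun k => by linarith [hR k]
  set B := ∏ k, R k with hBdef
  have hB : 1 < B := by
    have : Nonempty (Fin n) := ⟨⟨0, hn⟩⟩
    calc (1 : ℝ) = ∏ k : Fin n, (1 : ℝ) := by simp
      _ < B := Finset.prod_lt_prod_of_nonempty (by simp) (fun k _ => hR k) Finset.univ_nonempty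
  have hB0 : 0 < B := by linarith
  have hprod : ∀ s : ℝ, ∏ k, R k ^ s = B ^ s := fun s =>
    Real.finsetProd_rpow _ _ (fun k _ => (hR0 k).le) s
  have hprodE : ∀ s : ℝ, ∏ k, ENNReal.ofReal (R k ^ s) = ENNReal.ofReal (B ^ s) := fun s => by
    rw [← hprod, ENNReal.ofReal_prod_of_nonneg]
    intro k _
    exact Real.rpow_nonneg (hR0 k).le _
  obtain ⟨C, hC, hnik⟩ := scaled_nik n A hA p hp
  obtain ⟨K, hK, hpw⟩ := pw B p r q hB hp hpr hq
  set L := (K * (C + 1) ^ (r - p)) ^ (1 / r) with hL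
  have hKC : K * (C + 1) ^ (r - p) ≠ ∞ :=
    ENNReal.mul_ne_top hK (ENNReal.rpow_ne_top_of_nonneg (by linarith) (by simp [hC]))
  refine ⟨L + 1, by positivity, ?_, fun f hf => ?_⟩
  · exact ENNReal.add_ne_top.2 ⟨ENNReal.rpow_ne_top_of_nonneg (by positivity) hKC, by simp⟩
  simp only [hprodE]
  set g : EuclideanSpace ℝ (Fin n) → ℝ≥0∞ := fun x =>
    ⨆ j : ℕ, ENNReal.ofReal (B ^ ((j:ℝ) * (1 / p - 1 / r))) * (‖f j x‖₊ : ℝ≥0∞) with hg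
  change _ ≤ (L + 1) * (∫⁻ x, g x ^ p) ^ (1 / p)
  set G := (∫⁻ x, g x ^ p) ^ (1 / p) with hG
  have hgb : ∀ (j : ℕ) x, ENNReal.ofReal (B ^ ((j:ℝ) * (1 / p - 1 / r))) * ‖f j x‖ₑ ≤ g x := fun j x =>
    le_iSup (fun j : ℕ => ENNReal.ofReal (B ^ ((j:ℝ) * (1 / p - 1 / r))) * ‖f j x‖ₑ) j
  have hsup : ∀ (j : ℕ) x, ‖f j x‖ₑ ≤ (C * G) * ENNReal.ofReal (B ^ ((j : ℝ) / r)) := by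
    intro j x
    refine (hnik (fun k => R k ^ (j : ℝ)) (fun k => Real.rpow_pos_of_pos (hR0 k) _) (f j)
      (fun ξ hξ => hf j hξ) x).trans ?_
    rw [hprod, mul_assoc]
    refine mul_le_mul_right ?_ C
    have h1 : (∫⁻ y, ‖f j y‖ₑ ^ p) ^ (1 / p)
        ≤ ENNReal.ofReal (B ^ (-((j:ℝ) * (1 / p - 1 / r)))) * G := by
      have : ∫⁻ y, ‖f j y‖ₑ ^ p ≤
          ENNReal.ofReal (B ^ (-((j:ℝ) * (1 / p - 1 / r)))) ^ p * ∫⁻ x, g x ^ p := by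
        rw [← lintegral_const_mul' _ _ (ENNReal.rpow_ne_top_of_nonneg hp.le ENNReal.ofReal_ne_top)]
        refine lintegral_mono fun y => ?_
        rw [← ENNReal.mul_rpow_of_nonneg _ _ hp.le]
        gcongr
        calc ‖f j y‖ₑ = ENNReal.ofReal (B ^ (-((j:ℝ) * (1 / p - 1 / r)))) *
              (ENNReal.ofReal (B ^ ((j:ℝ) * (1 / p - 1 / r))) * ‖f j y‖ₑ) := by
              rw [← mul_assoc, ← ENNReal.ofReal_mul (by positivity), ← Real.rpow_add hB0]
              simp
          _ ≤ _ := by gcongr; exact hgb j y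
      calc _ ≤ (ENNReal.ofReal (B ^ (-((j:ℝ) * (1 / p - 1 / r)))) ^ p * ∫⁻ x, g x ^ p) ^ (1 / p) := by
            gcongr
        _ = _ := by
            rw [ENNReal.mul_rpow_of_nonneg _ _ (by positivity), ← ENNReal.rpow_mul,
              mul_one_div_cancel hp.ne', ENNReal.rpow_one]
    calc _ ≤ ENNReal.ofReal (B ^ (j : ℝ)) ^ (1 / p) *
          (ENNReal.ofReal (B ^ (-((j:ℝ) * (1 / p - 1 / r)))) * G) := by gcongr
      _ = _ := by
          rw [ENNReal.ofReal_rpow_of_nonneg (by positivity) (by positivity), ← mul_assoc,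
            ← ENNReal.ofReal_mul (by positivity), ← Real.rpow_mul hB0.le, ← Real.rpow_add hB0, mul_comm]
          congr 3
          ring
  by_cases hGt : G = ∞
  · rw [hGt, ENNReal.mul_top (by positivity)]; exact le_top
  by_cases hG0 : G = 0
  · have : ∀ j x, ‖f j x‖₊ = 0 := by
      intro j x
      have := hsup j x
      simpa [hG0] using this
    simp [this, hq, hr, div_pos]
  have hpt : ∀ x, (∑' j : ℕ, (‖f j x‖₊ : ℝ≥0∞) ^ q) ^ (r / q)
      ≤ K * ((C + 1) * G) ^ (r - p) * g x ^ p := by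
    intro x
    refine hpw (g x) ((C + 1) * G) (mul_ne_zero (by positivity) hG0)
      (ENNReal.mul_ne_top (by simp [hC]) hGt) (fun j => ‖f j x‖ₑ) (fun j => (hsup j x).trans ?_)
      (fun j => hgb j x)
    gcongr
    exact le_self_add
  have hGp : ∫⁻ x, g x ^ p = G ^ p := by
    rw [hG, ← ENNReal.rpow_mul, one_div_mul_cancel hp.ne', ENNReal.rpow_one]
  calc _ ≤ (K * ((C + 1) * G) ^ (r - p) * G ^ p) ^ (1 / r) := by
        gcongr
        rw [← hGp, ← lintegral_const_mul']
        · exact lintegral_mono hpt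
        · exact ENNReal.mul_ne_top hK (ENNReal.rpow_ne_top_of_nonneg (by linarith)
            (ENNReal.mul_ne_top (by simp [hC]) hGt))
    _ = L * G := by
        rw [ENNReal.mul_rpow_of_nonneg _ _ (by linarith : 0 ≤ r - p), mul_assoc, mul_assoc,
          ← ENNReal.rpow_add_of_nonneg _ _ (by linarith) hp.le, sub_add_cancel, ← mul_assoc,
          ENNReal.mul_rpow_of_nonneg _ _ (by positivity), ← ENNReal.rpow_mul,
          mul_one_div_cancel hr.ne', ENNReal.rpow_one]
    _ ≤ _ := by gcongr; exact le_self_add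
end

section
/- (Sequence Nikol'skij–Plancherel–Polya inequality with mixed norms in two variables.) Let 0 < p₁ ≤ r₁ < ∞ and 0 < p₂ ≤ r₂ < ∞ with (p₁,p₂) ≠ (r₁,r₂), let 0 < q < ∞, let A > 0, and let R₁, R₂ > 1. Then there exists a constant c > 0 such that for every sequence (f_j)_{j∈ℕ} of Schwartz functions on ℝ² satisfying supp 𝓕f_j ⊆ [−A R₁^j, A R₁^j] × [−A R₂^j, A R₂^j] for all j, one has (∫_ℝ (∫_ℝ (∑_{j=0}^∞ |f_j(x₁,x₂)|^q)^{r₁/q} dx₁)^{r₂/r₁} dx₂)^{1/r₂} ≤ c · (∫_ℝ (∫_ℝ (sup_{j∈ℕ} R₁^{j(1/p₁ − 1/r₁)} R₂^{j(1/p₂ − 1/r₂)} |f_j(x₁,x₂)|)^{p₁} dx₁)^{p₂/p₁} dx₂)^{1/p₂}, where both sides may be infinite. -/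
open scoped ENNReal NNReal FourierTransform SchwartzMap
open MeasureTheory

lemma exists_kernel : ∃ φ : 𝓢(ℝ, ℂ), ∀ η : ℝ, |η| ≤ 1 → 𝓕 (φ : ℝ → ℂ) η = 1 := by
  let b : ContDiffBump (0 : ℝ) := ⟨1, 2, by norm_num, by norm_num⟩
  have h1 : HasCompactSupport (fun x : ℝ => ((b x : ℝ) : ℂ)) :=
    b.hasCompactSupport.comp_left (g := fun x : ℝ => (x : ℂ)) (by simp)
  have h2 : ContDiff ℝ (⊤ : ℕ∞) (fun x : ℝ => ((b x : ℝ) : ℂ)) :=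
    Complex.ofRealCLM.contDiff.comp b.contDiff
  let ψ : 𝓢(ℝ, ℂ) := h1.toSchwartzMap h2
  refine ⟨𝓕⁻ ψ, fun η hη => ?_⟩
  rw [← SchwartzMap.fourier_coe, FourierTransform.fourier_fourierInv_eq]
  have : b η = 1 := b.one_of_mem_closedBall (by simpa [b] using hη)
  simp [ψ, this]

lemma repro_s8 (φ : 𝓢(ℝ, ℂ)) (hφ : ∀ η : ℝ, |η| ≤ 1 → 𝓕 (φ : ℝ → ℂ) η = 1)
    (f : 𝓢(EuclideanSpace ℝ (Fin 2), ℂ)) (i : Fin 2) (B : ℝ) (hB : 0 < B)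
    (hs : ∀ ξ, 𝓕 (f : EuclideanSpace ℝ (Fin 2) → ℂ) ξ ≠ 0 → |ξ i| ≤ B)
    (x : EuclideanSpace ℝ (Fin 2)) :
    f x = ∫ t : ℝ, ((B : ℂ) * φ (B * t)) * f (x - t • EuclideanSpace.single i (1:ℝ)) := by
  have inv : ∀ y, f y = ∫ ξ, Complex.exp (((2 * Real.pi * inner ℝ ξ y : ℝ) : ℂ) * Complex.I)
      * 𝓕 (f : EuclideanSpace ℝ (Fin 2) → ℂ) ξ := by
    intro y
    have h : (𝓕⁻ (𝓕 f : 𝓢(EuclideanSpace ℝ (Fin 2), ℂ)) : 𝓢(EuclideanSpace ℝ (Fin 2), ℂ)) = f :=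
      FourierTransform.fourierInv_fourier_eq f
    conv_lhs => rw [← h]
    rw [SchwartzMap.fourierInv_coe, SchwartzMap.fourier_coe, Real.fourierInv_eq']
    simp only [smul_eq_mul]
  have hFint : Integrable (fun ξ => 𝓕 (f : EuclideanSpace ℝ (Fin 2) → ℂ) ξ) := by
    have := (𝓕 f).integrable (μ := volume)
    rwa [SchwartzMap.fourier_coe] at this
  have hc : Continuous (fun ξ => 𝓕 (f : EuclideanSpace ℝ (Fin 2) → ℂ) ξ) := by
    have := (𝓕 f).continuous
    rwa [SchwartzMap.fourier_coe] at this
  have hφi : Integrable (fun t : ℝ => (B : ℂ) * φ (B * t)) :=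
    ((φ.integrable (μ := volume)).comp_mul_left' hB.ne').const_mul _
  have scale : ∀ η : ℝ, |η| ≤ B →
      ∫ t : ℝ, Complex.exp (((-2 * Real.pi * t * η : ℝ) : ℂ) * Complex.I) * ((B : ℂ) * φ (B * t)) = 1 := by
    intro η hη
    have h := hφ (η / B) (by rw [abs_div, abs_of_pos hB, div_le_one hB]; exact hη)
    rw [Real.fourier_real_eq_integral_exp_smul] at h
    have h2 := Measure.integral_comp_mul_left (fun v : ℝ => Complex.exp (((-2 * Real.pi * v * (η / B) : ℝ) : ℂ) * Complex.I) • φ v) B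
    rw [h] at h2
    have h3 : ∀ t : ℝ, Complex.exp (((-2 * Real.pi * t * η : ℝ) : ℂ) * Complex.I) * ((B : ℂ) * φ (B * t))
       = (B : ℂ) * (Complex.exp (((-2 * Real.pi * (B * t) * (η / B) : ℝ) : ℂ) * Complex.I) • φ (B * t)) := by
      intro t
      have : -2 * Real.pi * (B * t) * (η / B) = -2 * Real.pi * t * η := by field_simp
      rw [this, smul_eq_mul]; ring
    simp_rw [h3]
    rw [integral_const_mul, h2, abs_of_pos (inv_pos.2 hB), Complex.real_smul]
    have : (B : ℂ) ≠ 0 := by exact_mod_cast hB.ne'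
    push_cast
    field_simp
  have key : ∀ t : ℝ, ((B : ℂ) * φ (B * t)) * f (x - t • EuclideanSpace.single i (1:ℝ))
      = ∫ ξ, ((B : ℂ) * φ (B * t)) * (Complex.exp (((2 * Real.pi * inner ℝ ξ (x - t • EuclideanSpace.single i (1:ℝ)) : ℝ) : ℂ) * Complex.I)
      * 𝓕 (f : EuclideanSpace ℝ (Fin 2) → ℂ) ξ) := by
    intro t
    rw [integral_const_mul, ← inv]
  simp_rw [key]
  rw [integral_integral_swap]
  · rw [inv x]
    congr 1
    ext ξ
    by_cases h0 : 𝓕 (f : EuclideanSpace ℝ (Fin 2) → ℂ) ξ = 0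
    · simp [h0]
    have := scale (ξ i) (hs ξ h0)
    have e : ∀ t : ℝ, ((B : ℂ) * φ (B * t)) * (Complex.exp (((2 * Real.pi * inner ℝ ξ (x - t • EuclideanSpace.single i (1:ℝ)) : ℝ) : ℂ) * Complex.I)
      * 𝓕 (f : EuclideanSpace ℝ (Fin 2) → ℂ) ξ) =
      (Complex.exp (((2 * Real.pi * inner ℝ ξ x : ℝ) : ℂ) * Complex.I)
      * 𝓕 (f : EuclideanSpace ℝ (Fin 2) → ℂ) ξ) * (Complex.exp (((-2 * Real.pi * t * ξ i : ℝ) : ℂ) * Complex.I) * ((B : ℂ) * φ (B * t))) := by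
      intro t
      have : inner ℝ ξ (x - t • EuclideanSpace.single i (1:ℝ)) = inner ℝ ξ x - t * ξ i := by
        rw [inner_sub_right, inner_smul_right, EuclideanSpace.inner_single_right]; simp
      rw [this]
      have : (((2 * Real.pi * (inner ℝ ξ x - t * ξ i) : ℝ) : ℂ) * Complex.I) =
        (((2 * Real.pi * inner ℝ ξ x : ℝ) : ℂ) * Complex.I) + (((-2 * Real.pi * t * ξ i : ℝ) : ℂ) * Complex.I) := by
        push_cast; ring
      rw [this, Complex.exp_add]; ring
    simp_rw [e]
    rw [integral_const_mul, this, mul_one]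
  · refine (hφi.mul_prod hFint).mono ?_ ?_
    · apply Continuous.aestronglyMeasurable
      have := φ.continuous
      simp only [Function.uncurry_def]
      fun_prop
    · refine Filter.Eventually.of_forall fun z => ?_
      simp only [Function.uncurry_def, norm_mul]
      rw [Complex.norm_exp_ofReal_mul_I, one_mul]

noncomputable def wt (B t : ℝ) : ℝ≥0∞ := ENNReal.ofReal ((1 + B * |t|)⁻¹)

lemma schwartz_decay {E : Type*} [NormedAddCommGroup E] [NormedSpace ℝ E] (φ : 𝓢(E, ℂ)) (n : ℕ) :
    ∃ K : ℝ, 0 < K ∧ ∀ t, ‖φ t‖ ≤ K * ((1 + ‖t‖)⁻¹) ^ n := by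
  refine ⟨2 ^ n * ((Finset.Iic ((n, 0) : ℕ × ℕ)).sup fun m => SchwartzMap.seminorm ℝ m.1 m.2) φ + 1, by positivity, fun t => ?_⟩
  have := SchwartzMap.one_add_le_sup_seminorm_apply (𝕜 := ℝ) (m := (n, 0)) (k := n) (n := 0) le_rfl le_rfl φ t
  rw [norm_iteratedFDeriv_zero] at this
  rw [inv_pow, ← div_eq_mul_inv, le_div_iff₀ (by positivity), mul_comm]
  exact this.trans (by simp)

/-- slice kernel bound -/
lemma slice_bound (n : ℕ) : ∃ K : ℝ≥0∞, K ≠ ∞ ∧ ∀ (f : 𝓢(EuclideanSpace ℝ (Fin 2), ℂ)) (i : Fin 2)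
    (B : ℝ), 0 < B → (∀ ξ, 𝓕 (f : EuclideanSpace ℝ (Fin 2) → ℂ) ξ ≠ 0 → |ξ i| ≤ B) →
    ∀ x, ‖f x‖ₑ ≤ K * ENNReal.ofReal B *
      ∫⁻ t : ℝ, wt B t ^ n * ‖f (x - t • EuclideanSpace.single i (1:ℝ))‖ₑ := by
  obtain ⟨φ, hφ⟩ := exists_kernel
  obtain ⟨K, hK, hd⟩ := schwartz_decay φ n
  refine ⟨ENNReal.ofReal K, ENNReal.ofReal_ne_top, fun f i B hB hs x => ?_⟩
  conv_lhs => rw [repro_s8 φ hφ f i B hB hs x]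
  refine (enorm_integral_le_lintegral_enorm _).trans ?_
  rw [← lintegral_const_mul' _ _ (by finiteness)]
  refine lintegral_mono fun t => ?_
  simp only [enorm_mul]
  rw [← mul_assoc, mul_comm (ENNReal.ofReal K), mul_assoc (ENNReal.ofReal B)]
  gcongr
  · rw [← ofReal_norm, Complex.norm_real, Real.norm_of_nonneg hB.le]
  · rw [← ofReal_norm, wt, ← ENNReal.ofReal_pow (by positivity), ← ENNReal.ofReal_mul hK.le]
    apply ENNReal.ofReal_le_ofReal
    refine (hd _).trans (le_of_eq ?_)
    rw [Real.norm_eq_abs, abs_mul, abs_of_pos hB]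

lemma boot {M K : ℝ≥0∞} {s : ℝ} (hM : M ≠ ∞) (hs : 0 < s) (hs1 : s ≤ 1)
    (h : M ≤ M ^ (1 - s) * K) : M ^ s ≤ K := by
  rcases eq_or_ne M 0 with rfl | h0
  · simp [hs]
  have h1 : M ^ (1 - s) * M ^ s = M := by
    rw [← ENNReal.rpow_add_of_nonneg _ _ (by linarith) hs.le]; simp
  have h2 : M ^ (1 - s) * M ^ s ≤ M ^ (1 - s) * K := by rwa [h1]
  refine (ENNReal.mul_le_mul_iff_right ?_ ?_).1 h2
  · simp [ENNReal.rpow_eq_zero_iff, h0, hM]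
  · simp [ENNReal.rpow_eq_top_iff, h0, hM]

lemma split_rpow {M a : ℝ≥0∞} {s : ℝ} (hs : 0 < s) (hs1 : s ≤ 1) (h : a ≤ M) :
    a ≤ M ^ (1 - s) * a ^ s := by
  calc a = a ^ (1 - s) * a ^ s := by
        rw [← ENNReal.rpow_add_of_nonneg _ _ (by linarith) hs.le]; simp
    _ ≤ _ := by gcongr

lemma wt_le_one {B : ℝ} (hB : 0 < B) (t : ℝ) : wt B t ≤ 1 := by
  rw [wt, ← ENNReal.ofReal_one]
  apply ENNReal.ofReal_le_ofReal
  apply inv_le_one_of_one_le₀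
  have := abs_nonneg t
  nlinarith [mul_nonneg hB.le this]

lemma wt_mul {B : ℝ} (hB : 0 < B) (x z w : ℝ) : wt B (x - z) * wt B (z - w) ≤ wt B (x - w) := by
  rw [wt, wt, wt, ← ENNReal.ofReal_mul (by positivity), ← mul_inv]
  apply ENNReal.ofReal_le_ofReal
  apply inv_anti₀ (by positivity)
  have h := abs_sub_le x z w
  nlinarith [mul_le_mul_of_nonneg_left h hB.le, mul_nonneg (mul_nonneg hB.le (abs_nonneg (x - z))) (mul_nonneg hB.le (abs_nonneg (z - w)))]

lemma wt_meas (B : ℝ) : Measurable (wt B) := by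
  unfold wt; fun_prop

lemma wt_int_fin : ∫⁻ t : ℝ, wt 1 t ^ 2 ≠ ∞ := by
  have := finite_integral_one_add_norm (E := ℝ) (μ := volume) (r := 2) (by simp)
  refine ne_of_lt (lt_of_le_of_lt (lintegral_mono fun t => ?_) this)
  rw [wt, ← ENNReal.ofReal_pow (by positivity)]
  apply ENNReal.ofReal_le_ofReal
  rw [Real.rpow_neg (by positivity), Real.norm_eq_abs]
  simp

lemma wt_int {B : ℝ} (hB : 0 < B) (x : ℝ) :
    ENNReal.ofReal B * ∫⁻ t : ℝ, wt B (x - t) ^ 2 = ∫⁻ t : ℝ, wt 1 t ^ 2 := by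
  rw [lintegral_sub_left_eq_self (fun t => wt B t ^ 2) x]
  have h := Real.smul_map_volume_mul_left hB.ne'
  have hm : Measurable (fun t => wt 1 t ^ 2) := (wt_meas 1).pow_const 2
  conv_rhs => rw [← h]
  rw [lintegral_smul_measure, lintegral_map hm (by fun_prop), abs_of_pos hB, smul_eq_mul]
  congr 2
  ext t
  simp [wt, abs_mul, abs_of_pos hB]

lemma jensen {w h : ℝ → ℝ≥0∞} (hw : Measurable w) (hh : Measurable h)
    {t : ℝ} (ht : 1 ≤ t) :
    (∫⁻ x, w x * h x) ^ t ≤ (∫⁻ x, w x) ^ (t - 1) * ∫⁻ x, w x * h x ^ t := by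
  rcases ht.eq_or_lt with rfl | ht
  · simp
  have hc : t.HolderConjugate t.conjExponent := Real.HolderConjugate.conjExponent ht
  have ht0 : 0 < t := by linarith
  have hc0 := hc.symm.pos
  have hadd : 1 / t + 1 / t.conjExponent = 1 := by
    have := hc.inv_add_inv_eq_one; simpa using this
  have := ENNReal.lintegral_mul_le_Lp_mul_Lq volume hc (f := fun x => w x ^ (1 / t) * h x)
    (g := fun x => w x ^ (1 / t.conjExponent)) (by fun_prop) (by fun_prop)
  have e1 : ∀ x, ((fun x => w x ^ (1 / t) * h x) * fun x => w x ^ (1 / t.conjExponent)) x = w x * h x := by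
    intro x
    simp only [Pi.mul_apply]
    rw [mul_right_comm, ← ENNReal.rpow_add_of_nonneg _ _ (by positivity) (by positivity), hadd, ENNReal.rpow_one]
  have e2 : ∀ x, (w x ^ (1 / t) * h x) ^ t = w x * h x ^ t := by
    intro x
    rw [ENNReal.mul_rpow_of_nonneg _ _ ht0.le, ← ENNReal.rpow_mul, one_div_mul_cancel ht0.ne', ENNReal.rpow_one]
  have e3 : ∀ x, (w x ^ (1 / t.conjExponent)) ^ t.conjExponent = w x := by
    intro x
    rw [← ENNReal.rpow_mul, one_div_mul_cancel hc0.ne', ENNReal.rpow_one]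
  simp_rw [e1, e2, e3] at this
  have h2 := ENNReal.rpow_le_rpow this ht0.le
  rw [ENNReal.mul_rpow_of_nonneg _ _ ht0.le, ← ENNReal.rpow_mul, one_div_mul_cancel ht0.ne', ENNReal.rpow_one,
    ← ENNReal.rpow_mul] at h2
  rw [mul_comm]
  convert h2 using 3
  have : 1 / t.conjExponent = 1 - 1 / t := by linarith
  rw [this]
  field_simp

lemma peetre {s : ℝ} (hs : 0 < s) (hs1 : s ≤ 1) {n : ℕ} (hn : 2 ≤ n * s) {B : ℝ} (hB : 0 < B)
    {L D : ℝ≥0∞} (hD : D ≠ ∞) (h : ℝ → ℝ≥0∞) (hb : ∀ x, h x ≤ D)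
    (hr : ∀ x, h x ≤ L * ∫⁻ w, wt B (x - w) ^ n * h w) (x : ℝ) :
    h x ^ s ≤ L * ∫⁻ w, wt B (x - w) ^ 2 * h w ^ s := by
  set M := ⨆ z, wt B (x - z) ^ n * h z with hM
  have hM1 : ∀ z, wt B (x - z) ^ n * h z ≤ M := fun z => le_iSup (fun z => wt B (x - z) ^ n * h z) z
  have hMD : M ≤ D := iSup_le fun z => by
    calc wt B (x - z) ^ n * h z ≤ 1 * D := by
          gcongr
          · exact pow_le_one₀ zero_le (wt_le_one hB _)
          · exact hb z
      _ = D := one_mul D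
  have hMt : M ≠ ∞ := ne_top_of_le_ne_top hD hMD
  have hx : h x ≤ M := by
    refine le_trans ?_ (hM1 x)
    simp [wt]
  refine (ENNReal.rpow_le_rpow hx hs.le).trans (boot hMt hs hs1 ?_)
  have hMs : M ^ (1 - s) ≠ ∞ := by
    apply ENNReal.rpow_ne_top_of_nonneg (by linarith) hMt
  refine iSup_le fun z => ?_
  calc wt B (x - z) ^ n * h z ≤ wt B (x - z) ^ n * (L * ∫⁻ w, wt B (z - w) ^ n * h w) := by
        gcongr; exact hr z
    _ = L * ∫⁻ w, wt B (x - z) ^ n * (wt B (z - w) ^ n * h w) := by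
        rw [lintegral_const_mul' _ _ (by unfold wt; finiteness)]; ring
    _ ≤ L * ∫⁻ w, M ^ (1 - s) * (wt B (x - w) ^ 2 * h w ^ s) := by
        refine mul_le_mul' le_rfl (lintegral_mono fun w => ?_)
        calc wt B (x - z) ^ n * (wt B (z - w) ^ n * h w)
            = (wt B (x - z) * wt B (z - w)) ^ n * h w := by ring
          _ ≤ wt B (x - w) ^ n * h w := by gcongr; exact wt_mul hB x z w
          _ ≤ M ^ (1 - s) * (wt B (x - w) ^ n * h w) ^ s := split_rpow hs hs1 (hM1 w)
          _ ≤ _ := by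
            rw [ENNReal.mul_rpow_of_nonneg _ _ hs.le]
            gcongr
            rw [← ENNReal.rpow_natCast, ← ENNReal.rpow_mul, ← ENNReal.rpow_natCast]
            exact ENNReal.rpow_le_rpow_of_exponent_ge (wt_le_one hB _) (by simpa using hn)
    _ = _ := by rw [lintegral_const_mul' _ _ hMs]; ring

lemma jensen_wt {B : ℝ} (hB : 0 < B) {t : ℝ} (ht : 1 ≤ t) {h : ℝ → ℝ≥0∞} (hh : Measurable h)
    (K : ℝ≥0∞) (x : ℝ) :
    (K * ENNReal.ofReal B * ∫⁻ w, wt B (x - w) ^ 2 * h w) ^ t ≤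
      (K ^ t * (∫⁻ t : ℝ, wt 1 t ^ 2) ^ (t - 1)) * ENNReal.ofReal B * ∫⁻ w, wt B (x - w) ^ 2 * h w ^ t := by
  have hw : Measurable fun w => wt B (x - w) ^ 2 := by
    have := wt_meas B; fun_prop
  have := jensen hw hh ht
  have ht0 : 0 ≤ t := by linarith
  rw [ENNReal.mul_rpow_of_nonneg _ _ ht0, ENNReal.mul_rpow_of_nonneg _ _ ht0]
  calc _ ≤ K ^ t * ENNReal.ofReal B ^ t * ((∫⁻ w, wt B (x - w) ^ 2) ^ (t - 1) * ∫⁻ w, wt B (x - w) ^ 2 * h w ^ t) := by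
        gcongr
    _ = _ := by
      rw [← wt_int hB x, ENNReal.mul_rpow_of_nonneg _ _ (by linarith)]
      have : ENNReal.ofReal B ^ t = ENNReal.ofReal B ^ (t-1) * ENNReal.ofReal B := by
        conv_rhs => rw [← ENNReal.rpow_one (ENNReal.ofReal B), ← ENNReal.rpow_mul, one_mul]
        rw [← ENNReal.rpow_add_of_nonneg _ _ (by linarith) (by norm_num)]; simp
      rw [this]; ring

/-- sup bound -/
lemma sup_bound {t : ℝ} (ht : 0 < t) {K : ℝ≥0∞} (hK : K ≠ ∞) : ∃ K' : ℝ≥0∞, K' ≠ ∞ ∧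
    ∀ (B : ℝ), 0 < B → ∀ (D : ℝ≥0∞), D ≠ ∞ → ∀ H : ℝ → ℝ≥0∞, Measurable H → (∀ x, H x ≤ D) →
    (∀ x, H x ≤ K * ENNReal.ofReal B * ∫⁻ w, wt B (x - w) ^ 2 * H w) →
    ∀ x, H x ^ t ≤ K' * ENNReal.ofReal B * ∫⁻ w, H w ^ t := by
  have w1 : ∀ (B : ℝ), 0 < B → ∀ x (y : ℝ≥0∞), wt B x ^ 2 * y ≤ y := by
    intro B hB x y
    calc wt B x ^ 2 * y ≤ 1 * y := by
          gcongr
          exact pow_le_one₀ zero_le (wt_le_one hB _)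
      _ = y := one_mul y
  rcases le_total t 1 with ht1 | ht1
  · refine ⟨K, hK, fun B hB D hD H hH hb hr x => ?_⟩
    set M := ⨆ z, H z with hM
    have hM1 : ∀ z, H z ≤ M := fun z => le_iSup H z
    have hMt : M ≠ ∞ := ne_top_of_le_ne_top hD (iSup_le hb)
    refine (ENNReal.rpow_le_rpow (hM1 x) ht.le).trans (boot hMt ht ht1 ?_)
    refine iSup_le fun z => (hr z).trans ?_
    calc _ ≤ K * ENNReal.ofReal B * ∫⁻ w, M ^ (1 - t) * H w ^ t := by
          refine mul_le_mul' le_rfl (lintegral_mono fun w => ?_)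
          exact (w1 B hB _ _).trans (split_rpow ht ht1 (hM1 w))
      _ = _ := by
        rw [lintegral_const_mul' _ _ (ENNReal.rpow_ne_top_of_nonneg (by linarith) hMt)]; ring
  · refine ⟨K ^ t * (∫⁻ t : ℝ, wt 1 t ^ 2) ^ (t - 1), ?_, fun B hB D hD H hH hb hr x => (ENNReal.rpow_le_rpow (hr x) ht.le).trans
      ((jensen_wt hB ht1 hH K x).trans ?_)⟩
    · exact ENNReal.mul_ne_top (ENNReal.rpow_ne_top_of_nonneg ht.le hK)
        (ENNReal.rpow_ne_top_of_nonneg (by linarith) wt_int_fin)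
    · gcongr with w
      exact w1 B hB _ _

/-- pointwise Plancherel–Polya estimate. -/
lemma pointwise {p : ℝ} (hp : 0 < p) : ∃ K : ℝ≥0∞, K ≠ ∞ ∧
    ∀ (f : 𝓢(EuclideanSpace ℝ (Fin 2), ℂ)) (i : Fin 2)
    (B : ℝ), 0 < B → (∀ ξ, 𝓕 (f : EuclideanSpace ℝ (Fin 2) → ℂ) ξ ≠ 0 → |ξ i| ≤ B) →
    ∀ (x₀ : EuclideanSpace ℝ (Fin 2)) (x : ℝ),
      ‖f (x₀ + x • EuclideanSpace.single i (1:ℝ))‖ₑ ^ p ≤ K * ENNReal.ofReal B *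
      ∫⁻ w : ℝ, wt B (x - w) ^ 2 * ‖f (x₀ + w • EuclideanSpace.single i (1:ℝ))‖ₑ ^ p := by
  have base : ∀ (n : ℕ) {s : ℝ} (hs : 0 < s) (hs1 : s ≤ 1) (hn : 2 ≤ n * s), ∃ K : ℝ≥0∞, K ≠ ∞ ∧
    ∀ (f : 𝓢(EuclideanSpace ℝ (Fin 2), ℂ)) (i : Fin 2)
    (B : ℝ), 0 < B → (∀ ξ, 𝓕 (f : EuclideanSpace ℝ (Fin 2) → ℂ) ξ ≠ 0 → |ξ i| ≤ B) →
    ∀ (x₀ : EuclideanSpace ℝ (Fin 2)) (x : ℝ),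
      ‖f (x₀ + x • EuclideanSpace.single i (1:ℝ))‖ₑ ^ s ≤ K * ENNReal.ofReal B *
      ∫⁻ w : ℝ, wt B (x - w) ^ 2 * ‖f (x₀ + w • EuclideanSpace.single i (1:ℝ))‖ₑ ^ s := by
    intro n s hs hs1 hn
    obtain ⟨K, hK, h⟩ := slice_bound n
    refine ⟨K, hK, fun f i B hB hsu x₀ x => ?_⟩
    obtain ⟨D, hD, hdec⟩ := schwartz_decay f 0
    refine peetre hs hs1 hn hB (D := ENNReal.ofReal D) ENNReal.ofReal_ne_top
      (fun x => ‖f (x₀ + x • EuclideanSpace.single i (1:ℝ))‖ₑ) ?_ ?_ x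
    · intro x
      rw [← ofReal_norm]
      apply ENNReal.ofReal_le_ofReal
      simpa using hdec (x₀ + x • EuclideanSpace.single i (1:ℝ))
    · intro x
      refine (h f i B hB hsu _).trans (le_of_eq ?_)
      congr 1
      rw [← lintegral_sub_left_eq_self _ x]
      congr 1
      ext t
      congr 4
      module
  rcases le_total p 1 with h1 | h1
  · obtain ⟨n, hn⟩ := exists_nat_ge (2 / p)
    exact base n hp h1 ((div_le_iff₀ hp).1 hn)
  · obtain ⟨K, hK, h⟩ := base 2 one_pos le_rfl (by norm_num)
    refine ⟨K ^ p * (∫⁻ t : ℝ, wt 1 t ^ 2) ^ (p - 1), ?_, fun f i B hB hsu x₀ x => ?_⟩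
    · exact ENNReal.mul_ne_top (ENNReal.rpow_ne_top_of_nonneg hp.le hK)
        (ENNReal.rpow_ne_top_of_nonneg (by linarith) wt_int_fin)
    · have h2 := ENNReal.rpow_le_rpow (h f i B hB hsu x₀ x) hp.le
      simp only [ENNReal.rpow_one] at h2
      refine h2.trans (jensen_wt hB h1 (h := fun w => ‖f (x₀ + w • EuclideanSpace.single i (1:ℝ))‖ₑ) ?_ K x)
      have := f.continuous
      exact (Continuous.enorm (by fun_prop)).measurable

lemma interp {R α β q : ℝ} (hR : 1 < R) (hα : 0 < α) (hβ : 0 < β) (hq : 0 < q) :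
    ∃ C : ℝ≥0∞, C ≠ ∞ ∧ ∀ (a : ℕ → ℝ≥0∞) (X Y : ℝ≥0∞),
      (∀ j : ℕ, a j ≤ ENNReal.ofReal (R ^ (-((j:ℝ) * α))) * X) →
      (∀ j : ℕ, a j ≤ ENNReal.ofReal (R ^ ((j:ℝ) * β)) * Y) →
      ∑' j, a j ^ q ≤ C * (X ^ (β / (α + β)) * Y ^ (α / (α + β))) ^ q := by
  set L := Real.log R with hL
  have hL0 : 0 < L := Real.log_pos hR
  have hRL : ∀ s : ℝ, R ^ s = Real.exp (L * s) := fun s => Real.rpow_def_of_pos (by linarith) s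
  set γ := min α β with hγ
  have hγ0 : 0 < γ := lt_min hα hβ
  have hγα : γ ≤ α := min_le_left _ _
  have hγβ : γ ≤ β := min_le_right _ _
  set ρ := Real.exp (-(γ * L * q)) with hρ
  have hρ1 : ρ < 1 := by rw [hρ, Real.exp_lt_one_iff]; have : 0 < γ * L * q := by positivity
                         linarith
  have hρ0 : 0 < ρ := Real.exp_pos _
  have hsum : Summable (fun k : ℤ => ρ ^ k.natAbs) := by
    have hg := summable_geometric_of_lt_one hρ0.le hρ1
    apply Summable.of_nat_of_neg <;> simpa using hg
  set C : ℝ≥0∞ := ENNReal.ofReal (Real.exp (γ * L * q)) * ∑' k : ℤ, ENNReal.ofReal (ρ ^ k.natAbs) with hC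
  have hC0 : C ≠ 0 := by
    refine mul_ne_zero (by simp [Real.exp_pos]) ?_
    rw [Ne, ENNReal.tsum_eq_zero]
    push Not
    exact ⟨0, by simp⟩
  refine ⟨C, ENNReal.mul_ne_top ENNReal.ofReal_ne_top hsum.tsum_ofReal_ne_top, ?_⟩
  intro a X Y hX hY
  have hαβ : 0 < α + β := by positivity
  have e1 : 0 < β / (α + β) := by positivity
  have e2 : 0 < α / (α + β) := by positivity
  by_cases hX0 : X = 0
  · have : ∀ j, a j = 0 := fun j => by simpa [hX0] using hX j
    simp [this, hq]
  by_cases hY0 : Y = 0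
  · have : ∀ j, a j = 0 := fun j => by simpa [hY0] using hY j
    simp [this, hq]
  by_cases hXt : X = ∞
  · have : X ^ (β / (α + β)) * Y ^ (α / (α + β)) = ∞ := by
      rw [hXt, ENNReal.top_rpow_of_pos e1, ENNReal.top_mul]
      simp [ENNReal.rpow_eq_zero_iff, hY0, e2.not_gt]
    rw [this, ENNReal.top_rpow_of_pos hq, ENNReal.mul_top hC0]; exact le_top
  by_cases hYt : Y = ∞
  · have : X ^ (β / (α + β)) * Y ^ (α / (α + β)) = ∞ := by
      rw [hYt, ENNReal.top_rpow_of_pos e2, ENNReal.mul_top]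
      simp [ENNReal.rpow_eq_zero_iff, hX0, e1.not_gt]
    rw [this, ENNReal.top_rpow_of_pos hq, ENNReal.mul_top hC0]; exact le_top
  obtain ⟨ξ, hξ⟩ : ∃ ξ : ℝ, X = ENNReal.ofReal (Real.exp ξ) :=
    ⟨Real.log X.toReal, by rw [Real.exp_log (ENNReal.toReal_pos hX0 hXt), ENNReal.ofReal_toReal hXt]⟩
  obtain ⟨η, hη⟩ : ∃ η : ℝ, Y = ENNReal.ofReal (Real.exp η) :=
    ⟨Real.log Y.toReal, by rw [Real.exp_log (ENNReal.toReal_pos hY0 hYt), ENNReal.ofReal_toReal hYt]⟩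
  set m := (β * ξ + α * η) / (α + β) with hm
  set τ := (ξ - η) / (L * (α + β)) with hτ
  have hXm : ξ = m + α * L * τ := by rw [hm, hτ]; field_simp; ring
  have hYm : η = m - β * L * τ := by rw [hm, hτ]; field_simp; ring
  have hXY : (X ^ (β / (α + β)) * Y ^ (α / (α + β))) ^ q = ENNReal.ofReal (Real.exp (m * q)) := by
    rw [hξ, hη, ENNReal.ofReal_rpow_of_pos (Real.exp_pos _), ENNReal.ofReal_rpow_of_pos (Real.exp_pos _),
      ← ENNReal.ofReal_mul (by positivity), ← Real.exp_mul, ← Real.exp_mul, ← Real.exp_add,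
      ENNReal.ofReal_rpow_of_pos (Real.exp_pos _), ← Real.exp_mul]
    congr 3
    rw [hm]; field_simp
  rw [hXY]
  set n := ⌊τ⌋ with hn
  have hn1 : (n : ℝ) ≤ τ := Int.floor_le τ
  have hn2 : τ < n + 1 := Int.lt_floor_add_one τ
  have bound : ∀ j : ℕ, a j ^ q ≤ ENNReal.ofReal (Real.exp (m * q)) *
      (ENNReal.ofReal (Real.exp (γ * L * q)) * ENNReal.ofReal (ρ ^ ((j : ℤ) - n).natAbs)) := by
    intro j
    rw [← ENNReal.ofReal_mul (by positivity), ← ENNReal.ofReal_mul (by positivity), hρ, ← Real.exp_nat_mul,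
      ← Real.exp_add, ← Real.exp_add]
    have hab : ((((j : ℤ) - n).natAbs : ℕ) : ℝ) = |(j : ℝ) - n| := by
      rw [Nat.cast_natAbs]; push_cast; rfl
    rw [hab]
    have hγL : 0 < γ * L := by positivity
    have hαL : γ * L ≤ α * L := by gcongr
    have hβL : γ * L ≤ β * L := by gcongr
    rcases le_total (j : ℝ) τ with hj | hj
    · have h1 := hY j
      rw [hη, hRL, ← ENNReal.ofReal_mul (by positivity), ← Real.exp_add] at h1
      have h2 := ENNReal.rpow_le_rpow h1 hq.le
      rw [ENNReal.ofReal_rpow_of_pos (Real.exp_pos _), ← Real.exp_mul] at h2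
      refine h2.trans (ENNReal.ofReal_le_ofReal (Real.exp_le_exp.2 ?_))
      have : L * (j * β) + η ≤ m + γ * L * (1 - |(j : ℝ) - n|) := by
        have h3 : |(j : ℝ) - n| ≤ 1 + (τ - j) := by
          rw [abs_le]; constructor <;> linarith
        rw [hYm]
        nlinarith [mul_le_mul_of_nonneg_left h3 hγL.le, mul_le_mul_of_nonneg_right hβL (sub_nonneg.2 hj)]
      calc _ ≤ (m + γ * L * (1 - |(j : ℝ) - n|)) * q := by gcongr
        _ = _ := by ring
    · have h1 := hX j
      rw [hξ, hRL, ← ENNReal.ofReal_mul (by positivity), ← Real.exp_add] at h1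
      have h2 := ENNReal.rpow_le_rpow h1 hq.le
      rw [ENNReal.ofReal_rpow_of_pos (Real.exp_pos _), ← Real.exp_mul] at h2
      refine h2.trans (ENNReal.ofReal_le_ofReal (Real.exp_le_exp.2 ?_))
      have : L * (-(j * α)) + ξ ≤ m + γ * L * (1 - |(j : ℝ) - n|) := by
        have h3 : |(j : ℝ) - n| ≤ 1 + (j - τ) := by
          rw [abs_le]; constructor <;> linarith
        rw [hXm]
        nlinarith [mul_le_mul_of_nonneg_left h3 hγL.le, mul_le_mul_of_nonneg_right hαL (sub_nonneg.2 hj)]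
      calc _ ≤ (m + γ * L * (1 - |(j : ℝ) - n|)) * q := by gcongr
        _ = _ := by ring
  refine (ENNReal.tsum_le_tsum bound).trans ?_
  rw [ENNReal.tsum_mul_left, ENNReal.tsum_mul_left, mul_comm]
  rw [hC]
  gcongr
  have hinj : Function.Injective (fun j : ℕ => (j : ℤ) - n) := fun x y h => by simpa using h
  exact ENNReal.tsum_comp_le_tsum_of_injective hinj (fun k : ℤ => ENNReal.ofReal (ρ ^ k.natAbs))

lemma seq_bound {p r R q : ℝ} (hp : 0 < p) (hpr : p < r) (hR : 1 < R) (hq : 0 < q)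
    {C₀ : ℝ≥0∞} (hC₀ : C₀ ≠ ∞) : ∃ C : ℝ≥0∞, C ≠ ∞ ∧
    ∀ (G : ℝ → ℝ≥0∞), Measurable G → ∀ a : ℕ → ℝ → ℝ≥0∞,
      (∀ j x, a j x ≤ ENNReal.ofReal (R ^ (-((j:ℝ) * (1 / p - 1 / r)))) * (C₀ * G x)) →
      (∀ j x, a j x ≤ ENNReal.ofReal (R ^ ((j:ℝ) * (1 / r))) * (C₀ * (∫⁻ x, G x ^ p) ^ (1 / p))) →
      ∫⁻ x, (∑' j, a j x ^ q) ^ (r / q) ≤ C * (∫⁻ x, G x ^ p) ^ (r / p) := by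
  have hr : 0 < r := hp.trans hpr
  have hδ : 0 < 1 / p - 1 / r := sub_pos.2 (one_div_lt_one_div_of_lt hp hpr)
  obtain ⟨C, hC, h⟩ := interp hR hδ (one_div_pos.2 hr) hq
  refine ⟨C ^ (r / q) * C₀ ^ r, ENNReal.mul_ne_top (ENNReal.rpow_ne_top_of_nonneg (by positivity) hC)
    (ENNReal.rpow_ne_top_of_nonneg hr.le hC₀), ?_⟩
  intro G hG a h1 h2
  set I := ∫⁻ x, G x ^ p with hI
  have ex1 : 1 / r / (1 / p - 1 / r + 1 / r) = p / r := by rw [sub_add_cancel]; field_simp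
  have ex2 : (1 / p - 1 / r) / (1 / p - 1 / r + 1 / r) = 1 - p / r := by rw [sub_add_cancel]; field_simp
  have hpr1 : 0 ≤ 1 - p / r := by rw [sub_nonneg, div_le_one hr]; exact hpr.le
  have bd : ∀ x, (∑' j, a j x ^ q) ^ (r / q) ≤
      (C ^ (r / q) * C₀ ^ r) * (I ^ (r / p - 1)) * G x ^ p := by
    intro x
    have h3 := h (fun j => a j x) (C₀ * G x) (C₀ * I ^ (1 / p)) (fun j => h1 j x) (fun j => h2 j x)
    rw [ex1, ex2] at h3
    refine (ENNReal.rpow_le_rpow h3 (by positivity)).trans (le_of_eq ?_)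
    rw [ENNReal.mul_rpow_of_nonneg _ _ (by positivity), ← ENNReal.rpow_mul,
      show q * (r / q) = r by field_simp, ENNReal.mul_rpow_of_nonneg _ _ hr.le,
      ← ENNReal.rpow_mul, ← ENNReal.rpow_mul, show p / r * r = p by field_simp,
      show (1 - p / r) * r = r - p by field_simp, ENNReal.mul_rpow_of_nonneg _ _ hp.le,
      ENNReal.mul_rpow_of_nonneg _ _ (by linarith), ← ENNReal.rpow_mul,
      show 1 / p * (r - p) = r / p - 1 by field_simp,
      show C₀ ^ r = C₀ ^ p * C₀ ^ (r - p) by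
        rw [← ENNReal.rpow_add_of_nonneg _ _ hp.le (by linarith)]; congr 1; ring]
    ring
  refine (lintegral_mono bd).trans ?_
  rw [lintegral_const_mul _ (by fun_prop), ← hI, mul_assoc]
  gcongr
  have hrp : 0 ≤ r / p - 1 := by rw [sub_nonneg, one_le_div hp]; exact hpr.le
  conv_lhs => rw [← ENNReal.rpow_one I, ← ENNReal.rpow_mul, one_mul]
  rw [← ENNReal.rpow_add_of_nonneg _ _ hrp (by norm_num)]
  simp

lemma mink {t : ℝ} (ht : 1 ≤ t) (b : ℕ → ℝ → ℝ≥0∞) (hb : ∀ j, Measurable (b j)) :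
    ∫⁻ x, (∑' j, b j x) ^ t ≤ (∑' j, (∫⁻ x, b j x ^ t) ^ (1 / t)) ^ t := by
  have ht0 : 0 < t := by linarith
  have e : ∀ x, (∑' j, b j x) ^ t = ⨆ n : ℕ, (∑ j ∈ Finset.range n, b j x) ^ t := by
    intro x
    rw [ENNReal.tsum_eq_iSup_nat]
    exact (ENNReal.orderIsoRpow t ht0).map_iSup _
  simp_rw [e]
  rw [lintegral_iSup]
  · refine iSup_le fun n => ?_
    have h := eLpNorm'_sum_le (μ := volume) (q := t) (f := b) (s := Finset.range n)
      (fun i _ => (hb i).aestronglyMeasurable) ht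
    simp only [eLpNorm', enorm_eq_self, Finset.sum_apply] at h
    have h2 := ENNReal.rpow_le_rpow h ht0.le
    rw [← ENNReal.rpow_mul, one_div_mul_cancel ht0.ne', ENNReal.rpow_one] at h2
    refine h2.trans ?_
    gcongr
    exact ENNReal.sum_le_tsum _
  · intro n
    fun_prop
  · intro m n hmn x
    dsimp only
    gcongr

lemma ell_emb {u q : ℝ} (hu : 0 < u) (huq : u ≤ q) (a : ℕ → ℝ≥0∞) :
    ∑' j, a j ^ q ≤ (∑' j, a j ^ u) ^ (q / u) := by
  set S := ∑' j, a j ^ u with hS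
  have h : ∀ j, a j ^ q ≤ S ^ (q / u - 1) * a j ^ u := by
    intro j
    have h1 : a j ^ u ≤ S := ENNReal.le_tsum j
    have hq1 : 0 ≤ q / u - 1 := by rw [sub_nonneg, one_le_div hu]; exact huq
    calc a j ^ q = (a j ^ u) ^ (q / u - 1) * a j ^ u := by
          rw [← ENNReal.rpow_mul, ← ENNReal.rpow_add_of_nonneg _ _ (by positivity) hu.le]
          congr 1; field_simp; ring
      _ ≤ _ := by gcongr
  refine (ENNReal.tsum_le_tsum h).trans ?_
  rw [ENNReal.tsum_mul_left, ← hS]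
  have hq1 : 0 ≤ q / u - 1 := by rw [sub_nonneg, one_le_div hu]; exact huq
  conv_lhs => rw [← ENNReal.rpow_one S, ← ENNReal.rpow_mul, one_mul]
  rw [← ENNReal.rpow_add_of_nonneg _ _ hq1 (by norm_num)]
  simp

lemma inner_bound {q r : ℝ} (hq : 0 < q) (hr : 0 < r) (a : ℕ → ℝ → ℝ≥0∞) (ha : ∀ j, Measurable (a j)) :
    ∫⁻ x, (∑' j, a j x ^ q) ^ (r / q) ≤
      (∑' j, ((∫⁻ x, a j x ^ r) ^ (1 / r)) ^ (min q r)) ^ (r / min q r) := by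
  set u := min q r with hu
  have hu0 : 0 < u := lt_min hq hr
  have h1 : u ≤ q := min_le_left _ _
  have h2 : u ≤ r := min_le_right _ _
  calc ∫⁻ x, (∑' j, a j x ^ q) ^ (r / q) ≤ ∫⁻ x, (∑' j, a j x ^ u) ^ (r / u) := by
        refine lintegral_mono fun x => ?_
        refine (ENNReal.rpow_le_rpow (ell_emb hu0 h1 _) (by positivity)).trans (le_of_eq ?_)
        rw [← ENNReal.rpow_mul]; congr 1; field_simp
    _ ≤ _ := mink ((one_le_div hu0).2 h2) (fun j x => a j x ^ u) (fun j => (ha j).pow_const u)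
    _ = _ := by
      congr 2
      ext j
      rw [← ENNReal.rpow_mul]
      congr 1
      · congr 1; ext x
        rw [← ENNReal.rpow_mul]; congr 1; field_simp
      · field_simp

lemma pt_eq0 (x y : ℝ) : pt x y = pt 0 y + x • EuclideanSpace.single 0 (1:ℝ) := by
  ext i; fin_cases i <;> simp [pt]

lemma pt_eq1 (x y : ℝ) : pt x y = pt x 0 + y • EuclideanSpace.single 1 (1:ℝ) := by
  ext i; fin_cases i <;> simp [pt]

lemma pt_cont : Continuous (fun z : ℝ × ℝ => pt z.1 z.2) := by
  unfold pt
  refine (EuclideanSpace.equiv (Fin 2) ℝ).symm.continuous.comp ?_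
  refine continuous_pi fun i => ?_
  fin_cases i
  · simpa using continuous_fst
  · simpa using continuous_snd

lemma f_meas (f : 𝓢(EuclideanSpace ℝ (Fin 2), ℂ)) :
    Measurable (fun z : ℝ × ℝ => ‖f (pt z.1 z.2)‖ₑ) :=
  ((f.continuous.comp pt_cont).enorm).measurable

lemma f_meas1 (f : 𝓢(EuclideanSpace ℝ (Fin 2), ℂ)) (y : ℝ) :
    Measurable (fun x : ℝ => ‖f (pt x y)‖ₑ) := by
  have h0 : Continuous (fun x : ℝ => (x, y)) := by fun_prop
  have h : Continuous (fun x : ℝ => pt x y) := pt_cont.comp h0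
  exact (f.continuous.comp h).enorm.measurable

lemma nik1 {p : ℝ} (hp : 0 < p) : ∃ K : ℝ≥0∞, K ≠ ∞ ∧
    ∀ (f : 𝓢(EuclideanSpace ℝ (Fin 2), ℂ)) (B : ℝ), 0 < B →
    (∀ ξ, 𝓕 (f : EuclideanSpace ℝ (Fin 2) → ℂ) ξ ≠ 0 → |ξ 0| ≤ B) →
    ∀ x y : ℝ, ‖f (pt x y)‖ₑ ^ p ≤ K * ENNReal.ofReal B * ∫⁻ w, ‖f (pt w y)‖ₑ ^ p := by
  obtain ⟨K, hK, h⟩ := pointwise hp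
  refine ⟨K, hK, fun f B hB hs x y => ?_⟩
  have := h f 0 B hB hs (pt 0 y) x
  simp_rw [← pt_eq0] at this
  refine this.trans (mul_le_mul' le_rfl (lintegral_mono fun w => ?_))
  calc wt B (x - w) ^ 2 * ‖f (pt w y)‖ₑ ^ p ≤ 1 * ‖f (pt w y)‖ₑ ^ p := by
        gcongr
        exact pow_le_one₀ zero_le (wt_le_one hB _)
    _ = _ := one_mul _

lemma nik_r {p r : ℝ} (hp : 0 < p) (hpr : p ≤ r) : ∃ K : ℝ≥0∞, K ≠ ∞ ∧
    ∀ (f : 𝓢(EuclideanSpace ℝ (Fin 2), ℂ)) (B : ℝ), 0 < B →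
    (∀ ξ, 𝓕 (f : EuclideanSpace ℝ (Fin 2) → ℂ) ξ ≠ 0 → |ξ 0| ≤ B) →
    ∀ y : ℝ, (∫⁻ x, ‖f (pt x y)‖ₑ ^ r) ^ (1 / r) ≤
      K * ENNReal.ofReal B ^ (1 / p - 1 / r) * (∫⁻ x, ‖f (pt x y)‖ₑ ^ p) ^ (1 / p) := by
  obtain ⟨K, hK, h⟩ := nik1 hp
  have hr : 0 < r := hp.trans_le hpr
  have hδ : 0 ≤ 1 / p - 1 / r := sub_nonneg.2 (one_div_le_one_div_of_le hp hpr)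
  have hrp : 0 ≤ r / p - 1 := by rw [sub_nonneg, one_le_div hp]; exact hpr
  refine ⟨K ^ (1 / p - 1 / r), ENNReal.rpow_ne_top_of_nonneg hδ hK, fun f B hB hs y => ?_⟩
  set I := ∫⁻ w, ‖f (pt w y)‖ₑ ^ p with hI
  have hm := f_meas1 f y
  have h1 : ∫⁻ x, ‖f (pt x y)‖ₑ ^ r ≤ (K * ENNReal.ofReal B) ^ (r / p - 1) * I ^ (r / p) := by
    calc ∫⁻ x, ‖f (pt x y)‖ₑ ^ r
        ≤ ∫⁻ x, (K * ENNReal.ofReal B * I) ^ (r / p - 1) * ‖f (pt x y)‖ₑ ^ p := by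
          refine lintegral_mono fun x => ?_
          calc ‖f (pt x y)‖ₑ ^ r = (‖f (pt x y)‖ₑ ^ p) ^ (r / p - 1) * ‖f (pt x y)‖ₑ ^ p := by
                rw [← ENNReal.rpow_mul, ← ENNReal.rpow_add_of_nonneg _ _ (by positivity) hp.le]
                congr 1; field_simp; ring
            _ ≤ _ := by
              gcongr
              exact h f B hB hs x y
      _ = (K * ENNReal.ofReal B * I) ^ (r / p - 1) * I := by
          rw [lintegral_const_mul _ (hm.pow_const p)]
      _ = _ := by
          rw [ENNReal.mul_rpow_of_nonneg _ _ hrp, mul_assoc]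
          congr 1
          conv_lhs => rw [← ENNReal.rpow_one I, ← ENNReal.rpow_mul, one_mul]
          rw [← ENNReal.rpow_add_of_nonneg _ _ hrp (by norm_num)]
          simp
  refine (ENNReal.rpow_le_rpow h1 (by positivity)).trans (le_of_eq ?_)
  rw [ENNReal.mul_rpow_of_nonneg _ _ (by positivity), ← ENNReal.rpow_mul, ← ENNReal.rpow_mul,
    ← ENNReal.mul_rpow_of_nonneg _ _ hδ]
  congr 2 <;> field_simp

lemma slice_fin {p : ℝ} (hp : 0 < p) (f : 𝓢(EuclideanSpace ℝ (Fin 2), ℂ)) :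
    ∃ D : ℝ≥0∞, D ≠ ∞ ∧ ∀ y, ∫⁻ x, ‖f (pt x y)‖ₑ ^ p ≤ D := by
  obtain ⟨n, hn⟩ := exists_nat_ge (2 / p)
  rw [div_le_iff₀ hp] at hn
  obtain ⟨K, hK, h⟩ := schwartz_decay f n
  refine ⟨ENNReal.ofReal K ^ p * ∫⁻ t, wt 1 t ^ 2, ENNReal.mul_ne_top
    (ENNReal.rpow_ne_top_of_nonneg hp.le ENNReal.ofReal_ne_top) wt_int_fin, fun y => ?_⟩
  rw [← lintegral_const_mul' _ _ (ENNReal.rpow_ne_top_of_nonneg hp.le ENNReal.ofReal_ne_top)]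
  refine lintegral_mono fun x => ?_
  have h1 : ‖f (pt x y)‖ₑ ≤ ENNReal.ofReal K * wt 1 x ^ n := by
    rw [← ofReal_norm, wt, ← ENNReal.ofReal_pow (by positivity), ← ENNReal.ofReal_mul hK.le]
    apply ENNReal.ofReal_le_ofReal
    refine (h _).trans ?_
    have hx : |x| ≤ ‖pt x y‖ := by
      have := PiLp.norm_apply_le (pt x y) 0
      simpa [pt] using this
    rw [one_mul]
    gcongr
  calc ‖f (pt x y)‖ₑ ^ p ≤ (ENNReal.ofReal K * wt 1 x ^ n) ^ p := by gcongr
    _ ≤ _ := by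
      rw [ENNReal.mul_rpow_of_nonneg _ _ hp.le]
      gcongr
      rw [← ENNReal.rpow_natCast, ← ENNReal.rpow_mul, ← ENNReal.rpow_natCast]
      exact ENNReal.rpow_le_rpow_of_exponent_ge (wt_le_one one_pos _) (by simpa using hn)

lemma nik2 {p₁ p₂ : ℝ} (hp₁ : 0 < p₁) (hp₂ : 0 < p₂) : ∃ K : ℝ≥0∞, K ≠ ∞ ∧
    ∀ (f : 𝓢(EuclideanSpace ℝ (Fin 2), ℂ)) (B : ℝ), 0 < B →
    (∀ ξ, 𝓕 (f : EuclideanSpace ℝ (Fin 2) → ℂ) ξ ≠ 0 → |ξ 1| ≤ B) →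
    ∀ y : ℝ, (∫⁻ x, ‖f (pt x y)‖ₑ ^ p₁) ^ (1 / p₁) ≤
      K * ENNReal.ofReal B ^ (1 / p₂) *
        (∫⁻ y, ((∫⁻ x, ‖f (pt x y)‖ₑ ^ p₁) ^ (1 / p₁)) ^ p₂) ^ (1 / p₂) := by
  obtain ⟨K, hK, h⟩ := pointwise hp₁
  have ht : 0 < p₂ / p₁ := by positivity
  obtain ⟨K', hK', h'⟩ := sup_bound ht hK
  refine ⟨K' ^ (1 / p₂), ENNReal.rpow_ne_top_of_nonneg (by positivity) hK', fun f B hB hs y => ?_⟩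
  obtain ⟨D, hD, hfin⟩ := slice_fin hp₁ f
  have hmz := (f_meas f).pow_const p₁
  have hHm : Measurable (fun y => ∫⁻ x, ‖f (pt x y)‖ₑ ^ p₁) := hmz.lintegral_prod_left'
  have h2 := h' B hB D hD (fun y => ∫⁻ x, ‖f (pt x y)‖ₑ ^ p₁) hHm hfin ?_ y
  · have h3 := ENNReal.rpow_le_rpow h2 (one_div_nonneg.2 hp₂.le)
    rw [← ENNReal.rpow_mul, show p₂ / p₁ * (1 / p₂) = 1 / p₁ by field_simp] at h3
    refine h3.trans (le_of_eq ?_)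
    rw [ENNReal.mul_rpow_of_nonneg _ _ (by positivity), ENNReal.mul_rpow_of_nonneg _ _ (by positivity)]
    congr 3
    ext y
    rw [← ENNReal.rpow_mul]; congr 1; field_simp
  · intro y
    calc ∫⁻ x, ‖f (pt x y)‖ₑ ^ p₁ ≤ ∫⁻ x, K * ENNReal.ofReal B *
          ∫⁻ w, wt B (y - w) ^ 2 * ‖f (pt x w)‖ₑ ^ p₁ := by
          refine lintegral_mono fun x => ?_
          have := h f 1 B hB hs (pt x 0) y
          simp_rw [← pt_eq1] at this
          exact this
      _ = K * ENNReal.ofReal B * ∫⁻ x, ∫⁻ w, wt B (y - w) ^ 2 * ‖f (pt x w)‖ₑ ^ p₁ := by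
          rw [lintegral_const_mul' _ _ (by finiteness)]
      _ = K * ENNReal.ofReal B * ∫⁻ w, ∫⁻ x, wt B (y - w) ^ 2 * ‖f (pt x w)‖ₑ ^ p₁ := by
          rw [lintegral_lintegral_swap]
          apply Measurable.aemeasurable
          have := wt_meas B
          exact Measurable.mul (by fun_prop) hmz
      _ = _ := by
          congr 2
          ext w
          rw [lintegral_const_mul' _ _ (by unfold wt; finiteness)]

lemma ofReal_AR {A R s : ℝ} (hA : 0 < A) (hR : 0 < R) (j : ℕ) :
    ENNReal.ofReal (A * R ^ (j : ℝ)) ^ s = ENNReal.ofReal (A ^ s) * ENNReal.ofReal (R ^ ((j : ℝ) * s)) := by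
  rw [ENNReal.ofReal_rpow_of_pos (by positivity), Real.mul_rpow hA.le (by positivity),
    ← Real.rpow_mul hR.le, ENNReal.ofReal_mul (by positivity)]

lemma ofReal_RR {R : ℝ} (hR : 0 < R) (a b : ℝ) :
    ENNReal.ofReal (R ^ a) * ENNReal.ofReal (R ^ b) = ENNReal.ofReal (R ^ (a + b)) := by
  rw [← ENNReal.ofReal_mul (by positivity), ← Real.rpow_add hR]

lemma lp_const {p : ℝ} (hp : 0 < p) {c : ℝ≥0∞} (hc : c ≠ ∞) (a g : ℝ → ℝ≥0∞) (h : ∀ x, a x ≤ c * g x) :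
    (∫⁻ x, a x ^ p) ^ (1 / p) ≤ c * (∫⁻ x, g x ^ p) ^ (1 / p) := by
  calc (∫⁻ x, a x ^ p) ^ (1 / p) ≤ (∫⁻ x, c ^ p * g x ^ p) ^ (1 / p) := by
        gcongr with x
        rw [← ENNReal.mul_rpow_of_nonneg _ _ hp.le]
        gcongr
        exact h x
    _ = _ := by
      rw [lintegral_const_mul' _ _ (ENNReal.rpow_ne_top_of_nonneg hp.le hc),
        ENNReal.mul_rpow_of_nonneg _ _ (by positivity), ← ENNReal.rpow_mul, mul_one_div_cancel hp.ne',
        ENNReal.rpow_one]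

lemma unweight {R₁ R₂ : ℝ} (hR₁ : 0 < R₁) (hR₂ : 0 < R₂) (d₁ d₂ : ℝ) {a g : ℝ≥0∞}
    (h : ENNReal.ofReal (R₁ ^ d₁) * ENNReal.ofReal (R₂ ^ d₂) * a ≤ g) :
    a ≤ ENNReal.ofReal (R₁ ^ (-d₁)) * ENNReal.ofReal (R₂ ^ (-d₂)) * g := by
  calc a = (ENNReal.ofReal (R₁ ^ (-d₁)) * ENNReal.ofReal (R₁ ^ d₁)) *
        (ENNReal.ofReal (R₂ ^ (-d₂)) * ENNReal.ofReal (R₂ ^ d₂)) * a := by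
        rw [ofReal_RR hR₁, ofReal_RR hR₂]; simp
    _ = ENNReal.ofReal (R₁ ^ (-d₁)) * ENNReal.ofReal (R₂ ^ (-d₂)) *
        (ENNReal.ofReal (R₁ ^ d₁) * ENNReal.ofReal (R₂ ^ d₂) * a) := by ring
    _ ≤ _ := by gcongr

/-- Sequence Nikol'skij–Plancherel–Polya inequality with mixed norms in two variables,
under the geometric rectangle condition `supp 𝓕f_j ⊆ [-A R₁^j, A R₁^j] × [-A R₂^j, A R₂^j]`. -/
theorem stmt8 (p₁ p₂ r₁ r₂ : ℝ) (hp₁ : 0 < p₁) (hp₂ : 0 < p₂)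
    (h₁ : p₁ ≤ r₁) (h₂ : p₂ ≤ r₂) (hne : (p₁, p₂) ≠ (r₁, r₂))
    (q : ℝ) (hq : 0 < q) (A : ℝ) (hA : 0 < A)
    (R₁ R₂ : ℝ) (hR₁ : 1 < R₁) (hR₂ : 1 < R₂) :
    ∃ c : ℝ≥0∞, 0 < c ∧ c ≠ ∞ ∧
      ∀ f : ℕ → 𝓢(EuclideanSpace ℝ (Fin 2), ℂ),
        (∀ j : ℕ, Function.support (𝓕 (f j : EuclideanSpace ℝ (Fin 2) → ℂ))
          ⊆ {ξ : EuclideanSpace ℝ (Fin 2) | |ξ 0| ≤ A * R₁ ^ (j:ℝ) ∧ |ξ 1| ≤ A * R₂ ^ (j:ℝ)}) →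
        (∫⁻ x₂ : ℝ, (∫⁻ x₁ : ℝ,
              (∑' j : ℕ, (‖f j (pt x₁ x₂)‖₊ : ℝ≥0∞) ^ q) ^ (r₁ / q)) ^ (r₂ / r₁)) ^ (1 / r₂)
          ≤ c * (∫⁻ x₂ : ℝ, (∫⁻ x₁ : ℝ,
              (⨆ j : ℕ, ENNReal.ofReal (R₁ ^ ((j:ℝ) * (1 / p₁ - 1 / r₁)))
                * ENNReal.ofReal (R₂ ^ ((j:ℝ) * (1 / p₂ - 1 / r₂)))
                * (‖f j (pt x₁ x₂)‖₊ : ℝ≥0∞)) ^ p₁) ^ (p₂ / p₁)) ^ (1 / p₂) := by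
  have hr₁ : 0 < r₁ := hp₁.trans_le h₁
  have hr₂ : 0 < r₂ := hp₂.trans_le h₂
  have hR₁0 : 0 < R₁ := by linarith
  have hR₂0 : 0 < R₂ := by linarith
  have hδ₁ : 0 ≤ 1 / p₁ - 1 / r₁ := sub_nonneg.2 (one_div_le_one_div_of_le hp₁ h₁)
  suffices H : ∃ c : ℝ≥0∞, c ≠ ∞ ∧
      ∀ f : ℕ → 𝓢(EuclideanSpace ℝ (Fin 2), ℂ),
        (∀ j ξ, 𝓕 (f j : EuclideanSpace ℝ (Fin 2) → ℂ) ξ ≠ 0 → |ξ 0| ≤ A * R₁ ^ (j:ℝ)) →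
        (∀ j ξ, 𝓕 (f j : EuclideanSpace ℝ (Fin 2) → ℂ) ξ ≠ 0 → |ξ 1| ≤ A * R₂ ^ (j:ℝ)) →
        ∀ g : ℝ → ℝ → ℝ≥0∞, Measurable (Function.uncurry g) →
        (∀ j x₁ x₂, ‖f j (pt x₁ x₂)‖ₑ ≤ ENNReal.ofReal (R₁ ^ (-((j:ℝ) * (1 / p₁ - 1 / r₁))))
                * ENNReal.ofReal (R₂ ^ (-((j:ℝ) * (1 / p₂ - 1 / r₂)))) * g x₁ x₂) →
        (∫⁻ x₂ : ℝ, (∫⁻ x₁ : ℝ,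
              (∑' j : ℕ, ‖f j (pt x₁ x₂)‖ₑ ^ q) ^ (r₁ / q)) ^ (r₂ / r₁)) ^ (1 / r₂)
          ≤ c * (∫⁻ x₂ : ℝ, (∫⁻ x₁ : ℝ, g x₁ x₂ ^ p₁) ^ (p₂ / p₁)) ^ (1 / p₂) by
    obtain ⟨c, hc, H⟩ := H
    refine ⟨c + 1, by simp, by finiteness, fun f hf => ?_⟩
    refine (H f (fun j ξ hξ => (hf j hξ).1) (fun j ξ hξ => (hf j hξ).2)
      (fun x₁ x₂ => ⨆ j : ℕ, ENNReal.ofReal (R₁ ^ ((j:ℝ) * (1 / p₁ - 1 / r₁)))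
                * ENNReal.ofReal (R₂ ^ ((j:ℝ) * (1 / p₂ - 1 / r₂)))
                * ‖f j (pt x₁ x₂)‖ₑ) ?_ ?_).trans ?_
    · exact Measurable.iSup fun j => (f_meas (f j)).const_mul _
    · intro j x₁ x₂
      apply unweight hR₁0 hR₂0
      exact le_iSup (fun j : ℕ => ENNReal.ofReal (R₁ ^ ((j:ℝ) * (1 / p₁ - 1 / r₁)))
                * ENNReal.ofReal (R₂ ^ ((j:ℝ) * (1 / p₂ - 1 / r₂)))
                * ‖f j (pt x₁ x₂)‖ₑ) j
    · exact mul_le_mul' le_self_add le_rfl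
  rcases h₂.eq_or_lt with h2 | h2
  · skip
    have h1 : p₁ < r₁ := lt_of_le_of_ne h₁ fun h => hne (by rw [h, h2])
    subst h2
    obtain ⟨K, hK, hnik⟩ := nik1 hp₁
    obtain ⟨C, hC, hseq⟩ := seq_bound (C₀ := 1 + K ^ (1 / p₁) * ENNReal.ofReal (A ^ (1 / p₁))) hp₁ h1 hR₁ hq
      (by have := ENNReal.rpow_ne_top_of_nonneg (one_div_nonneg.2 hp₁.le) hK
          finiteness)
    refine ⟨(C ^ (p₂ / r₁)) ^ (1 / p₂), ENNReal.rpow_ne_top_of_nonneg (by positivity)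
      (ENNReal.rpow_ne_top_of_nonneg (by positivity) hC), ?_⟩
    intro f hf1 hf2 g hg hfg
    have hfg' : ∀ j x₁ x₂, ‖f j (pt x₁ x₂)‖ₑ ≤
        ENNReal.ofReal (R₁ ^ (-((j:ℝ) * (1 / p₁ - 1 / r₁)))) * g x₁ x₂ := by
      intro j x₁ x₂
      simpa using hfg j x₁ x₂
    have key : ∀ x₂, ∫⁻ x₁ : ℝ, (∑' j : ℕ, ‖f j (pt x₁ x₂)‖ₑ ^ q) ^ (r₁ / q) ≤
        C * (∫⁻ x₁, g x₁ x₂ ^ p₁) ^ (r₁ / p₁) := by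
      intro x₂
      refine hseq (fun x₁ => g x₁ x₂) (hg.comp (measurable_id.prodMk measurable_const))
        (fun j x₁ => ‖f j (pt x₁ x₂)‖ₑ) ?_ ?_
      · intro j x
        refine (hfg' j x x₂).trans ?_
        refine mul_le_mul' le_rfl ?_
        conv_lhs => rw [← one_mul (g x x₂)]
        exact mul_le_mul' le_self_add le_rfl
      · intro j x
        have hb : 0 < A * R₁ ^ (j : ℝ) := by positivity
        have a1 := ENNReal.rpow_le_rpow (hnik (f j) _ hb (hf1 j) x x₂) (one_div_nonneg.2 hp₁.le)
        rw [← ENNReal.rpow_mul, mul_one_div_cancel hp₁.ne', ENNReal.rpow_one,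
          ENNReal.mul_rpow_of_nonneg _ _ (by positivity), ENNReal.mul_rpow_of_nonneg _ _ (by positivity),
          ofReal_AR hA hR₁0] at a1
        have a2 := lp_const hp₁ ENNReal.ofReal_ne_top _ _ (fun x => hfg' j x x₂)
        calc _ ≤ _ := a1
          _ ≤ K ^ (1 / p₁) * (ENNReal.ofReal (A ^ (1 / p₁)) * ENNReal.ofReal (R₁ ^ ((j:ℝ) * (1 / p₁)))) *
              (ENNReal.ofReal (R₁ ^ (-((j:ℝ) * (1 / p₁ - 1 / r₁)))) * (∫⁻ x₁, g x₁ x₂ ^ p₁) ^ (1 / p₁)) :=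
              mul_le_mul' le_rfl a2
          _ = (ENNReal.ofReal (R₁ ^ ((j:ℝ) * (1 / p₁))) * ENNReal.ofReal (R₁ ^ (-((j:ℝ) * (1 / p₁ - 1 / r₁))))) *
              ((K ^ (1 / p₁) * ENNReal.ofReal (A ^ (1 / p₁))) * (∫⁻ x₁, g x₁ x₂ ^ p₁) ^ (1 / p₁)) := by ring
          _ ≤ _ := by
              rw [ofReal_RR hR₁0, show (j:ℝ) * (1 / p₁) + -((j:ℝ) * (1 / p₁ - 1 / r₁)) = (j:ℝ) * (1 / r₁) by ring]
              gcongr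
              exact le_add_self
    have hCt : C ^ (p₂ / r₁) ≠ ∞ := ENNReal.rpow_ne_top_of_nonneg (by positivity) hC
    rw [← ENNReal.mul_rpow_of_nonneg _ _ (by positivity : 0 ≤ 1 / p₂), ← lintegral_const_mul' _ _ hCt]
    gcongr with x₂
    refine (ENNReal.rpow_le_rpow (key x₂) (by positivity)).trans (le_of_eq ?_)
    rw [ENNReal.mul_rpow_of_nonneg _ _ (by positivity), ← ENNReal.rpow_mul]
    congr 2
    field_simp
  · skip
    obtain ⟨K₁, hK₁, hn1⟩ := nik_r hp₁ h₁
    obtain ⟨K₂, hK₂, hn2⟩ := nik2 hp₁ hp₂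
    set u := min q r₁ with hu
    have hu0 : 0 < u := lt_min hq hr₁
    set D₁ := K₁ * ENNReal.ofReal (A ^ (1 / p₁ - 1 / r₁)) with hD₁
    set D₂ := K₂ * ENNReal.ofReal (A ^ (1 / p₂)) with hD₂
    have hD₁t : D₁ ≠ ∞ := by finiteness
    have hD₂t : D₂ ≠ ∞ := by finiteness
    obtain ⟨C, hC, hseq⟩ := seq_bound (C₀ := D₁ * (1 + D₂)) hp₂ h2 hR₂ hu0 (by finiteness)
    refine ⟨C ^ (1 / r₂), ENNReal.rpow_ne_top_of_nonneg (by positivity) hC, ?_⟩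
    intro f hf1 hf2 g hg hfg
    set G : ℝ → ℝ≥0∞ := fun y => (∫⁻ x, g x y ^ p₁) ^ (1 / p₁) with hG
    have hGm : Measurable G := by
      have : Measurable (fun y => ∫⁻ x, g x y ^ p₁) := (hg.pow_const p₁).lintegral_prod_left'
      exact this.pow_const _
    set a : ℕ → ℝ → ℝ≥0∞ := fun j y => (∫⁻ x, ‖f j (pt x y)‖ₑ ^ p₁) ^ (1 / p₁) with ha
    set F : ℕ → ℝ → ℝ≥0∞ := fun j y => (∫⁻ x, ‖f j (pt x y)‖ₑ ^ r₁) ^ (1 / r₁) with hF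
    have haG : ∀ j y, a j y ≤ ENNReal.ofReal (R₁ ^ (-((j:ℝ) * (1 / p₁ - 1 / r₁))))
                * ENNReal.ofReal (R₂ ^ (-((j:ℝ) * (1 / p₂ - 1 / r₂)))) * G y := fun j y =>
      lp_const hp₁ (by finiteness) _ _ (fun x => hfg j x y)
    have hFa : ∀ j y, F j y ≤ D₁ * ENNReal.ofReal (R₁ ^ ((j:ℝ) * (1 / p₁ - 1 / r₁))) * a j y := by
      intro j y
      have hb : 0 < A * R₁ ^ (j : ℝ) := by positivity
      have := hn1 (f j) _ hb (hf1 j) y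
      rwa [ofReal_AR hA hR₁0, ← mul_assoc] at this
    have hcancel : ∀ j : ℕ, ENNReal.ofReal (R₁ ^ ((j:ℝ) * (1 / p₁ - 1 / r₁))) *
        ENNReal.ofReal (R₁ ^ (-((j:ℝ) * (1 / p₁ - 1 / r₁)))) = 1 := by
      intro j; rw [ofReal_RR hR₁0]; simp
    have b1 : ∀ j y, F j y ≤ ENNReal.ofReal (R₂ ^ (-((j:ℝ) * (1 / p₂ - 1 / r₂)))) * (D₁ * (1 + D₂) * G y) := by
      intro j y
      calc F j y ≤ _ := hFa j y
        _ ≤ D₁ * ENNReal.ofReal (R₁ ^ ((j:ℝ) * (1 / p₁ - 1 / r₁))) *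
            (ENNReal.ofReal (R₁ ^ (-((j:ℝ) * (1 / p₁ - 1 / r₁))))
                * ENNReal.ofReal (R₂ ^ (-((j:ℝ) * (1 / p₂ - 1 / r₂)))) * G y) := mul_le_mul' le_rfl (haG j y)
        _ = (ENNReal.ofReal (R₁ ^ ((j:ℝ) * (1 / p₁ - 1 / r₁))) *
              ENNReal.ofReal (R₁ ^ (-((j:ℝ) * (1 / p₁ - 1 / r₁))))) *
            (ENNReal.ofReal (R₂ ^ (-((j:ℝ) * (1 / p₂ - 1 / r₂)))) * (D₁ * 1 * G y)) := by ring
        _ ≤ _ := by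
            rw [hcancel, one_mul]
            gcongr
            exact le_self_add
    have b2 : ∀ j y, F j y ≤ ENNReal.ofReal (R₂ ^ ((j:ℝ) * (1 / r₂))) *
        (D₁ * (1 + D₂) * (∫⁻ y, G y ^ p₂) ^ (1 / p₂)) := by
      intro j y
      have hb : 0 < A * R₂ ^ (j : ℝ) := by positivity
      have a1 : a j y ≤ D₂ * ENNReal.ofReal (R₂ ^ ((j:ℝ) * (1 / p₂))) * (∫⁻ y, a j y ^ p₂) ^ (1 / p₂) := by
        have := hn2 (f j) _ hb (hf2 j) y
        rwa [ofReal_AR hA hR₂0, ← mul_assoc] at this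
      have a2 := lp_const hp₂ (by finiteness) _ _ (haG j)
      calc F j y ≤ _ := hFa j y
        _ ≤ D₁ * ENNReal.ofReal (R₁ ^ ((j:ℝ) * (1 / p₁ - 1 / r₁))) *
            (D₂ * ENNReal.ofReal (R₂ ^ ((j:ℝ) * (1 / p₂))) * (ENNReal.ofReal (R₁ ^ (-((j:ℝ) * (1 / p₁ - 1 / r₁))))
                * ENNReal.ofReal (R₂ ^ (-((j:ℝ) * (1 / p₂ - 1 / r₂)))) * (∫⁻ y, G y ^ p₂) ^ (1 / p₂))) :=
            mul_le_mul' le_rfl (a1.trans (mul_le_mul' le_rfl a2))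
        _ = (ENNReal.ofReal (R₁ ^ ((j:ℝ) * (1 / p₁ - 1 / r₁))) *
              ENNReal.ofReal (R₁ ^ (-((j:ℝ) * (1 / p₁ - 1 / r₁))))) *
            ((ENNReal.ofReal (R₂ ^ ((j:ℝ) * (1 / p₂))) * ENNReal.ofReal (R₂ ^ (-((j:ℝ) * (1 / p₂ - 1 / r₂))))) *
            (D₁ * D₂ * (∫⁻ y, G y ^ p₂) ^ (1 / p₂))) := by ring
        _ ≤ _ := by
            rw [hcancel, one_mul, ofReal_RR hR₂0,
              show (j:ℝ) * (1 / p₂) + -((j:ℝ) * (1 / p₂ - 1 / r₂)) = (j:ℝ) * (1 / r₂) by ring]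
            gcongr
            exact le_add_self
    have fin := hseq G hGm F b1 b2
    have e1 : ∫⁻ x₂ : ℝ, (∫⁻ x₁ : ℝ,
              (∑' j : ℕ, ‖f j (pt x₁ x₂)‖ₑ ^ q) ^ (r₁ / q)) ^ (r₂ / r₁) ≤ ∫⁻ y, (∑' j, F j y ^ u) ^ (r₂ / u) := by
      refine lintegral_mono fun y => ?_
      have := inner_bound hq hr₁ (fun j x => ‖f j (pt x y)‖ₑ) (fun j => f_meas1 (f j) y)
      refine (ENNReal.rpow_le_rpow this (by positivity)).trans (le_of_eq ?_)
      rw [← ENNReal.rpow_mul]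
      congr 1
      rw [← hu]
      field_simp
    have e2 : ∫⁻ y, G y ^ p₂ = ∫⁻ x₂ : ℝ, (∫⁻ x₁ : ℝ, g x₁ x₂ ^ p₁) ^ (p₂ / p₁) := by
      congr 1
      ext y
      rw [hG]
      dsimp only
      rw [← ENNReal.rpow_mul]; congr 1; field_simp
    refine (ENNReal.rpow_le_rpow (e1.trans fin) (by positivity)).trans (le_of_eq ?_)
    rw [ENNReal.mul_rpow_of_nonneg _ _ (by positivity), ← ENNReal.rpow_mul, e2]
    congr 2
    field_simp
end

section
/- (Sobolev embedding inequality for Lizorkin–Triebel quasi-norms of band-limited sequences.) Let n ≥ 1, let s, s₀ ∈ ℝ and 0 < p₀ < p < ∞ satisfy s − n/p = s₀ − n/p₀, let 0 < q < ∞ and A > 0. Then there exists a constant C > 0 such that for every sequence (f_j)_{j∈ℕ} of Schwartz functions on ℝⁿ with supp 𝓕f_j contained in the closed ball of radius A·2^j about the origin, one has (∫_{ℝⁿ} (∑_{j=0}^∞ 2^{s j q} |f_j(x)|^q)^{p/q} dx)^{1/p} ≤ C · (∫_{ℝⁿ} (sup_{j∈ℕ} 2^{s₀ j} |f_j(x)|)^{p₀}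 dx)^{1/p₀}, where both sides may be infinite. -/
open scoped ENNReal NNReal FourierTransform SchwartzMap
open MeasureTheory

theorem aux_repr {n : ℕ} (A : ℝ) (φ : 𝓢(EuclideanSpace ℝ (Fin n), ℂ))
    (hφ : ∀ v ∈ Metric.closedBall (0 : EuclideanSpace ℝ (Fin n)) A, φ v = 1)
    (R : ℝ) (hR : 0 < R) (f : 𝓢(EuclideanSpace ℝ (Fin n), ℂ))
    (hf : Function.support (𝓕 (f : EuclideanSpace ℝ (Fin n) → ℂ)) ⊆ Metric.closedBall 0 (A * R))
    (x : EuclideanSpace ℝ (Fin n)) :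
    f x = ∫ y, f y * ((R : ℂ) ^ n * (𝓕 φ) (R • (y - x))) := by
  set h : EuclideanSpace ℝ (Fin n) → ℂ :=
    fun v => Real.fourierChar (inner ℝ v x) • φ (R⁻¹ • v) with hh
  have hint0 : Integrable (fun v => φ (R⁻¹ • v)) :=
    (φ.integrable (μ := volume)).comp_smul (inv_ne_zero hR.ne')
  have hint : Integrable h := by
    have := (Real.fourierIntegral_convergent_iff (μ := volume) (-x)).2 hint0
    simpa [hh] using this
  have h1 : f x = ∫ v, 𝓕 (f : EuclideanSpace ℝ (Fin n) → ℂ) v * h v := by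
    have : 𝓕⁻ (𝓕 (f : EuclideanSpace ℝ (Fin n) → ℂ)) x = f x := by
      rw [← SchwartzMap.fourier_coe, ← SchwartzMap.fourierInv_coe]; simp
    rw [← this, Real.fourierInv_eq]
    refine integral_congr_ae (Filter.Eventually.of_forall fun v => ?_)
    simp only [hh]
    by_cases hv : 𝓕 (f : EuclideanSpace ℝ (Fin n) → ℂ) v = 0
    · rw [hv]; simp
    · have hv2 := hf hv
      have : φ (R⁻¹ • v) = 1 := by
        apply hφ
        simp only [mem_closedBall_zero_iff] at hv2 ⊢
        rw [norm_smul, norm_inv, Real.norm_of_nonneg hR.le, inv_mul_le_iff₀ hR]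
        linarith
      rw [this]
      simp [Circle.smul_def, mul_comm]
  have h2 : ∫ v, 𝓕 (f : EuclideanSpace ℝ (Fin n) → ℂ) v * h v = ∫ y, f y * 𝓕 h y := by
    have := VectorFourier.integral_fourierIntegral_smul_eq_flip
      (L := innerₗ (EuclideanSpace ℝ (Fin n))) (μ := volume) (ν := volume)
      (f := (f : EuclideanSpace ℝ (Fin n) → ℂ)) (g := h) Real.continuous_fourierChar
      continuous_inner f.integrable hint
    simpa using! this
  rw [h1, h2]
  refine integral_congr_ae (Filter.Eventually.of_forall fun y => ?_)
  simp only
  congr 1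
  rw [Real.fourier_eq, SchwartzMap.fourier_coe, Real.fourier_eq]
  have h3 := Measure.integral_comp_inv_smul_of_nonneg (μ := volume)
    (fun u : EuclideanSpace ℝ (Fin n) => Real.fourierChar (-inner ℝ u (R • (y - x))) • φ u) hR.le
  have h4 : ∀ v : EuclideanSpace ℝ (Fin n), Real.fourierChar (-inner ℝ v y) • h v =
      Real.fourierChar (-inner ℝ (R⁻¹ • v) (R • (y - x))) • φ (R⁻¹ • v) := by
    intro v
    simp only [hh]
    rw [smul_smul, ← AddChar.map_add_eq_mul]
    congr 2
    rw [inner_smul_left, inner_smul_right, inner_sub_right]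
    simp
    field_simp
    ring
  simp_rw [h4]
  rw [h3]
  simp

theorem aux_bump (n : ℕ) (A : ℝ) (hA : 0 < A) : ∃ φ : 𝓢(EuclideanSpace ℝ (Fin n), ℂ),
    ∀ v ∈ Metric.closedBall (0 : EuclideanSpace ℝ (Fin n)) A, φ v = 1 := by
  let b : ContDiffBump (0 : EuclideanSpace ℝ (Fin n)) := ⟨A, 2 * A, hA, by linarith⟩
  have hc : HasCompactSupport (fun x => (b x : ℂ)) :=
    b.hasCompactSupport.comp_left (g := fun t : ℝ => (t : ℂ)) (by simp)
  have hs : ContDiff ℝ (⊤ : ℕ∞) (fun x => (b x : ℂ)) :=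
    Complex.ofRealCLM.contDiff.comp b.contDiff
  let φ : 𝓢(EuclideanSpace ℝ (Fin n), ℂ) := hc.toSchwartzMap hs
  refine ⟨φ, ?_⟩
  · intro v hv
    have : b v = 1 := b.one_of_mem_closedBall hv
    change (b v : ℂ) = 1
    simp [this]

theorem aux_kernel (n : ℕ) (A : ℝ) (hA : 0 < A) : ∃ K : ℝ, 1 ≤ K ∧
    ∀ (R : ℝ) (_ : 0 < R) (f : 𝓢(EuclideanSpace ℝ (Fin n), ℂ))
    (_ : Function.support (𝓕 (f : EuclideanSpace ℝ (Fin n) → ℂ)) ⊆ Metric.closedBall 0 (A * R))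
    (x : EuclideanSpace ℝ (Fin n)), ∃ k : EuclideanSpace ℝ (Fin n) → ℝ≥0∞,
      (Measurable k) ∧ (∀ y, k y ≤ ENNReal.ofReal (K * R ^ n)) ∧ (∫⁻ y, k y ≤ ENNReal.ofReal K) ∧
      ‖f x‖ₑ ≤ ∫⁻ y, ‖f y‖ₑ * k y := by
  obtain ⟨ψ, hψ⟩ : ∃ ψ : 𝓢(EuclideanSpace ℝ (Fin n), ℂ),
      ∀ (R : ℝ) (_ : 0 < R) (f : 𝓢(EuclideanSpace ℝ (Fin n), ℂ))
      (_ : Function.support (𝓕 (f : EuclideanSpace ℝ (Fin n) → ℂ)) ⊆ Metric.closedBall 0 (A * R))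
      (x : EuclideanSpace ℝ (Fin n)),
      f x = ∫ y, f y * ((R : ℂ) ^ n * ψ (R • (y - x))) := by
    obtain ⟨φ, hφ⟩ := aux_bump n A hA
    exact ⟨𝓕 φ, aux_repr A φ hφ⟩
  obtain ⟨D, hD⟩ : ∃ D : ℝ, ∀ y, ‖ψ y‖ ≤ D := by
    obtain ⟨D, hD⟩ := ψ.decay 0 0
    exact ⟨D, fun y => by simpa using hD.2 y⟩
  have hI : Integrable (fun y => ψ y) := ψ.integrable
  refine ⟨max 1 (max D (∫ y, ‖ψ y‖)), le_max_left _ _, ?_⟩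
  intro R hR f hf x
  have hm : Measurable fun y : EuclideanSpace ℝ (Fin n) => (R : ℂ) ^ n * ψ (R • (y - x)) := by
    have : Continuous fun y => ψ y := ψ.continuous
    exact Continuous.measurable (by fun_prop)
  refine ⟨fun y => ‖(R : ℂ) ^ n * ψ (R • (y - x))‖ₑ, hm.enorm, ?_, ?_, ?_⟩
  · intro y
    beta_reduce
    rw [← ofReal_norm]
    apply ENNReal.ofReal_le_ofReal
    rw [norm_mul, norm_pow, Complex.norm_real, Real.norm_of_nonneg hR.le, mul_comm]
    gcongr
    exact (hD _).trans ((le_max_left _ _).trans (le_max_right _ _))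
  · have h1 : Integrable (fun y => (R : ℂ) ^ n * ψ (R • (y - x))) :=
      ((hI.comp_smul hR.ne').comp_sub_right x).const_mul _
    rw [← ofReal_integral_norm_eq_lintegral_enorm h1]
    apply ENNReal.ofReal_le_ofReal
    refine le_trans (le_of_eq ?_) ((le_max_right _ _).trans (le_max_right _ _))
    have h2 := integral_sub_right_eq_self (μ := volume)
      (fun y => ‖(R : ℂ) ^ n * ψ (R • y)‖) x
    rw [h2]
    simp only [norm_mul, norm_pow, Complex.norm_real, Real.norm_of_nonneg hR.le]
    rw [integral_const_mul]
    have h3 := Measure.integral_comp_smul_of_nonneg (μ := volume)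
      (fun u => ‖ψ u‖) R (hR := hR.le)
    rw [h3]
    simp
    field_simp
  · rw [hψ R hR f hf x]
    refine (enorm_integral_le_lintegral_enorm _).trans (le_of_eq ?_)
    simp_rw [enorm_mul]

theorem aux_nik (n : ℕ) (A p : ℝ) (hA : 0 < A) (hp : 0 < p) : ∃ K : ℝ, 1 ≤ K ∧
    ∀ (R : ℝ) (_ : 0 < R) (f : 𝓢(EuclideanSpace ℝ (Fin n), ℂ))
    (_ : Function.support (𝓕 (f : EuclideanSpace ℝ (Fin n) → ℂ)) ⊆ Metric.closedBall 0 (A * R))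
    (x : EuclideanSpace ℝ (Fin n)),
      ‖f x‖ₑ ^ p ≤ ENNReal.ofReal (K * R ^ n) * ∫⁻ y, ‖f y‖ₑ ^ p := by
  obtain ⟨K, hK, H⟩ := aux_kernel n A hA
  have hK0 : 0 < K := by linarith
  refine ⟨2 * (2 * K) ^ p * K, ?_, ?_⟩
  · have : 1 ≤ (2 * K) ^ p := Real.one_le_rpow (by linarith) hp.le
    nlinarith
  intro R hR f hf x₀
  by_cases hI : ∫⁻ y, ‖f y‖ₑ ^ p = ∞
  · rw [hI, ENNReal.mul_top]
    · exact le_top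
    · have : 0 < 2 * (2 * K) ^ p * K * R ^ n := by positivity
      simpa using this
  obtain ⟨I, hI2, hI0⟩ : ∃ I : ℝ, ∫⁻ y, ‖f y‖ₑ ^ p = ENNReal.ofReal I ∧ 0 ≤ I :=
    ⟨_, (ENNReal.ofReal_toReal hI).symm, ENNReal.toReal_nonneg⟩
  have hbdd : BddAbove (Set.range fun x => ‖f x‖) := by
    obtain ⟨D, hD⟩ := f.decay 0 0
    exact ⟨D, by rintro _ ⟨y, rfl⟩; simpa using hD.2 y⟩
  set S : ℝ := ⨆ x, ‖f x‖ with hS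
  have hle : ∀ x, ‖f x‖ ≤ S := fun x => le_ciSup hbdd x
  have hS0 : 0 ≤ S := (norm_nonneg _).trans (hle x₀)
  rcases hS0.eq_or_lt with h0 | hSpos
  · have : f x₀ = 0 := norm_le_zero_iff.1 (by rw [h0]; exact hle x₀)
    simp [this, hp]
  set B : ℝ := S ^ (1 - p) * (2 * K) ^ p with hB
  have hB0 : 0 < B := by positivity
  have hpt : ∀ y, ‖f y‖ ≤ S / (2 * K) + B * ‖f y‖ ^ p := by
    intro y
    have hy := hle y
    by_cases hc : ‖f y‖ ≤ S / (2 * K)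
    · have : 0 ≤ B * ‖f y‖ ^ p := by positivity
      linarith
    · push Not at hc
      have h1 : S < 2 * K * ‖f y‖ := by
        rw [div_lt_iff₀ (by positivity)] at hc; linarith
      have h2 : S ^ p ≤ (2 * K) ^ p * ‖f y‖ ^ p := by
        rw [← Real.mul_rpow (by positivity) (norm_nonneg _)]
        exact Real.rpow_le_rpow hS0 h1.le hp.le
      have h3 : S ^ (1 - p) * S ^ p = S := by
        rw [← Real.rpow_add hSpos]; simp
      have h4 : S ≤ B * ‖f y‖ ^ p := by
        rw [hB]
        calc S = S ^ (1 - p) * S ^ p := h3.symm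
          _ ≤ S ^ (1 - p) * ((2 * K) ^ p * ‖f y‖ ^ p) := by gcongr
          _ = _ := by ring
      have : 0 ≤ S / (2 * K) := by positivity
      linarith
  have hpt' : ∀ y, ‖f y‖ₑ ≤ ENNReal.ofReal (S / (2 * K)) + ENNReal.ofReal B * ‖f y‖ₑ ^ p := by
    intro y
    rw [← ofReal_norm, ENNReal.ofReal_rpow_of_nonneg (norm_nonneg _) hp.le,
      ← ENNReal.ofReal_mul hB0.le, ← ENNReal.ofReal_add (by positivity) (by positivity)]
    exact ENNReal.ofReal_le_ofReal (hpt y)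
  have hfm : Measurable fun y => ‖f y‖ₑ ^ p := (f.continuous.measurable.enorm).pow_const p
  have hx : ∀ x, ‖f x‖ ≤ S / 2 + B * (K * R ^ n) * I := by
    intro x
    obtain ⟨k, hkm, hk1, hk2, hk3⟩ := H R hR f hf x
    have : ‖f x‖ₑ ≤ ENNReal.ofReal (S / 2 + B * (K * R ^ n) * I) := by
      calc ‖f x‖ₑ ≤ ∫⁻ y, ‖f y‖ₑ * k y := hk3
        _ ≤ ∫⁻ y, (ENNReal.ofReal (S / (2 * K)) * k y
              + (ENNReal.ofReal B * ENNReal.ofReal (K * R ^ n)) * ‖f y‖ₑ ^ p) := by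
            refine lintegral_mono fun y => ?_
            calc ‖f y‖ₑ * k y ≤ (ENNReal.ofReal (S / (2 * K))
                  + ENNReal.ofReal B * ‖f y‖ₑ ^ p) * k y := by gcongr; exact hpt' y
              _ = ENNReal.ofReal (S / (2 * K)) * k y
                  + (ENNReal.ofReal B * k y) * ‖f y‖ₑ ^ p := by ring
              _ ≤ _ := by gcongr; exact hk1 y
        _ = ENNReal.ofReal (S / (2 * K)) * (∫⁻ y, k y)
              + (ENNReal.ofReal B * ENNReal.ofReal (K * R ^ n)) * ∫⁻ y, ‖f y‖ₑ ^ p := by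
            rw [lintegral_add_left (hkm.const_mul _), lintegral_const_mul _ hkm,
              lintegral_const_mul _ hfm]
        _ ≤ ENNReal.ofReal (S / (2 * K)) * ENNReal.ofReal K
              + (ENNReal.ofReal B * ENNReal.ofReal (K * R ^ n)) * ENNReal.ofReal I := by
            rw [hI2]; gcongr
        _ = _ := by
            rw [← ENNReal.ofReal_mul (by positivity), ← ENNReal.ofReal_mul hB0.le,
              ← ENNReal.ofReal_mul (by positivity), ← ENNReal.ofReal_add (by positivity)
              (by positivity)]
            congr 2
            field_simp
    rw [← ofReal_norm] at this
    exact (ENNReal.ofReal_le_ofReal_iff (by positivity)).1 this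
  have hSle : S ≤ S / 2 + B * (K * R ^ n) * I := ciSup_le hx
  have hfin : S ^ p ≤ 2 * (2 * K) ^ p * K * R ^ n * I := by
    have h3 : S ^ (1 - p) * S ^ p = S := by
      rw [← Real.rpow_add hSpos]; simp
    have h5 : 0 < S ^ (1 - p) := by positivity
    have : S ^ (1 - p) * S ^ p ≤ S ^ (1 - p) * (2 * (2 * K) ^ p * K * R ^ n * I) := by
      rw [h3]
      calc S ≤ 2 * (B * (K * R ^ n) * I) := by linarith
        _ = _ := by rw [hB]; ring
    exact le_of_mul_le_mul_left this h5
  rw [hI2, ← ENNReal.ofReal_mul (by positivity), ← ofReal_norm,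
    ENNReal.ofReal_rpow_of_nonneg (norm_nonneg _) hp.le]
  apply ENNReal.ofReal_le_ofReal
  exact (Real.rpow_le_rpow (norm_nonneg _) (hle x₀) hp.le).trans hfin

/-- uniform bound for the two sided geometric sum -/
theorem aux_geom (γ : ℝ) (hγ : 0 < γ) : ∃ C : ℝ≥0∞, C ≠ ∞ ∧ ∀ τ : ℝ,
    ∑' j : ℕ, (2 : ℝ≥0∞) ^ (-(γ * |(j : ℝ) - τ|)) ≤ C := by
  have two0 : (2 : ℝ≥0∞) ≠ 0 := by simp
  have twot : (2 : ℝ≥0∞) ≠ ∞ := by simp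
  refine ⟨(2 : ℝ≥0∞) ^ γ * ∑' k : ℤ, (2 : ℝ≥0∞) ^ (-(γ * |(k : ℝ)|)), ?_, ?_⟩
  · refine ENNReal.mul_ne_top (by simp) ?_
    have hs : Summable fun k : ℤ => (2 : ℝ) ^ (-(γ * |(k : ℝ)|)) := by
      have hg : Summable fun k : ℕ => (2 : ℝ) ^ (-(γ * (k : ℝ))) := by
        have : Summable fun k : ℕ => ((2 : ℝ) ^ (-γ)) ^ k :=
          summable_geometric_of_lt_one (by positivity)
            (Real.rpow_lt_one_of_one_lt_of_neg (by norm_num) (by linarith))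
        refine this.congr fun k => ?_
        rw [← Real.rpow_natCast, ← Real.rpow_mul (by norm_num)]
        ring_nf
      apply Summable.of_nat_of_neg
      · simpa using hg
      · simpa using hg
    have : ∀ k : ℤ, (2 : ℝ≥0∞) ^ (-(γ * |(k : ℝ)|)) =
        ENNReal.ofReal ((2 : ℝ) ^ (-(γ * |(k : ℝ)|))) := by
      intro k
      rw [← ENNReal.ofReal_rpow_of_pos (by norm_num)]
      simp
    simp_rw [this]
    rw [← ENNReal.ofReal_tsum_of_nonneg (fun k => by positivity) hs]
    exact ENNReal.ofReal_ne_top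
  · intro τ
    have hinj : Function.Injective fun j : ℕ => (j : ℤ) - ⌊τ⌋ := by
      intro a b hab
      simpa using hab
    refine le_trans ?_ (mul_le_mul_right (ENNReal.tsum_comp_le_tsum_of_injective hinj
      (fun k : ℤ => (2 : ℝ≥0∞) ^ (-(γ * |(k : ℝ)|)))) _)
    rw [← ENNReal.tsum_mul_left]
    refine ENNReal.tsum_le_tsum fun j => ?_
    rw [← ENNReal.rpow_add _ _ two0 twot]
    apply ENNReal.rpow_le_rpow_of_exponent_le (by norm_num)
    have h1 : |((((j : ℤ) - ⌊τ⌋ : ℤ)) : ℝ)| ≤ |(j : ℝ) - τ| + 1 := by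
      push_cast
      have e : (j : ℝ) - ⌊τ⌋ = ((j : ℝ) - τ) + Int.fract τ := by
        rw [Int.fract]; ring
      rw [e]
      refine (abs_add_le _ _).trans ?_
      have := Int.fract_nonneg τ
      have := (Int.fract_lt_one τ).le
      rw [abs_of_nonneg (Int.fract_nonneg τ)]
      linarith
    nlinarith

theorem aux_sum (δ ε q : ℝ) (hδ : 0 < δ) (hε : 0 < ε) (hq : 0 < q) :
    ∃ C : ℝ≥0∞, C ≠ ∞ ∧ ∀ (F N : ℝ) (_ : 0 < F) (_ : 0 < N) (a : ℕ → ℝ≥0∞),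
      (∀ j, a j ≤ ENNReal.ofReal (F * 2 ^ (-(δ * (j : ℝ))))) →
      (∀ j, a j ≤ ENNReal.ofReal (N * 2 ^ (ε * (j : ℝ)))) →
      ∑' j, a j ^ q ≤ C *
        ENNReal.ofReal ((F ^ (ε / (δ + ε)) * N ^ (δ / (δ + ε))) ^ q) := by
  set γ := min δ ε with hγ
  have hγ0 : 0 < γ := lt_min hδ hε
  obtain ⟨C, hC, H⟩ := aux_geom (γ * q) (by positivity)
  refine ⟨C, hC, ?_⟩
  intro F N hF hN a h1 h2
  set G := F ^ (ε / (δ + ε)) * N ^ (δ / (δ + ε)) with hG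
  have hG0 : 0 < G := by positivity
  set τ := Real.logb 2 (F / N) / (δ + ε) with hτ
  have hτ2 : (2 : ℝ) ^ τ = (F / N) ^ (1 / (δ + ε)) := by
    rw [hτ, div_eq_mul_one_div, Real.rpow_mul (by norm_num), Real.rpow_logb (by norm_num)
      (by norm_num) (by positivity)]
  have hFe : F = G * 2 ^ (δ * τ) := by
    rw [mul_comm δ, Real.rpow_mul (by norm_num), hτ2, ← Real.rpow_mul (by positivity), hG,
      Real.div_rpow hF.le hN.le]
    have e : 1 / (δ + ε) * δ = δ / (δ + ε) := by ring
    rw [e]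
    have : N ^ (δ / (δ + ε)) ≠ 0 := by positivity
    field_simp
    rw [← Real.rpow_add hF]
    have : ε / (δ + ε) + δ / (δ + ε) = 1 := by field_simp; ring
    rw [this, Real.rpow_one]
  have hNe : N = G * 2 ^ (-(ε * τ)) := by
    have e0 : -(ε * τ) = τ * (-ε) := by ring
    rw [e0, Real.rpow_mul (by norm_num), hτ2, ← Real.rpow_mul (by positivity), hG]
    have e : 1 / (δ + ε) * -ε = -(ε / (δ + ε)) := by ring
    rw [e, Real.rpow_neg (by positivity), Real.div_rpow hF.le hN.le]
    have : F ^ (ε / (δ + ε)) ≠ 0 := by positivity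
    field_simp
    rw [← Real.rpow_add hN]
    have : δ / (δ + ε) + ε / (δ + ε) = 1 := by field_simp
    rw [this, Real.rpow_one]
  have key : ∀ j : ℕ, a j ≤ ENNReal.ofReal (G * 2 ^ (-(γ * |(j : ℝ) - τ|))) := by
    intro j
    rcases le_total τ (j : ℝ) with hj | hj
    · refine (h1 j).trans (ENNReal.ofReal_le_ofReal ?_)
      rw [hFe, mul_assoc, ← Real.rpow_add (by norm_num)]
      refine mul_le_mul_of_nonneg_left ?_ hG0.le
      apply Real.rpow_le_rpow_of_exponent_le (by norm_num)
      rw [abs_of_nonneg (by linarith)]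
      have := min_le_left δ ε
      nlinarith
    · refine (h2 j).trans (ENNReal.ofReal_le_ofReal ?_)
      rw [hNe, mul_assoc, ← Real.rpow_add (by norm_num)]
      refine mul_le_mul_of_nonneg_left ?_ hG0.le
      apply Real.rpow_le_rpow_of_exponent_le (by norm_num)
      rw [abs_of_nonpos (by linarith)]
      have := min_le_right δ ε
      nlinarith
  calc ∑' j, a j ^ q ≤ ∑' j : ℕ, ENNReal.ofReal (G ^ q) *
        (2 : ℝ≥0∞) ^ (-(γ * q * |(j : ℝ) - τ|)) := by
        refine ENNReal.tsum_le_tsum fun j => ?_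
        refine (ENNReal.rpow_le_rpow (key j) hq.le).trans (le_of_eq ?_)
        rw [ENNReal.ofReal_rpow_of_nonneg (by positivity) hq.le,
          Real.mul_rpow hG0.le (by positivity), ENNReal.ofReal_mul (by positivity),
          ← Real.rpow_mul (by norm_num), ← ENNReal.ofReal_rpow_of_pos (x := 2) (by norm_num)]
        congr 1
        simp
        ring_nf
    _ ≤ _ := by
        rw [ENNReal.tsum_mul_left, mul_comm]
        gcongr
        exact H τ

/-- Sobolev embedding inequality for Lizorkin–Triebel quasi-norms of band-limited sequences:
if `s - n/p = s₀ - n/p₀` with `0 < p₀ < p < ∞` and `supp 𝓕f_j ⊆ B(0, A·2^j)`, then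
`‖(∑_j 2^{sjq}|f_j|^q)^{1/q}‖_p ≤ C ‖sup_j 2^{s₀j}|f_j|‖_{p₀}`. -/
theorem stmt9 (n : ℕ) (hn : 1 ≤ n) (s s₀ p p₀ : ℝ) (hp₀ : 0 < p₀) (hpp : p₀ < p)
    (hsob : s - n / p = s₀ - n / p₀) (q : ℝ) (hq : 0 < q) (A : ℝ) (hA : 0 < A) :
    ∃ C : ℝ≥0∞, 0 < C ∧ C ≠ ∞ ∧
      ∀ f : ℕ → 𝓢(EuclideanSpace ℝ (Fin n), ℂ),
        (∀ j : ℕ, Function.support (𝓕 (f j : EuclideanSpace ℝ (Fin n) → ℂ))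
          ⊆ Metric.closedBall 0 (A * 2 ^ (j:ℝ))) →
        (∫⁻ x : EuclideanSpace ℝ (Fin n),
            (∑' j : ℕ, ((2:ℝ≥0∞) ^ (s * (j:ℝ)) * ‖f j x‖₊) ^ q) ^ (p / q)) ^ (1 / p)
          ≤ C * (∫⁻ x : EuclideanSpace ℝ (Fin n),
              (⨆ j : ℕ, (2:ℝ≥0∞) ^ (s₀ * (j:ℝ)) * ‖f j x‖₊) ^ p₀) ^ (1 / p₀) := by
  have hp : 0 < p := hp₀.trans hpp
  have hn0 : (0 : ℝ) < n := by exact_mod_cast hn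
  have two0 : (2 : ℝ≥0∞) ≠ 0 := by simp
  have twot : (2 : ℝ≥0∞) ≠ ∞ := by simp
  have twoR : ∀ t : ℝ, (2 : ℝ≥0∞) ^ t = ENNReal.ofReal ((2 : ℝ) ^ t) := by
    intro t
    rw [← ENNReal.ofReal_rpow_of_pos (x := 2) (by norm_num)]
    simp
  obtain ⟨K, hK1, hK⟩ := aux_nik n A p₀ hA hp₀
  have hK0 : 0 < K := by linarith
  set ε : ℝ := n / p with hε
  set δ : ℝ := n / p₀ - n / p with hδ
  have hε0 : 0 < ε := by positivity
  have hδ0 : 0 < δ := by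
    rw [hδ, sub_pos]
    exact div_lt_div_of_pos_left hn0 hp₀ hpp
  have hsum : δ + ε = n / p₀ := by rw [hδ, hε]; ring
  have hθ : ε / (δ + ε) * p = p₀ := by
    rw [hsum, hε]; field_simp
  have hθ' : δ / (δ + ε) * p = p - p₀ := by
    have : δ / (δ + ε) + ε / (δ + ε) = 1 := by
      rw [← add_div, div_self (by positivity)]
    nlinarith
  have hss : s - s₀ = -δ := by rw [hδ]; linarith
  obtain ⟨C, hC, hCs⟩ := aux_sum δ ε q hδ0 hε0 hq
  set K' : ℝ := K ^ (1 / p₀) with hK'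
  have hK'0 : 0 < K' := by positivity
  have hCt : C + 1 ≠ ∞ := by simp [hC]
  have hC0 : C + 1 ≠ 0 := by simp
  have hc1 : (C + 1) ^ (1 / q) ≠ ∞ := ENNReal.rpow_ne_top_of_nonneg (by positivity) hCt
  have hc0 : (C + 1) ^ (1 / q) ≠ 0 := (ENNReal.rpow_pos (pos_iff_ne_zero.2 hC0) hCt).ne'
  have hk0 : ENNReal.ofReal (K' ^ ((p - p₀) / p)) ≠ 0 := by
    have : 0 < K' ^ ((p - p₀) / p) := by positivity
    simpa using this
  refine ⟨(C + 1) ^ (1 / q) * ENNReal.ofReal (K' ^ ((p - p₀) / p)),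
    pos_iff_ne_zero.2 (mul_ne_zero hc0 hk0), ENNReal.mul_ne_top hc1 ENNReal.ofReal_ne_top, ?_⟩
  intro f hf
  set F : EuclideanSpace ℝ (Fin n) → ℝ≥0∞ :=
    fun x => ⨆ j : ℕ, (2:ℝ≥0∞) ^ (s₀ * (j:ℝ)) * ‖f j x‖₊ with hF
  change _ ≤ _ * (∫⁻ x, F x ^ p₀) ^ (1 / p₀)
  have hFj : ∀ x j, ‖f j x‖ₑ ≤ (2:ℝ≥0∞) ^ (-(s₀ * (j:ℝ))) * F x := by
    intro x j
    have h1 : (2:ℝ≥0∞) ^ (s₀ * (j:ℝ)) * ‖f j x‖ₑ ≤ F x :=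
      le_iSup (fun j : ℕ => (2:ℝ≥0∞) ^ (s₀ * (j:ℝ)) * (‖f j x‖₊ : ℝ≥0∞)) j
    calc ‖f j x‖ₑ = (2:ℝ≥0∞) ^ (-(s₀ * (j:ℝ))) * ((2:ℝ≥0∞) ^ (s₀ * (j:ℝ)) * ‖f j x‖ₑ) := by
          rw [← mul_assoc, ← ENNReal.rpow_add _ _ two0 twot]; simp
      _ ≤ _ := by gcongr
  set T := ∫⁻ x, F x ^ p₀ with hT
  have hnik : ∀ j x, ‖f j x‖ₑ ^ p₀ ≤
      ENNReal.ofReal (K * ((2:ℝ) ^ (j:ℝ)) ^ n) * (((2:ℝ≥0∞) ^ (-(s₀ * (j:ℝ)))) ^ p₀ * T) := by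
    intro j x
    refine (hK ((2:ℝ) ^ (j:ℝ)) (by positivity) (f j) (hf j) x).trans ?_
    gcongr
    rw [hT, ← lintegral_const_mul' _ _ (ENNReal.rpow_ne_top_of_nonneg hp₀.le (by simp))]
    refine lintegral_mono fun y => ?_
    rw [← ENNReal.mul_rpow_of_nonneg _ _ hp₀.le]
    exact ENNReal.rpow_le_rpow (hFj y j) hp₀.le
  have hzero : ∀ x, (∀ j, f j x = 0) →
      (∑' j : ℕ, ((2:ℝ≥0∞) ^ (s * (j:ℝ)) * ‖f j x‖₊) ^ q) ^ (p / q) = 0 := by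
    intro x hx
    simp [hx, hq, hp]
  by_cases hT0 : T = 0
  · have : ∀ x, (∑' j : ℕ, ((2:ℝ≥0∞) ^ (s * (j:ℝ)) * ‖f j x‖₊) ^ q) ^ (p / q) = 0 := by
      intro x
      apply hzero
      intro j
      have := hnik j x
      rw [hT0, mul_zero, mul_zero, nonpos_iff_eq_zero, ENNReal.rpow_eq_zero_iff_of_pos hp₀] at this
      simpa using this
    simp [this, hp]
  by_cases hTt : T = ∞
  · rw [hTt, ENNReal.top_rpow_of_pos (by positivity), ENNReal.mul_top (mul_ne_zero hc0 hk0)]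
    exact le_top
  set M : ℝ := T.toReal ^ (1 / p₀) with hM
  have hTp : 0 < T.toReal := ENNReal.toReal_pos hT0 hTt
  have hM0 : 0 < M := by positivity
  have hMp : M ^ p₀ = T.toReal := by
    rw [hM, ← Real.rpow_mul hTp.le]; field_simp; simp
  have hTM : T = ENNReal.ofReal (M ^ p₀) := by rw [hMp, ENNReal.ofReal_toReal hTt]
  set N : ℝ := K' * M with hN
  have hN0 : 0 < N := by positivity
  have hsup : ∀ j x, ‖f j x‖ₑ ≤ ENNReal.ofReal (N * 2 ^ ((n / p₀ - s₀) * (j:ℝ))) := by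
    intro j x
    rw [← ENNReal.rpow_le_rpow_iff hp₀]
    refine (hnik j x).trans (le_of_eq ?_)
    rw [hTM, twoR, ENNReal.ofReal_rpow_of_nonneg (by positivity) hp₀.le,
      ENNReal.ofReal_rpow_of_nonneg (by positivity) hp₀.le, ← ENNReal.ofReal_mul (by positivity),
      ← ENNReal.ofReal_mul (by positivity)]
    congr 1
    rw [Real.mul_rpow hN0.le (by positivity), hN, Real.mul_rpow hK'0.le hM0.le, hK',
      ← Real.rpow_mul hK0.le, ← Real.rpow_natCast, ← Real.rpow_mul (x := 2) (by norm_num),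
      ← Real.rpow_mul (x := 2) (by norm_num), ← Real.rpow_mul (x := 2) (by norm_num)]
    have e1 : 1 / p₀ * p₀ = 1 := by field_simp
    have e2 : (n / p₀ - s₀) * (j:ℝ) * p₀ = (j:ℝ) * n + -(s₀ * (j:ℝ)) * p₀ := by
      field_simp
      ring
    rw [e1, e2, Real.rpow_one, Real.rpow_add (by norm_num)]
    ring
  have hpt : ∀ x, (∑' j : ℕ, ((2:ℝ≥0∞) ^ (s * (j:ℝ)) * ‖f j x‖₊) ^ q) ^ (p / q) ≤
      ((C + 1) ^ (p / q) * ENNReal.ofReal (N ^ (p - p₀))) * F x ^ p₀ := by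
    intro x
    have hNN : 0 < N ^ (p - p₀) := by positivity
    by_cases hx0 : F x = 0
    · rw [hzero x]
      · exact bot_le
      · intro j
        have := hFj x j
        rw [hx0, mul_zero] at this
        simpa using this
    by_cases hxt : F x = ∞
    · rw [hxt, ENNReal.top_rpow_of_pos hp₀, ENNReal.mul_top]
      · exact le_top
      · exact mul_ne_zero (ENNReal.rpow_pos (pos_iff_ne_zero.2 hC0) hCt).ne' (by simpa using hNN)
    have hG : 0 < (F x).toReal := ENNReal.toReal_pos hx0 hxt
    have hGe : F x = ENNReal.ofReal (F x).toReal := (ENNReal.ofReal_toReal hxt).symm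
    set G : ℝ := (F x).toReal
    have := hCs G N hG hN0 (fun j : ℕ => (2:ℝ≥0∞) ^ (s * (j:ℝ)) * ‖f j x‖₊) ?_ ?_
    · calc _ ≤ ((C + 1) * ENNReal.ofReal ((G ^ (ε / (δ + ε)) * N ^ (δ / (δ + ε))) ^ q)) ^ (p / q) := by
            apply ENNReal.rpow_le_rpow _ (by positivity)
            refine this.trans ?_
            gcongr
            exact le_self_add
        _ = _ := by
            rw [ENNReal.mul_rpow_of_nonneg _ _ (by positivity), hGe,
              ENNReal.ofReal_rpow_of_nonneg (by positivity) (by positivity),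
              ENNReal.ofReal_rpow_of_nonneg hG.le hp₀.le, mul_assoc,
              ← ENNReal.ofReal_mul hNN.le, ← Real.rpow_mul (by positivity)]
            have e : q * (p / q) = p := by field_simp
            rw [e, Real.mul_rpow (by positivity) (by positivity), ← Real.rpow_mul hG.le,
              ← Real.rpow_mul hN0.le, hθ, hθ', mul_comm (G ^ p₀)]
    · intro j
      calc (2:ℝ≥0∞) ^ (s * (j:ℝ)) * ‖f j x‖ₑ
          ≤ (2:ℝ≥0∞) ^ (s * (j:ℝ)) * ((2:ℝ≥0∞) ^ (-(s₀ * (j:ℝ))) * F x) := by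
            gcongr; exact hFj x j
        _ = _ := by
            rw [← mul_assoc, ← ENNReal.rpow_add _ _ two0 twot, hGe, twoR,
              ← ENNReal.ofReal_mul (by positivity), mul_comm]
            have : s * (j:ℝ) + -(s₀ * (j:ℝ)) = -(δ * (j:ℝ)) := by
              linear_combination (j:ℝ) * hss
            rw [this]
    · intro j
      calc (2:ℝ≥0∞) ^ (s * (j:ℝ)) * ‖f j x‖ₑ
          ≤ (2:ℝ≥0∞) ^ (s * (j:ℝ)) * ENNReal.ofReal (N * 2 ^ ((n / p₀ - s₀) * (j:ℝ))) := by
            gcongr; exact hsup j x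
        _ = _ := by
            rw [twoR, ← ENNReal.ofReal_mul (by positivity), mul_left_comm,
              ← Real.rpow_add (by norm_num)]
            have : s * (j:ℝ) + (n / p₀ - s₀) * (j:ℝ) = ε * (j:ℝ) := by
              linear_combination (j:ℝ) * (hss + hsum)
            rw [this]
  have hfinal : (∫⁻ x : EuclideanSpace ℝ (Fin n),
      (∑' j : ℕ, ((2:ℝ≥0∞) ^ (s * (j:ℝ)) * ‖f j x‖₊) ^ q) ^ (p / q)) ≤
      ((C + 1) ^ (p / q) * ENNReal.ofReal (N ^ (p - p₀))) * T := by
    refine (lintegral_mono hpt).trans (le_of_eq ?_)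
    rw [lintegral_const_mul']
    exact ENNReal.mul_ne_top (ENNReal.rpow_ne_top_of_nonneg (by positivity) hCt)
      ENNReal.ofReal_ne_top
  refine (ENNReal.rpow_le_rpow hfinal (by positivity)).trans (le_of_eq ?_)
  rw [hTM, mul_assoc, mul_assoc, ENNReal.mul_rpow_of_nonneg _ _ (by positivity),
    ← ENNReal.rpow_mul, ← ENNReal.ofReal_mul (by positivity),
    ENNReal.ofReal_rpow_of_nonneg (by positivity) (by positivity),
    ENNReal.ofReal_rpow_of_nonneg (by positivity) (by positivity),
    ← ENNReal.ofReal_mul (by positivity)]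
  have e1 : p / q * (1 / p) = 1 / q := by field_simp
  have e2 : (M ^ p₀) ^ (1 / p₀) = M := by
    rw [← Real.rpow_mul hM0.le]; field_simp; simp
  have e3 : (N ^ (p - p₀) * M ^ p₀) ^ (1 / p) = K' ^ ((p - p₀) / p) * M := by
    rw [hN, Real.mul_rpow hK'0.le hM0.le, mul_assoc, ← Real.rpow_add hM0, sub_add_cancel,
      Real.mul_rpow (by positivity) (by positivity), ← Real.rpow_mul hK'0.le,
      ← Real.rpow_mul hM0.le]
    field_simp
    simp
  rw [e1, e2, e3]
end
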